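/- Let n = 4 or n = 6, let L ≅ Sym(n) be the permutation group induced by the action of Sym(n) on the set of ordered pairs of distinct elements of {1,…,n}, and let (Γ,G) be a locally L pair. Then for every vertex x of Γ, the pointwise stabiliser G_x^{[3]} of the ball of radius 3 around x is trivial. -/

import Mathlib

open MulAction Pointwise

/-- The set of ordered pairs of distinct elements of `{1,…,n}`. -/
abbrev OPairs (n : ℕ) : Type := {p : Fin n × Fin n // p.1 ≠ p.2}

/-- `Sym(n)` acts on the ordered pairs of distinct elements. -/
instance opairsAction (n : ℕ) : MulAction (Equiv.Perm (Fin n)) (OPairs n) where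
  smul σ p := ⟨(σ p.1.1, σ p.1.2), fun h => p.2 (σ.injective h)⟩
  one_smul p := rfl
  mul_smul σ τ p := rfl

/-- Every element of `G` is an automorphism of `Γ`. -/
def PreservesAdj {V : Type*} (Γ : SimpleGraph V) (G : Subgroup (Equiv.Perm V)) : Prop :=
  ∀ g ∈ G, ∀ u v : V, Γ.Adj u v ↔ Γ.Adj (g u) (g v)

/-- The pointwise stabiliser in `G` of the ball of radius `i` around `x`. -/
def ballStab {V : Type*} (Γ : SimpleGraph V) (G : Subgroup (Equiv.Perm V)) (x : V) (i : ℕ) :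
    Subgroup G :=
  ⨅ (v : V) (_ : Γ.dist x v ≤ i), MulAction.stabilizer G v

/-- `(Γ, G)` is a locally `L` pair, for `L` the permutation group induced by `Sym(n)` on
ordered pairs of distinct elements of `{1,…,n}`. -/
def IsLocallyOPairs (n : ℕ) {V : Type*} (Γ : SimpleGraph V) (G : Subgroup (Equiv.Perm V)) :
    Prop :=
  PreservesAdj Γ G ∧ MulAction.IsPretransitive G V ∧
  ∀ x : V, ∃ (e : Γ.neighborSet x ≃ OPairs n)
      (φ : MulAction.stabilizer G x →* Equiv.Perm (Fin n)),
    Function.Surjective φ ∧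
    ∀ (g : MulAction.stabilizer G x) (v : Γ.neighborSet x),
      ((e.symm (φ g • e v) : Γ.neighborSet x) : V) = g • (v : V)

open scoped commutatorElement
open Equiv (Perm swap)
set_option linter.unusedSectionVars false

section GenericGroup
variable {G : Type*} [Group G]

/-- Conjugate of a subgroup. -/
def cj (g : G) (K : Subgroup G) : Subgroup G := K.map (MulAut.conj g).toMonoidHom

/-- Normaliser of a subgroup. -/
abbrev nm (K : Subgroup G) : Subgroup G := Subgroup.normalizer (K : Set G)

theorem mem_cj {g a : G} {K : Subgroup G} : a ∈ cj g K ↔ g⁻¹ * a * g ∈ K := by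
  unfold cj
  rw [Subgroup.mem_map]
  constructor
  · rintro ⟨k, hk, rfl⟩
    have : g⁻¹ * (g * k * g⁻¹) * g = k := by group
    simpa [this] using hk
  · intro h
    refine ⟨_, h, ?_⟩
    simp [mul_assoc]

theorem conj_mem_cj {g k : G} {K : Subgroup G} (h : k ∈ K) : g * k * g⁻¹ ∈ cj g K := by
  rw [mem_cj]
  have : g⁻¹ * (g * k * g⁻¹) * g = k := by group
  rwa [this]

theorem cj_one (K : Subgroup G) : cj 1 K = K := by ext; simp [mem_cj]

theorem cj_mul (g h : G) (K : Subgroup G) : cj (g * h) K = cj g (cj h K) := by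
  ext; simp [mem_cj, mul_assoc]

theorem cj_mono {g : G} {K L : Subgroup G} (h : K ≤ L) : cj g K ≤ cj g L := Subgroup.map_mono h

theorem cj_le_iff {g : G} {K L : Subgroup G} : cj g K ≤ cj g L ↔ K ≤ L :=
  Subgroup.map_le_map_iff_of_injective (MulAut.conj g).injective

theorem cj_inf (g : G) (K L : Subgroup G) : cj g (K ⊓ L) = cj g K ⊓ cj g L := by
  ext; simp [mem_cj]

theorem cj_sup (g : G) (K L : Subgroup G) : cj g (K ⊔ L) = cj g K ⊔ cj g L := Subgroup.map_sup _ _ _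

theorem cj_iSup {ι : Sort*} (g : G) (K : ι → Subgroup G) : cj g (⨆ i, K i) = ⨆ i, cj g (K i) :=
  Subgroup.map_iSup _ _

theorem cj_iInf {ι : Sort*} (g : G) (K : ι → Subgroup G) : cj g (⨅ i, K i) = ⨅ i, cj g (K i) := by
  ext; simp [mem_cj, Subgroup.mem_iInf]

theorem cj_comm (g : G) (K L : Subgroup G) : cj g ⁅K, L⁆ = ⁅cj g K, cj g L⁆ :=
  Subgroup.map_commutator _ _ _

theorem cj_bot (g : G) : cj g (⊥ : Subgroup G) = ⊥ := Subgroup.map_bot _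

theorem cj_inv_cj (g : G) (K : Subgroup G) : cj g⁻¹ (cj g K) = K := by
  rw [← cj_mul]; simp [cj_one]

theorem cj_cj_inv (g : G) (K : Subgroup G) : cj g (cj g⁻¹ K) = K := by
  rw [← cj_mul]; simp [cj_one]

theorem cj_eq_iff {g : G} {K L : Subgroup G} : cj g K = L ↔ K = cj g⁻¹ L := by
  constructor
  · rintro rfl; rw [cj_inv_cj]
  · rintro rfl; rw [cj_cj_inv]

theorem cj_eq_bot {g : G} {K : Subgroup G} : cj g K = ⊥ ↔ K = ⊥ := by
  rw [cj_eq_iff, cj_bot]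

theorem mem_nm {g : G} {K : Subgroup G} : g ∈ nm K ↔ cj g K = K :=
  Subgroup.mem_normalizer_iff_map_conj_eq

theorem nm_conj {g k : G} {K : Subgroup G} (h : g ∈ nm K) (hk : k ∈ K) : g * k * g⁻¹ ∈ K :=
  ((Subgroup.mem_normalizer_iff).1 h k).1 hk

theorem nm_conj' {g k : G} {K : Subgroup G} (h : g ∈ nm K) (hk : k ∈ K) : g⁻¹ * k * g ∈ K := by
  have := nm_conj (inv_mem h) hk
  simpa using this

theorem le_nm {A K : Subgroup G} : A ≤ nm K ↔ ∀ a ∈ A, ∀ k ∈ K, a * k * a⁻¹ ∈ K :=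
  Subgroup.le_normalizer_iff

theorem le_nm_self (K : Subgroup G) : K ≤ nm K := Subgroup.le_normalizer

theorem cj_self {g : G} {K : Subgroup G} (h : g ∈ K) : cj g K = K := mem_nm.1 (le_nm_self K h)

theorem nm_cj (g : G) (K : Subgroup G) : nm (cj g K) = cj g (nm K) := by
  ext a
  rw [mem_nm, mem_cj, mem_nm, cj_mul, cj_mul, cj_eq_iff (g := g⁻¹), inv_inv]

theorem mem_sup_nm {K A : Subgroup G} (h : A ≤ nm K) {x : G} (hx : x ∈ K ⊔ A) :
    ∃ k ∈ K, ∃ a ∈ A, x = k * a := by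
  have h1 : A.map (MonoidHom.id G) = A := by simp
  refine Subgroup.closure_induction (k := (K : Set G) ∪ A)
    (p := fun x _ => ∃ k ∈ K, ∃ a ∈ A, x = k * a) ?_ ?_ ?_ ?_ ?_
  · rintro x (hx | hx)
    · exact ⟨x, hx, 1, one_mem _, by simp⟩
    · exact ⟨1, one_mem _, x, hx, by simp⟩
  · exact ⟨1, one_mem _, 1, one_mem _, by simp⟩
  · rintro _ _ _ _ ⟨k, hk, a, ha, rfl⟩ ⟨l, hl, c, hc, rfl⟩
    refine ⟨k * (a * l * a⁻¹), mul_mem hk (nm_conj (h ha) hl), a * c, mul_mem ha hc, by group⟩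
  · rintro _ _ ⟨k, hk, a, ha, rfl⟩
    refine ⟨a⁻¹ * k⁻¹ * a, nm_conj' (h ha) (inv_mem hk), a⁻¹, inv_mem ha, by group⟩
  · rw [← Subgroup.sup_eq_closure]; exact hx

theorem mem_sup_nm' {K A : Subgroup G} (h : A ≤ nm K) {x : G} (hx : x ∈ A ⊔ K) :
    ∃ a ∈ A, ∃ k ∈ K, x = a * k := by
  rw [sup_comm] at hx
  obtain ⟨k, hk, a, ha, e⟩ := mem_sup_nm h (inv_mem hx)
  refine ⟨a⁻¹, inv_mem ha, k⁻¹, inv_mem hk, ?_⟩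
  have : x = (x⁻¹)⁻¹ := by simp
  rw [this, e]; group

/-- If `A ≤ E` has as many cosets of `R` as `E`, then `E = A R`. -/
theorem full_of_relIndex {A R E : Subgroup G} (hA : A ≤ E) (h : R.relIndex A = R.relIndex E)
    (h0 : R.relIndex E ≠ 0) {e : G} (he : e ∈ E) : ∃ a ∈ A, ∃ r ∈ R, e = a * r := by
  let f := Subgroup.quotientSubgroupOfEmbeddingOfLE R hA
  have : Finite (E ⧸ R.subgroupOf E) := Nat.finite_of_card_ne_zero h0
  have : Finite (A ⧸ R.subgroupOf A) := Nat.finite_of_card_ne_zero (by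
    change R.relIndex A ≠ 0; rw [h]; exact h0)
  have hf : Function.Bijective f :=
    (Nat.bijective_iff_injective_and_card f).2 ⟨f.injective, h⟩
  obtain ⟨a, ha⟩ := hf.2 (QuotientGroup.mk ⟨e, he⟩)
  obtain ⟨a, rfl⟩ := QuotientGroup.mk_surjective a
  refine ⟨a, a.2, (a : G)⁻¹ * e, ?_, by group⟩
  rw [Subgroup.quotientSubgroupOfEmbeddingOfLE_apply_mk] at ha
  have := QuotientGroup.eq.1 ha
  simpa [Subgroup.mem_subgroupOf] using this

theorem relIndex_of_full {A R E : Subgroup G} (hA : A ≤ E)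
    (h : ∀ e ∈ E, ∃ a ∈ A, ∃ r ∈ R, e = a * r) : R.relIndex A = R.relIndex E := by
  let f := Subgroup.quotientSubgroupOfEmbeddingOfLE R hA
  refine Nat.card_congr (Equiv.ofBijective f ⟨f.injective, ?_⟩)
  intro x
  obtain ⟨⟨e, he⟩, rfl⟩ := QuotientGroup.mk_surjective x
  obtain ⟨a, ha, r, hr, rfl⟩ := h e he
  refine ⟨QuotientGroup.mk ⟨a, ha⟩, ?_⟩
  rw [Subgroup.quotientSubgroupOfEmbeddingOfLE_apply_mk]
  apply QuotientGroup.eq.2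
  simpa [Subgroup.mem_subgroupOf] using hr

theorem comm_mul_left (a b c : G) : ⁅a * b, c⁆ = a * ⁅b, c⁆ * a⁻¹ * ⁅a, c⁆ := by
  simp only [commutatorElement_def]; group

theorem comm_mul_right (a b c : G) : ⁅a, b * c⁆ = ⁅a, b⁆ * (b * ⁅a, c⁆ * b⁻¹) := by
  simp only [commutatorElement_def]; group

theorem comm_eq_one {a b : G} (h : a * b = b * a) : ⁅a, b⁆ = 1 := by
  rw [commutatorElement_def, h]; group

theorem comm_eq_one_iff {a b : G} : ⁅a, b⁆ = 1 ↔ a * b = b * a := commutatorElement_eq_one_iff_mul_comm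

theorem conj_eq_comm_mul (a u : G) : a * u * a⁻¹ = ⁅a, u⁆ * u := by
  simp only [commutatorElement_def]; group

/-- commutator of a join, with target centralised. -/
theorem comm_iSup_mem {ι : Sort*} {A : ι → Subgroup G} {E Z : Subgroup G}
    (h : ∀ i, ∀ a ∈ A i, ∀ e ∈ E, ⁅a, e⁆ ∈ Z)
    (hc : ∀ i, A i ≤ nm Z) : ∀ a ∈ ⨆ i, A i, ∀ e ∈ E, ⁅a, e⁆ ∈ Z := by
  have hc' : (⨆ i, A i) ≤ nm Z := iSup_le hc
  have key : ∀ a ∈ ⨆ i, A i, (a ∈ ⨆ i, A i) ∧ ∀ e ∈ E, ⁅a, e⁆ ∈ Z := by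
    intro a ha
    refine Subgroup.iSup_induction A (C := fun a => (a ∈ ⨆ i, A i) ∧ ∀ e ∈ E, ⁅a, e⁆ ∈ Z)
      ha ?_ ?_ ?_
    · intro i a ha
      exact ⟨Subgroup.mem_iSup_of_mem i ha, h i a ha⟩
    · exact ⟨one_mem _, by intro e he; simp⟩
    · rintro x y ⟨hx, hx'⟩ ⟨hy, hy'⟩
      refine ⟨mul_mem hx hy, fun e he => ?_⟩
      rw [comm_mul_left]
      exact mul_mem (nm_conj (hc' hx) (hy' e he)) (hx' e he)
  exact fun a ha => (key a ha).2

theorem nm_of_comm {A K : Subgroup G} (h : ∀ u ∈ K, ∀ a ∈ A, ⁅u, a⁆ ∈ K) : A ≤ nm K := by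
  rw [le_nm]
  intro a ha k hk
  rw [conj_eq_comm_mul, ← commutatorElement_inv]
  exact mul_mem (inv_mem (h k hk a ha)) hk

theorem comm_eq_of {A B C : Subgroup G} (hB : B ≤ C)
    (h : ∀ c ∈ C, ∃ b ∈ B, ∃ r : G, (∀ a ∈ A, a * r = r * a) ∧ c = b * r) :
    ⁅A, C⁆ = ⁅A, B⁆ := by
  apply le_antisymm
  · rw [Subgroup.commutator_le]
    intro a ha c hc
    obtain ⟨b, hb, r, hr, rfl⟩ := h c hc
    rw [comm_mul_right, comm_eq_one (hr a ha)]
    simpa using Subgroup.commutator_mem_commutator ha hb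
  · exact Subgroup.commutator_mono le_rfl hB

/-- Centraliser membership helper: the centraliser of a subgroup. -/
abbrev cz (K : Subgroup G) : Subgroup G := Subgroup.centralizer (K : Set G)

theorem mem_cz {g : G} {K : Subgroup G} : g ∈ cz K ↔ ∀ k ∈ K, k * g = g * k :=
  Subgroup.mem_centralizer_iff

theorem cj_cz (g : G) (K : Subgroup G) : cj g (cz K) = cz (cj g K) := by
  ext a
  rw [mem_cj, mem_cz, mem_cz]
  constructor
  · intro h k hk
    have := h _ (mem_cj.1 hk)
    have h2 : g * (g⁻¹ * k * g * (g⁻¹ * a * g)) * g⁻¹ = g * (g⁻¹ * a * g * (g⁻¹ * k * g)) * g⁻¹ := by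
      rw [this]
    simpa [mul_assoc] using h2
  · intro h k hk
    have := h _ (conj_mem_cj hk)
    have h2 : g⁻¹ * (g * k * g⁻¹ * a) * g = g⁻¹ * (a * (g * k * g⁻¹)) * g := by rw [this]
    simpa [mul_assoc] using h2

theorem cj_eq_of_central {g : G} {K : Subgroup G} (h : ∀ k ∈ K, k * g = g * k) : cj g K = K := by
  ext a
  rw [mem_cj]
  constructor
  · intro ha
    have := h _ ha
    have h2 : g⁻¹ * a * g = a := by
      have h3 : g⁻¹ * a * g * g = a * g := by rw [this]; group
      exact mul_right_cancel h3
    rwa [h2] at ha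
  · intro ha
    have : g⁻¹ * a * g = a := by rw [mul_assoc, h a ha]; group
    rwa [this]

end GenericGroup

/-- Abstract point-line geometry attached to the configuration. -/
structure Geo (G Pt Ln : Type*) [Group G] [MulAction G Pt] [MulAction G Ln] where
  I : Pt → Ln → Prop
  R : Pt → Subgroup G
  V : Pt → Subgroup G
  E : Ln → Subgroup G
  Z : Ln → Subgroup G
  q : ℕ
  hq : 2 ≤ q
  I_smul : ∀ (g : G) {p C}, I p C → I (g • p) (g • C)
  R_smul : ∀ (g : G) p, R (g • p) = cj g (R p)
  V_smul : ∀ (g : G) p, V (g • p) = cj g (V p)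
  E_smul : ∀ (g : G) C, E (g • C) = cj g (E C)
  Z_smul : ∀ (g : G) C, Z (g • C) = cj g (Z C)
  flag : ∀ {p C p' C'}, I p C → I p' C' → ∃ g : G, g • p = p' ∧ g • C = C'
  E_line : ∀ {C e}, e ∈ E C → e • C = C
  E_pt : ∀ {C e p}, e ∈ E C → I p C → e • p = p
  E_trans : ∀ {p C C' C''}, I p C → I p C' → I p C'' → C' ≠ C → C'' ≠ C →
    ∃ e ∈ E C, e • C' = C''
  R_le : ∀ {p C}, I p C → R p ≤ E C
  V_le : ∀ p, V p ≤ R p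
  V_cent : ∀ {p v r}, v ∈ V p → r ∈ R p → v * r = r * v
  V_sq : ∀ {p v}, v ∈ V p → v * v = 1
  Z_le : ∀ {p C}, I p C → Z C ≤ V p
  Z_cent : ∀ {C z e}, z ∈ Z C → e ∈ E C → z * e = e * z
  cent : ∀ {p C t v}, I p C → t ∈ E C → t ∉ R p → v ∈ V p → v * t = t * v → v ∈ Z C
  relR : ∀ {p C}, I p C → (R p).relIndex (E C) = q
  relV : ∀ {p C}, I p C → (Z C).relIndex (V p) = q
  core : ∀ {p D} {K : Subgroup G}, I p D → K ≤ E D → (∀ g : G, g • D = D → cj g K = K) →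
    (∀ D', I p D' → E D' ≤ nm K) → K = ⊥
  irr : ∀ {a j C} {K : Subgroup G}, I a C → I j C → K ≤ E C →
    (∀ g : G, g • a = a → g • C = C → cj g K = K) → ¬ K ≤ R j → K ⊔ R j = E C
  nz : ∀ {p C C'}, I p C → I p C' → C ≠ C' → ¬ ⁅V p, E C⁆ ≤ Z C'
  cardL : ∀ p, Nat.card {D // I p D} = q + 1
  conn : ∀ p p', Relation.ReflTransGen (fun a b => ∃ C, I a C ∧ I b C) p p'

namespace Geo
variable {G Pt Ln : Type*} [Group G] [MulAction G Pt] [MulAction G Ln] (S : Geo G Pt Ln)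

/-- Span of the `V p` on a line. -/
def U (C : Ln) : Subgroup G := ⨆ (p : {p // S.I p C}), S.V p

/-- commutator subgroup attached to a flag. -/
def z (p : Pt) (C : Ln) : Subgroup G := ⁅S.V p, S.E C⁆

/-- Meet of the `U D` over lines through a point. -/
def Ds (a : Pt) : Subgroup G := ⨅ (D : {D // S.I a D}), S.U D

/-- Centraliser of `Ds a` in `R a`. -/
def T (a : Pt) : Subgroup G := S.R a ⊓ cz (S.Ds a)

/-- Join of the `U D`. -/
def W (a : Pt) : Subgroup G := ⨆ (D : {D // S.I a D}), S.U D

/-- Paths. -/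
structure Path (L : ℕ) (P : ℕ → Pt) (C : ℕ → Ln) : Prop where
  left : ∀ i < L, S.I (P i) (C i)
  right : ∀ i < L, S.I (P (i + 1)) (C i)

theorem I_iff (g : G) {p C} : S.I (g • p) (g • C) ↔ S.I p C := by
  constructor
  · intro h
    simpa using S.I_smul g⁻¹ h
  · exact S.I_smul g

theorem U_smul (g : G) (C : Ln) : S.U (g • C) = cj g (S.U C) := by
  unfold U
  rw [cj_iSup]
  apply le_antisymm
  · refine iSup_le fun p => ?_
    have h : S.I (g⁻¹ • p.1) C := by
      have := S.I_smul g⁻¹ p.2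
      simpa using this
    refine le_trans ?_ (le_iSup _ ⟨g⁻¹ • p.1, h⟩)
    rw [← S.V_smul]; simp
  · refine iSup_le fun p => ?_
    rw [← S.V_smul]
    exact le_iSup (fun p : {p // S.I p (g • C)} => S.V p) ⟨g • p.1, S.I_smul g p.2⟩

theorem z_smul (g : G) (p : Pt) (C : Ln) : S.z (g • p) (g • C) = cj g (S.z p C) := by
  unfold z
  rw [cj_comm, S.V_smul, S.E_smul]

theorem Ds_smul (g : G) (a : Pt) : S.Ds (g • a) = cj g (S.Ds a) := by
  unfold Ds
  rw [cj_iInf]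
  apply le_antisymm
  · refine le_iInf fun p => ?_
    rw [← S.U_smul]
    exact iInf_le (fun p : {p // S.I (g • a) p} => S.U p) ⟨g • p.1, S.I_smul g p.2⟩
  · refine le_iInf fun p => ?_
    have h : S.I a (g⁻¹ • p.1) := by
      have := S.I_smul g⁻¹ p.2
      simpa using this
    refine le_trans (iInf_le _ ⟨g⁻¹ • p.1, h⟩) ?_
    rw [← S.U_smul]; simp

theorem W_smul (g : G) (a : Pt) : S.W (g • a) = cj g (S.W a) := by
  unfold W
  rw [cj_iSup]
  apply le_antisymm
  · refine iSup_le fun p => ?_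
    have h : S.I a (g⁻¹ • p.1) := by
      have := S.I_smul g⁻¹ p.2
      simpa using this
    refine le_trans ?_ (le_iSup _ ⟨g⁻¹ • p.1, h⟩)
    rw [← S.U_smul]; simp
  · refine iSup_le fun p => ?_
    rw [← S.U_smul]
    exact le_iSup (fun p : {p // S.I (g • a) p} => S.U p) ⟨g • p.1, S.I_smul g p.2⟩

theorem T_smul (g : G) (a : Pt) : S.T (g • a) = cj g (S.T a) := by
  unfold T
  rw [cj_inf, cj_cz, S.Ds_smul, S.R_smul]

variable {S}

theorem V_le_U {p C} (h : S.I p C) : S.V p ≤ S.U C :=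
  le_iSup (fun p : {p // S.I p C} => S.V p) ⟨p, h⟩

theorem U_le {C} {K : Subgroup G} (h : ∀ p, S.I p C → S.V p ≤ K) : S.U C ≤ K :=
  iSup_le fun p => h p.1 p.2

theorem U_le_W {a D} (h : S.I a D) : S.U D ≤ S.W a :=
  le_iSup (fun p : {p // S.I a p} => S.U p) ⟨D, h⟩

theorem Ds_le_U {a D} (h : S.I a D) : S.Ds a ≤ S.U D :=
  iInf_le (fun p : {p // S.I a p} => S.U p) ⟨D, h⟩

theorem V_le_E {p C} (h : S.I p C) : S.V p ≤ S.E C := (S.V_le p).trans (S.R_le h)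

theorem Z_lt {p C} (h : S.I p C) : ¬ S.V p ≤ S.Z C := by
  intro h1
  have := S.relV h
  rw [Subgroup.relIndex_eq_one.2 h1] at this
  have := S.hq; omega

theorem V_ne {p C} (h : S.I p C) : S.V p ≠ ⊥ := by
  intro h1
  apply Z_lt h
  rw [h1]; exact bot_le

theorem U_le_E {C} : S.U C ≤ S.E C := U_le fun _ h => V_le_E h

theorem E_nm {C} {e : G} (he : e ∈ S.E C) {p} (h : S.I p C) : e ∈ nm (S.R p) := by
  rw [mem_nm, ← S.R_smul, S.E_pt he h]

theorem E_nmV {C} {e : G} (he : e ∈ S.E C) {p} (h : S.I p C) : e ∈ nm (S.V p) := by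
  rw [mem_nm, ← S.V_smul, S.E_pt he h]

theorem R_fix {p C D} (hC : S.I p C) (_hD : S.I p D) {r : G} (hr : r ∈ S.R p) : r • C = C :=
  S.E_line (S.R_le hC hr)

theorem exists_third {p} (A B : Ln) : ∃ D, S.I p D ∧ D ≠ A ∧ D ≠ B := by
  classical
  have hc := S.cardL p
  have hq := S.hq
  have : Finite {D // S.I p D} := Nat.finite_of_card_ne_zero (by omega)
  have : Fintype {D // S.I p D} := Fintype.ofFinite _
  rw [Nat.card_eq_fintype_card] at hc
  by_contra hcon
  push Not at hcon
  have h1 : Fintype.card {D // S.I p D} ≤ Fintype.card Bool := by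
    refine Fintype.card_le_of_injective (fun D => decide (D.1 = A)) ?_
    intro x y hxy
    simp only [decide_eq_decide] at hxy
    by_cases h : x.1 = A
    · exact Subtype.ext (h.trans (hxy.1 h).symm)
    · have h' : y.1 ≠ A := fun hh => h (hxy.2 hh)
      exact Subtype.ext ((hcon _ x.2 h).trans (hcon _ y.2 h').symm)
  simp at h1
  omega

theorem line_trans {p C D} (hC : S.I p C) (hD : S.I p D) :
    ∃ F, S.I p F ∧ ∃ e ∈ S.E F, e • C = D := by
  obtain ⟨F, hF, h1, h2⟩ := exists_third (S := S) (p := p) C D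
  obtain ⟨e, he, h⟩ := S.E_trans hF hC hD h1.symm h2.symm
  exact ⟨F, hF, e, he, h⟩

theorem genE {p C D} {K : Subgroup G} (hC : S.I p C) (hD : S.I p D) (hne : C ≠ D)
    (h1 : S.E C ≤ nm K) (h2 : S.E D ≤ nm K) : ∀ D', S.I p D' → S.E D' ≤ nm K := by
  intro D' hD'
  by_cases h : D' = D
  · rw [h]; exact h2
  obtain ⟨e, he, h⟩ := S.E_trans hD hC hD' hne h
  rw [← h, S.E_smul]
  have h3 : cj e (nm K) = nm K := cj_self (h2 he)
  rw [← h3]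
  exact cj_mono h1

theorem Z_inf {p C D F} (hC : S.I p C) (hD : S.I p D) (hF : S.I p F) (hne : C ≠ D) :
    S.Z C ⊓ S.Z D ≤ S.Z F := by
  rintro w ⟨h1, h2⟩
  by_cases h : F = C
  · rw [h]; exact h1
  obtain ⟨e, he, h⟩ := S.E_trans hC hD hF hne.symm h
  rw [← h, S.Z_smul, mem_cj]
  have : e⁻¹ * w * e = w := by rw [mul_assoc, S.Z_cent h1 he]; group
  rwa [this]

theorem z_le_V {p C} (h : S.I p C) : S.z p C ≤ S.V p := by
  unfold z
  rw [Subgroup.commutator_le]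
  intro a ha c hc
  have := nm_conj (E_nmV hc h) (inv_mem ha)
  rw [commutatorElement_def, mul_assoc, mul_assoc, ← mul_assoc c]
  exact mul_mem ha this

/-- an element of `E C` centralising `V p` lies in `R p`. -/
theorem mem_R_of_cent {p C} (h : S.I p C) {t : G} (ht : t ∈ S.E C)
    (hc : ∀ v ∈ S.V p, v * t = t * v) : t ∈ S.R p := by
  by_contra hn
  exact Z_lt h fun v hv => S.cent h ht hn hv (hc v hv)

/-! ### Paths -/

theorem Path.rev {L P C} (h : S.Path L P C) : S.Path L (fun i => P (L - i)) (fun i => C (L - 1 - i)) := by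
  constructor
  · intro i hi
    have := h.right (L - 1 - i) (by omega)
    have e : L - 1 - i + 1 = L - i := by omega
    rw [e] at this
    exact this
  · intro i hi
    have := h.left (L - 1 - i) (by omega)
    have e : L - 1 - i = L - (i + 1) := by omega
    change S.I (P (L - (i+1))) (C (L - 1 - i))
    rw [← e]
    exact this

theorem Path.shift {L P C} (h : S.Path L P C) (i k : ℕ) (hk : i + k ≤ L) :
    S.Path k (fun m => P (i + m)) (fun m => C (i + m)) :=
  ⟨fun m hm => h.left (i + m) (by omega), fun m hm => h.right (i + m) (by omega)⟩

theorem Path.update {L P C} (h : S.Path L P C) {p} (hp : S.I p (C 0)) :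
    S.Path L (Function.update P 0 p) C := by
  constructor
  · intro i hi
    by_cases h0 : i = 0
    · subst h0; simpa using hp
    · rw [Function.update_of_ne h0]; exact h.left i hi
  · intro i hi
    rw [Function.update_of_ne (by omega)]; exact h.right i hi

variable (S) in
/-- Minimality of `b`. -/
def Min (b : ℕ) : Prop := 2 ≤ b ∧ ∀ k < b, ∀ P C, S.Path k P C → S.V (P 0) ≤ S.R (P k)

theorem Min.le {b L P C} (hb : S.Min b) (h : S.Path L P C) (i k : ℕ) (hk : k < b) (hi : i + k ≤ L) :
    S.V (P i) ≤ S.R (P (i + k)) := by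
  exact hb.2 k hk _ _ (h.shift i k hi)

theorem Min.ge {b L P C} (hb : S.Min b) (h : S.Path L P C) (i k : ℕ) (hk : k < b) (hi : i + k ≤ L) :
    S.V (P (i + k)) ≤ S.R (P i) := by
  have := hb.2 k hk _ _ (h.shift i k hi).rev
  simpa using this

theorem Min.U_le {b L P C} (hb : S.Min b) (h : S.Path L P C) (i k : ℕ) (hk : k + 1 < b)
    (hi : i + (k + 1) ≤ L) : S.U (C i) ≤ S.R (P (i + (k + 1))) := by
  refine Geo.U_le fun p hp => ?_
  have := hb.2 (k + 1) hk _ _ ((h.shift i (k + 1) hi).update (p := p) (by simpa using hp))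
  simpa using this

theorem Min.U_ge {b L P C} (hb : S.Min b) (h : S.Path L P C) (i k : ℕ) (hk : k + 1 < b)
    (hi : i + (k + 1) ≤ L) : S.U (C (i + k)) ≤ S.R (P i) := by
  refine Geo.U_le fun p hp => ?_
  have := hb.2 (k + 1) hk _ _ ((h.shift i (k + 1) hi).rev.update (p := p) (by simpa using hp))
  simpa using this

theorem Min.line {b} (hb : S.Min b) {p p' C} (h : S.I p C) (h' : S.I p' C) : S.V p ≤ S.R p' := by
  have := hb.2 1 (by have := hb.1; omega) (fun i => if i = 0 then p else p') (fun _ => C)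
    ⟨by intro i hi; have : i = 0 := by omega
        subst this; simpa using h, by intro i hi; simpa using h'⟩
  simpa using this

theorem Min.U_le_R {b} (hb : S.Min b) {p C} (h : S.I p C) : S.U C ≤ S.R p :=
  Geo.U_le fun _ h' => hb.line h' h

theorem Min.U_comm {b} (hb : S.Min b) {C} {u v : G} (hu : u ∈ S.U C) (hv : v ∈ S.U C) :
    u * v = v * u := by
  have h : S.U C ≤ cz (S.U C) := Geo.U_le fun p hp v hv => by
    rw [mem_cz]
    intro u hu
    exact (S.V_cent hv (hb.U_le_R hp hu)).symm
  exact mem_cz.1 (h hv) u hu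

/-- Critical paths. -/
structure Crit (S : Geo G Pt Ln) (b : ℕ) (P : ℕ → Pt) (C : ℕ → Ln) : Prop where
  path : S.Path b P C
  crit : ¬ S.V (P 0) ≤ S.R (P b)

section crit
variable {b : ℕ} {P : ℕ → Pt} {C : ℕ → Ln}

theorem Crit.V_le_E (hb : S.Min b) (h : S.Crit b P C) : S.V (P 0) ≤ S.E (C (b - 1)) := by
  have h2 := hb.1
  have h3 := hb.le h.path 0 (b - 1) (by omega) (by omega)
  rw [zero_add] at h3
  exact h3.trans (S.R_le (h.path.left (b - 1) (by omega)))

theorem Crit.Vb_le_E (hb : S.Min b) (h : S.Crit b P C) : S.V (P b) ≤ S.E (C 0) := by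
  have h2 := hb.1
  have h3 := hb.ge h.path 1 (b - 1) (by omega) (by omega)
  rw [show 1 + (b - 1) = b by omega] at h3
  exact h3.trans (S.R_le (h.path.right 0 (by omega)))

theorem Crit.I_left (hb : S.Min b) (h : S.Crit b P C) : S.I (P 0) (C 0) :=
  h.path.left 0 (by have := hb.1; omega)

theorem Crit.I_right (hb : S.Min b) (h : S.Crit b P C) : S.I (P b) (C (b - 1)) := by
  have h2 := hb.1
  have := h.path.right (b - 1) (by omega)
  rwa [show b - 1 + 1 = b by omega] at this

theorem Crit.crit_rev (hb : S.Min b) (h : S.Crit b P C) : ¬ S.V (P b) ≤ S.R (P 0) := by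
  intro hle
  obtain ⟨v, hv, hv'⟩ := SetLike.not_le_iff_exists.1 h.crit
  refine Z_lt (h.I_right hb) fun w hw => ?_
  exact S.cent (h.I_right hb) (h.V_le_E hb hv) hv' hw (S.V_cent hv (hle hw)).symm

theorem Crit.rev (hb : S.Min b) (h : S.Crit b P C) :
    S.Crit b (fun i => P (b - i)) (fun i => C (b - 1 - i)) :=
  ⟨h.path.rev, by simpa using h.crit_rev hb⟩

theorem Crit.inf (hb : S.Min b) (h : S.Crit b P C) : S.R (P b) ⊓ S.V (P 0) = S.Z (C 0) := by
  have h2 := hb.1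
  apply le_antisymm
  · rintro v ⟨hr, hv⟩
    obtain ⟨t, ht, ht'⟩ := SetLike.not_le_iff_exists.1 (h.crit_rev hb)
    exact S.cent (h.I_left hb) (h.Vb_le_E hb ht) ht' hv (S.V_cent ht hr).symm
  · refine le_inf ?_ (S.Z_le (h.I_left hb))
    have h3 := hb.le h.path 1 (b - 1) (by omega) (by omega)
    rw [show 1 + (b - 1) = b by omega] at h3
    exact (S.Z_le (h.path.right 0 (by omega))).trans h3

theorem Crit.full (hb : S.Min b) (h : S.Crit b P C) {e : G} (he : e ∈ S.E (C (b - 1))) :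
    ∃ v ∈ S.V (P 0), ∃ r ∈ S.R (P b), e = v * r := by
  have hR := S.relR (h.I_right hb)
  refine full_of_relIndex (h.V_le_E hb) ?_ ?_ he
  · rw [← Subgroup.inf_relIndex_right, h.inf hb, S.relV (h.I_left hb), hR]
  · rw [hR]; have := S.hq; omega

theorem Crit.full' (hb : S.Min b) (h : S.Crit b P C) {e : G} (he : e ∈ S.E (C 0)) :
    ∃ v ∈ S.V (P b), ∃ r ∈ S.R (P 0), e = v * r := by
  have := (h.rev hb).full hb (e := e) (by simpa using he)
  simpa using this

theorem Crit.z_eq (hb : S.Min b) (h : S.Crit b P C) : S.z (P 0) (C 0) = ⁅S.V (P 0), S.V (P b)⁆ := by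
  refine comm_eq_of (h.Vb_le_E hb) fun c hc => ?_
  obtain ⟨v, hv, r, hr, rfl⟩ := h.full' hb hc
  exact ⟨v, hv, r, fun a ha => S.V_cent ha hr, rfl⟩

theorem Crit.z_eq' (hb : S.Min b) (h : S.Crit b P C) :
    S.z (P b) (C (b - 1)) = ⁅S.V (P 0), S.V (P b)⁆ := by
  have := (h.rev hb).z_eq hb
  rw [Subgroup.commutator_comm]
  simpa using this

theorem Crit.z_z (hb : S.Min b) (h : S.Crit b P C) : S.z (P 0) (C 0) = S.z (P b) (C (b - 1)) :=
  (h.z_eq hb).trans (h.z_eq' hb).symm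

theorem Crit.z_le_Z (hb : S.Min b) (h : S.Crit b P C) : S.z (P 0) (C 0) ≤ S.Z (C 0) := by
  rw [← h.inf hb]
  refine le_inf ?_ (z_le_V (h.I_left hb))
  rw [h.z_z hb]
  exact (z_le_V (h.I_right hb)).trans (S.V_le _)

theorem Crit.flagcomm (hb : S.Min b) (h : S.Crit b P C) {p D} (hp : S.I p D) :
    S.z p D ≤ S.Z D := by
  obtain ⟨g, rfl, rfl⟩ := S.flag (h.I_left hb) hp
  rw [S.z_smul, S.Z_smul]
  exact cj_mono (h.z_le_Z hb)

theorem Crit.UE (hb : S.Min b) (h : S.Crit b P C) {D} {u e : G} (hu : u ∈ S.U D) (he : e ∈ S.E D) :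
    ⁅u, e⁆ ∈ S.Z D := by
  refine comm_iSup_mem (A := fun p : {p // S.I p D} => S.V p) (E := S.E D) ?_ ?_ u hu e he
  · intro i a ha e he
    exact h.flagcomm hb i.2 (Subgroup.commutator_mem_commutator ha he)
  · intro i a ha
    rw [mem_nm]
    exact cj_eq_of_central fun k hk => S.Z_cent hk (Geo.V_le_E i.2 ha)

theorem Crit.ext (hb : S.Min b) (h : S.Crit b P C) {D} (hD : S.I (P 0) D) (hne : D ≠ C 0) :
    ∃ p, S.I p D ∧ ¬ S.V p ≤ S.R (P (b - 1)) := by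
  by_contra hcon
  push Not at hcon
  have h2 := hb.1
  have hU : S.U D ≤ S.R (P (b - 1)) := Geo.U_le hcon
  have hED : S.E D ≤ nm (S.U D) := fun e he => by
    rw [mem_nm, ← S.U_smul, S.E_line he]
  have hV : S.V (P b) ≤ nm (S.U D) := by
    refine nm_of_comm fun u hu a ha => ?_
    have : ⁅u, a⁆ ∈ S.z (P b) (C (b - 1)) := by
      rw [z, Subgroup.commutator_comm]
      exact Subgroup.commutator_mem_commutator (S.R_le (h.path.left (b-1) (by omega)) (hU hu)) ha
    rw [← h.z_z hb] at this
    exact V_le_U hD (z_le_V (h.I_left hb) this)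
  have hEC : S.E (C 0) ≤ nm (S.U D) := fun e he => by
    obtain ⟨v, hv, r, hr, rfl⟩ := h.full' hb he
    exact mul_mem (hV hv) (hED (S.R_le hD hr))
  have := S.core hD U_le_E (fun g hg => by rw [← S.U_smul, hg])
    (genE hD (h.I_left hb) hne hED hEC)
  apply V_ne hD
  rw [eq_bot_iff, ← this]
  exact V_le_U hD

/-- prepend to a sequence -/
def pre {α : Type*} (a : α) (f : ℕ → α) : ℕ → α
  | 0 => a
  | n + 1 => f n

theorem Path.pre {L} (h : S.Path L P C) {p D} (h1 : S.I p D) (h2 : S.I (P 0) D) :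
    S.Path (L + 1) (pre p P) (pre D C) := by
  constructor
  · rintro (_ | i) hi
    · exact h1
    · exact h.left i (by omega)
  · rintro (_ | i) hi
    · exact h2
    · exact h.right i (by omega)

end crit

/-- Good paths: every window of length `b` is critical. -/
structure Good (S : Geo G Pt Ln) (b L : ℕ) (P : ℕ → Pt) (C : ℕ → Ln) : Prop where
  path : S.Path L P C
  crit : ∀ i, i + b ≤ L → ¬ S.V (P i) ≤ S.R (P (i + b))

section good
variable {b L : ℕ} {P : ℕ → Pt} {C : ℕ → Ln}

theorem Good.window (h : S.Good b L P C) (i : ℕ) (hi : i + b ≤ L) :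
    S.Crit b (fun m => P (i + m)) (fun m => C (i + m)) :=
  ⟨h.path.shift i b hi, h.crit i hi⟩

theorem Good.shift (h : S.Good b L P C) (i k : ℕ) (hi : i + k ≤ L) :
    S.Good b k (fun m => P (i + m)) (fun m => C (i + m)) :=
  ⟨h.path.shift i k hi, fun m hm => by simpa [add_assoc] using h.crit (i + m) (by omega)⟩

theorem Good.rev (hb : S.Min b) (h : S.Good b L P C) :
    S.Good b L (fun m => P (L - m)) (fun m => C (L - 1 - m)) := by
  refine ⟨h.path.rev, fun i hi => ?_⟩
  have := (h.window (L - (i + b)) (by omega)).crit_rev hb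
  simp only [add_zero] at this
  rwa [show L - (i + b) + b = L - i by omega] at this

theorem Good.exists_succ (hb : S.Min b) (hL : b ≤ L) (h : S.Good b L P C) :
    ∃ P' C', S.Good b (L + 1) P' C' := by
  have h2 := hb.1
  have hc := h.window 0 (by omega)
  simp only [zero_add] at hc
  obtain ⟨D, hD, hne, -⟩ := exists_third (S := S) (p := P 0) (C 0) (C 0)
  obtain ⟨p, hp, hp'⟩ := hc.ext hb hD hne
  refine ⟨_, _, h.path.pre hp hD, ?_⟩
  rintro (_ | i) hi
  · rw [zero_add]
    obtain ⟨b', rfl⟩ : ∃ b', b = b' + 1 := ⟨b - 1, by omega⟩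
    exact hp'
  · have := h.crit i (by omega)
    rw [show i + 1 + b = (i + b) + 1 by omega]
    exact this

theorem Crit.good (h : S.Crit b P C) : S.Good b b P C := by
  refine ⟨h.path, fun i hi => ?_⟩
  have : i = 0 := by omega
  subst this
  simpa using h.crit

theorem Good.exists (hb : S.Min b) (h : S.Crit b P C) (k : ℕ) : ∃ P' C', S.Good b (b + k) P' C' := by
  induction k with
  | zero => exact ⟨P, C, h.good⟩
  | succ k ih =>
    obtain ⟨P', C', h'⟩ := ih
    exact h'.exists_succ hb (Nat.le_add_right b k)

/-- consecutive lines in a critical path are distinct -/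
theorem Crit.ne (hb : S.Min b) (h : S.Crit b P C) (i : ℕ) (hi : i + 1 < b) : C i ≠ C (i + 1) := by
  intro he
  apply h.crit
  have := hb.2 (b - 1) (by omega) (fun j => if j ≤ i then P j else P (j + 1))
    (fun j => if j ≤ i then C j else C (j + 1)) ?_
  · simpa [show ¬ (b - 1 ≤ i) by omega, show b - 1 + 1 = b by omega] using this
  · constructor
    · intro j hj
      by_cases h1 : j ≤ i
      · simpa [h1] using h.path.left j (by omega)
      · simpa [h1] using h.path.left (j + 1) (by omega)
    · intro j hj
      by_cases h1 : j + 1 ≤ i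
      · simpa [h1, show j ≤ i by omega] using h.path.right j (by omega)
      · by_cases h3 : j = i
        · subst h3
          simp only [h1, if_false, le_refl, if_true]
          rw [he]
          exact h.path.right (j + 1) (by omega)
        · simpa [h1, show ¬ j ≤ i by omega] using h.path.right (j + 1) (by omega)

theorem Good.ne (hb : S.Min b) (hL : b ≤ L) (h : S.Good b L P C) (i : ℕ) (hi : i + 1 < L) :
    C i ≠ C (i + 1) := by
  have h2 := hb.1
  by_cases h1 : i + b ≤ L
  · simpa using (h.window i h1).ne hb 0 (by omega)
  · have := (h.window (L - b) (by omega)).ne hb (i - (L - b)) (by omega)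
    rwa [show L - b + (i - (L - b)) = i by omega, show L - b + (i - (L - b) + 1) = i + 1 by omega] at this

end good
end Geo

namespace Geo
variable {G Pt Ln : Type*} [Group G] [MulAction G Pt] [MulAction G Ln] {S : Geo G Pt Ln}

/-- Output of the main local analysis. -/
structure Out (S : Geo G Pt Ln) (b : ℕ) (P : ℕ → Pt) (C : ℕ → Ln) : Prop where
  z_le : ∀ D, S.I (P 1) D → S.z (P 0) (C 0) ≤ S.Z D
  sig : ∀ D, S.I (P 1) D → ⁅S.U D, S.T (P 1)⁆ = S.z (P 0) (C 0)
  ds : S.Ds (P 1) = S.U (C 0) ⊓ S.R (P b)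
  fac : ∀ u ∈ S.U (C 0), ∃ v ∈ S.V (P 0), ∃ d ∈ S.Ds (P 1), u = v * d

theorem Good.out {b : ℕ} {P : ℕ → Pt} {C : ℕ → Ln} (hb : S.Min b) (h : S.Good b (b + 1) P C) :
    S.Out b P C := by
  have h2 := hb.1
  have w0 : S.Crit b P C := by simpa using h.window 0 (by omega)
  have w1 : S.Crit b (fun m => P (1 + m)) (fun m => C (1 + m)) := h.window 1 (by omega)
  have hpath := h.path
  have i00 : S.I (P 0) (C 0) := hpath.left 0 (by omega)
  have i10 : S.I (P 1) (C 0) := hpath.right 0 (by omega)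
  have i11 : S.I (P 1) (C 1) := hpath.left 1 (by omega)
  have ibb : S.I (P b) (C b) := hpath.left b (by omega)
  have ibb' : S.I (P b) (C (b - 1)) := w0.I_right hb
  have ne01 : C 0 ≠ C 1 := h.ne hb (by omega) 0 (by omega)
  -- full for E (C 1)
  have full1 : ∀ e ∈ S.E (C 1), ∃ v ∈ S.V (P (b + 1)), ∃ r ∈ S.R (P 1), e = v * r := by
    intro e he
    have := w1.full' hb (e := e) (by simpa using he)
    simpa [add_comm] using this
  have zz1 : S.z (P (b + 1)) (C b) = S.z (P 1) (C 1) := by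
    have := w1.z_z hb
    simp only [add_zero] at this
    rw [this, add_comm b 1, show 1 + (b - 1) = b by omega]
  set Us := S.U (C 0) ⊓ S.R (P b) with hUs
  have fac0 : ∀ u ∈ S.U (C 0), ∃ v ∈ S.V (P 0), ∃ d ∈ Us, u = v * d := by
    intro u hu
    have h3 : S.U (C 0) ≤ S.R (P (b - 1)) := by
      have := hb.U_le hpath 0 (b - 2) (by omega) (by omega)
      rwa [show 0 + (b - 2 + 1) = b - 1 by omega] at this
    have h4 : u ∈ S.E (C (b - 1)) := S.R_le (hpath.left (b - 1) (by omega)) (h3 hu)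
    obtain ⟨v, hv, r, hr, rfl⟩ := w0.full hb h4
    refine ⟨v, hv, r, ⟨?_, hr⟩, rfl⟩
    have := mul_mem (inv_mem (V_le_U i00 hv)) hu
    simpa using this
  have hVa : S.V (P 1) ≤ Us := by
    refine le_inf (V_le_U i10) ?_
    have := hb.le hpath 1 (b - 1) (by omega) (by omega)
    rwa [show 1 + (b - 1) = b by omega] at this
  have hE0 : S.E (C 0) ≤ nm Us := nm_of_comm fun u hu e he =>
    hVa (S.Z_le i10 (w0.UE hb hu.1 he))
  have hVb : S.V (P (b + 1)) ≤ nm Us := nm_of_comm fun u hu a ha => by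
    have : ⁅u, a⁆ ∈ S.z (P (b + 1)) (C b) := by
      rw [z, Subgroup.commutator_comm]
      exact Subgroup.commutator_mem_commutator (S.R_le ibb hu.2) ha
    rw [zz1] at this
    exact hVa (z_le_V i11 this)
  have hE1 : S.E (C 1) ≤ nm Us := fun e he => by
    obtain ⟨v, hv, r, hr, rfl⟩ := full1 e he
    exact mul_mem (hVb hv) (hE0 (S.R_le i10 hr))
  have hEn := genE i10 i11 ne01 hE0 hE1
  have hds : S.Ds (P 1) = Us := by
    apply le_antisymm
    · refine le_inf (Ds_le_U i10) ((Ds_le_U i11).trans ?_)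
      have := hb.U_le hpath 1 (b - 2) (by omega) (by omega)
      rwa [show 1 + (b - 2 + 1) = b by omega] at this
    · refine le_iInf fun D => ?_
      obtain ⟨F, hF, e, he, heq⟩ := line_trans i10 D.2
      rw [← heq, S.U_smul, ← mem_nm.1 (hEn F hF he)]
      exact cj_mono inf_le_left
  have hz1 : ∀ D, S.I (P 1) D → D ≠ C 1 → S.z (P 0) (C 0) ≤ S.Z D := by
    intro D hD hne
    obtain ⟨e, he, heq⟩ := S.E_trans i11 i10 hD ne01 hne
    obtain ⟨t, ht, r, hr, rfl⟩ := full1 e he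
    have hrC : r • C 0 = C 0 := R_fix i10 i10 hr
    rw [mul_smul, hrC] at heq
    have htR : t ∈ S.R (P b) := hb.ge hpath b 1 (by omega) (by omega) ht
    have e1 : t • P b = P b := S.E_pt (S.R_le ibb htR) ibb
    have e2 : t • C (b - 1) = C (b - 1) := S.E_line (S.R_le ibb' htR)
    have e3 : S.z (P 0) (C 0) = S.z (t • P 0) (t • C 0) := by
      rw [S.z_smul, w0.z_z hb, ← S.z_smul, e1, e2]
    rw [e3, heq]
    refine w0.flagcomm hb ?_
    rw [← heq]
    exact S.I_smul t i00
  have hz : ∀ D, S.I (P 1) D → S.z (P 0) (C 0) ≤ S.Z D := by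
    intro D hD
    by_cases hne : D = C 1
    · obtain ⟨F, hF, hF0, hF1⟩ := exists_third (S := S) (p := P 1) (C 0) (C 1)
      exact (le_inf (hz1 _ i10 ne01) (hz1 F hF hF1)).trans (Z_inf i10 hF hD hF0.symm)
    · exact hz1 D hD hne
  -- T
  have hTE : S.T (P 1) ≤ S.E (C 0) := inf_le_left.trans (S.R_le i10)
  have hTd : ∀ d ∈ Us, ∀ t ∈ S.T (P 1), d * t = t * d := fun d hd t ht => by
    have := ht.2
    rw [hds] at this
    exact mem_cz.1 this d hd
  have hTR : ¬ S.T (P 1) ≤ S.R (P 0) := by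
    intro hle
    have heq : S.T (P 1) = S.E (C 0) ⊓ cz (S.U (C 0)) := by
      apply le_antisymm
      · refine le_inf hTE fun t ht => ?_
        rw [mem_cz]
        intro u hu
        obtain ⟨v, hv, d, hd, rfl⟩ := fac0 u hu
        have a1 := S.V_cent hv (hle ht)
        have a2 := hTd d hd t ht
        rw [mul_assoc, a2, ← mul_assoc, a1, mul_assoc]
      · rintro t ⟨ht, ht'⟩
        replace ht' := mem_cz.1 ht'
        refine ⟨mem_R_of_cent i10 ht fun v hv => ht' v (V_le_U i10 hv), ?_⟩
        change t ∈ cz (S.Ds (P 1))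
        rw [hds, mem_cz]
        exact fun k hk => ht' k hk.1
    have hbot : S.T (P 1) = ⊥ := by
      refine S.core i10 hTE (fun g hg => ?_) fun D' hD' e he => ?_
      · rw [heq, cj_inf, cj_cz, ← S.U_smul, ← S.E_smul, hg]
      · rw [mem_nm, ← S.T_smul, S.E_pt he hD']
    apply V_ne i10
    rw [eq_bot_iff, ← hbot]
    refine le_inf (S.V_le _) fun v hv => ?_
    rw [hds, mem_cz]
    intro k hk
    exact (S.V_cent hv (hb.U_le_R i10 hk.1)).symm
  have hTfull := S.irr i10 i00 hTE (fun g hg _ => by rw [← S.T_smul, hg]) hTR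
  have hs0 : ⁅S.U (C 0), S.T (P 1)⁆ = S.z (P 0) (C 0) := by
    have e1 : S.z (P 0) (C 0) = ⁅S.V (P 0), S.T (P 1)⁆ := by
      refine comm_eq_of hTE fun c hc => ?_
      rw [← hTfull] at hc
      obtain ⟨a, ha, r, hr, rfl⟩ := mem_sup_nm' (fun t ht => E_nm (hTE ht) i00) hc
      exact ⟨a, ha, r, fun v hv => S.V_cent hv hr, rfl⟩
    rw [e1]
    apply le_antisymm
    · rw [Subgroup.commutator_le]
      intro u hu t ht
      obtain ⟨v, hv, d, hd, rfl⟩ := fac0 u hu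
      rw [comm_mul_left, comm_eq_one (hTd d hd t ht)]
      simpa using Subgroup.commutator_mem_commutator hv ht
    · exact Subgroup.commutator_mono (V_le_U i00) le_rfl
  refine ⟨hz, ?_, hds, by rw [hds]; exact fac0⟩
  intro D hD
  obtain ⟨F, hF, e, he, heq⟩ := line_trans i10 hD
  have e1 : S.T (P 1) = cj e (S.T (P 1)) := by rw [← S.T_smul, S.E_pt he hF]
  rw [← heq, S.U_smul, e1, ← cj_comm, hs0]
  exact cj_eq_of_central fun k hk => S.Z_cent (hz F hF hk) he

theorem Good.fwd {b L : ℕ} {P : ℕ → Pt} {C : ℕ → Ln} (hb : S.Min b) (h : S.Good b L P C)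
    (i : ℕ) (hi : i + b + 1 ≤ L) : S.Out b (fun m => P (i + m)) (fun m => C (i + m)) :=
  (h.shift i (b + 1) (by omega)).out hb

/-- Backward version, centred at `P i`. -/
theorem Good.bwd {b L : ℕ} {P : ℕ → Pt} {C : ℕ → Ln} (hb : S.Min b) (h : S.Good b L P C)
    (i : ℕ) (hi : b ≤ i) (hL : i + 1 ≤ L) :
    S.Out b (fun m => P (i + 1 - m)) (fun m => C (i - m)) := by
  have h1 := ((h.shift (i - b) (b + 1) (by omega)).rev hb).out hb
  have hb2 := hb.1
  constructor
  · have := h1.z_le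
    simp only [show i - b + (b + 1 - 1) = i by omega, show i - b + (b + 1 - 0) = i + 1 by omega, show i - b + (b + 1 - 1 - 0) = i by omega] at this
    simpa using this
  · have := h1.sig
    simp only [show i - b + (b + 1 - 1) = i by omega, show i - b + (b + 1 - 0) = i + 1 by omega, show i - b + (b + 1 - 1 - 0) = i by omega] at this
    simpa using this
  · have := h1.ds
    simp only [show i - b + (b + 1 - 1) = i by omega, show i - b + (b + 1 - b) = i + 1 - b by omega, show i - b + (b + 1 - 1 - 0) = i by omega] at this
    simpa using this
  · have := h1.fac
    simp only [show i - b + (b + 1 - 1) = i by omega, show i - b + (b + 1 - 0) = i + 1 by omega, show i - b + (b + 1 - 1 - 0) = i by omega] at this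
    simpa using this

theorem case_ge3 {b : ℕ} {P : ℕ → Pt} {C : ℕ → Ln} (hb : S.Min b) (h3 : 3 ≤ b)
    (h : S.Good b (2 * b + 1) P C) : False := by
  have f := h.fwd hb (b - 1) (by omega)
  have g := h.bwd hb b le_rfl (by omega)
  have ib : S.I (P b) (C b) := h.path.left b (by omega)
  have ib1 : S.I (P (b + 1)) (C b) := h.path.right b (by omega)
  have ib2 : S.I (P (b + 1)) (C (b + 1)) := h.path.left (b + 1) (by omega)
  have e1 := f.sig
  have e2 := g.sig
  simp only [show b - 1 + 1 = b by omega, add_zero, Nat.sub_zero, Nat.add_sub_cancel] at e1 e2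
  have e3 := (e1 _ ib).symm.trans (e2 _ ib)
  have w := h.window (b - 1) (by omega)
  have w' := h.window (b + 1) (by omega)
  have hne := h.ne hb (by omega) b (by omega)
  refine S.nz ib1 ib2 hne fun v hv => ?_
  change v ∈ S.z _ _ at hv
  obtain ⟨t, ht, ht'⟩ := SetLike.not_le_iff_exists.1 (w'.crit_rev hb)
  have htE := w'.Vb_le_E hb ht
  simp only [add_zero] at htE ht'
  refine S.cent ib2 htE ht' (z_le_V ib1 hv) ?_
  rw [← e3] at hv
  have a1 := w.z_z hb
  simp only [add_zero] at a1
  rw [a1] at hv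
  have a2 := z_le_V (w.I_right hb) hv
  have a3 := hb.ge h.path (b - 1 + b) 2 (by omega) (by omega)
  rw [show b - 1 + b + 2 = b + 1 + b by omega] at a3
  exact S.V_cent a2 (a3 ht)
end Geo

theorem card_relIndex {G : Type*} [Group G] {H K : Subgroup G} (h : H ≤ K) :
    Nat.card K = H.relIndex K * Nat.card H := by
  have := Subgroup.relIndex_mul_relIndex ⊥ H K bot_le h
  rw [Subgroup.relIndex_bot_left, Subgroup.relIndex_bot_left] at this
  rw [← this, mul_comm]

/-- Counting: `q+1` subgroups of index `q` with common pairwise intersection of index `q^2`. -/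
theorem count_cover {G ι : Type*} [Group G] [Finite G] {W Y : Subgroup G} (N : ι → Subgroup G)
    {q : ℕ} (hq : 2 ≤ q) (hι : Nat.card ι = q + 1) (hY : ∀ i, Y ≤ N i) (hN : ∀ i, N i ≤ W)
    (hmeet : ∀ i j, i ≠ j → N i ⊓ N j ≤ Y) (h1 : ∀ i, (N i).relIndex W = q)
    (h2 : ∀ i, Y.relIndex (N i) = q) : ∀ w ∈ W, ∃ i, w ∈ N i := by
  classical
  have : Finite ι := Nat.finite_of_card_ne_zero (by omega)
  have : Fintype ι := Fintype.ofFinite _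
  have : Fintype G := Fintype.ofFinite _
  rw [Nat.card_eq_fintype_card] at hι
  have i0 : Nonempty ι := Fintype.card_pos_iff.1 (by omega)
  let F : Subgroup G → Finset G := fun K => Finset.univ.filter (· ∈ K)
  have hF : ∀ K : Subgroup G, (F K).card = Nat.card K := fun K => by
    rw [Nat.card_eq_fintype_card, Fintype.card_subtype]
  have hc1 : ∀ i, Nat.card (N i) = q * Nat.card Y := fun i => by
    rw [← h2 i]; exact card_relIndex (hY i)
  have hc2 : Nat.card W = q * (q * Nat.card Y) := by
    obtain ⟨i⟩ := i0
    rw [← hc1 i]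
    conv_rhs => rw [← h1 i]
    exact card_relIndex (hN i)
  have hsub : ∀ i, F Y ⊆ F (N i) := fun i x hx => by
    simp only [F, Finset.mem_filter, Finset.mem_univ, true_and] at hx ⊢
    exact hY i hx
  let A : Finset G := Finset.univ.biUnion (fun i => F (N i) \ F Y) ∪ F Y
  have hA : A.card = q * (q * Nat.card Y) := by
    rw [Finset.card_union_of_disjoint, Finset.card_biUnion]
    · simp only [Finset.card_sdiff_of_subset (hsub _), hF, hc1, Finset.sum_const, Finset.card_univ, hι,
        smul_eq_mul]
      obtain ⟨m, rfl⟩ : ∃ m, q = m + 1 := ⟨q - 1, by omega⟩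
      rw [show (m + 1) * Nat.card Y - Nat.card Y = m * Nat.card Y by
        rw [add_mul, one_mul]; omega]
      ring
    · intro i _ j _ hij
      change Disjoint _ _
      rw [Finset.disjoint_left]
      intro x hx hx'
      simp only [F, Finset.mem_sdiff, Finset.mem_filter, Finset.mem_univ, true_and] at hx hx'
      exact hx.2 (hmeet i j hij ⟨hx.1, hx'.1⟩)
    · rw [Finset.disjoint_left]
      intro x hx hx'
      simp only [Finset.mem_biUnion, Finset.mem_sdiff] at hx
      obtain ⟨i, -, hi⟩ := hx
      exact hi.2 hx'
  have hAW : A ⊆ F W := by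
    intro x hx
    simp only [A, F, Finset.mem_union, Finset.mem_biUnion, Finset.mem_sdiff, Finset.mem_filter,
      Finset.mem_univ, true_and] at hx ⊢
    rcases hx with ⟨i, hi, -⟩ | hx
    · exact hN i hi
    · obtain ⟨i⟩ := i0
      exact hN i (hY i hx)
  have hEq : A = F W := Finset.eq_of_subset_of_card_le hAW (by rw [hF, hc2, hA])
  intro w hw
  have hw' : w ∈ A := by rw [hEq]; simpa [F] using hw
  simp only [A, F, Finset.mem_union, Finset.mem_biUnion, Finset.mem_sdiff, Finset.mem_filter,
      Finset.mem_univ, true_and] at hw'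
  rcases hw' with ⟨i, hi, -⟩ | hx
  · exact ⟨i, hi⟩
  · obtain ⟨i⟩ := i0
    exact ⟨i, hY i hx⟩

namespace Geo
variable {G Pt Ln : Type*} [Group G] [MulAction G Pt] [MulAction G Ln] {S : Geo G Pt Ln}

theorem W_le_T {b : ℕ} (hb : S.Min b) (a : Pt) : S.W a ≤ S.T a := by
  refine iSup_le fun D => le_inf (hb.U_le_R D.2) fun u hu => ?_
  rw [mem_cz]
  intro k hk
  exact hb.U_comm (Ds_le_U D.2 hk) hu

theorem W_fix (a : Pt) {g : G} (h : g • a = a) : cj g (S.W a) = S.W a := by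
  rw [← S.W_smul, h]

section
variable {b : ℕ} {a : Pt} {s : Subgroup G}

theorem W_cent (hz : ∀ D, S.I a D → s ≤ S.Z D) {w k : G} (hw : w ∈ S.W a) (hk : k ∈ s) :
    k * w = w * k := by
  have : S.W a ≤ cz s := by
    refine iSup_le fun D u hu => ?_
    rw [mem_cz]
    intro k hk
    exact S.Z_cent (hz D D.2 hk) (U_le_E hu)
  exact mem_cz.1 (this hw) k hk

theorem W_comm (hb : S.Min b) (hz : ∀ D, S.I a D → s ≤ S.Z D) (hs : ∀ D, S.I a D → ⁅S.U D, S.T a⁆ = s)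
    {w w' : G} (hw : w ∈ S.W a) (hw' : w' ∈ S.W a) : ⁅w, w'⁆ ∈ s := by
  refine comm_iSup_mem (A := fun D : {D // S.I a D} => S.U D) (E := S.W a) ?_ ?_ w hw w' hw'
  · intro D u hu e he
    rw [← hs D D.2]
    exact Subgroup.commutator_mem_commutator hu (W_le_T hb a he)
  · intro D u hu
    rw [mem_nm]
    exact cj_eq_of_central fun k hk => W_cent hz (U_le_W D.2 hu) hk

theorem sq_mul_mem {κ : Subgroup G} {x y : G} (hx : x * x ∈ κ) (hy : y * y ∈ κ) (hc : ⁅y, x⁆ ∈ κ)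
    (hxn : x ∈ nm κ) : x * y * (x * y) ∈ κ := by
  have : x * y * (x * y) = (x * ⁅y, x⁆ * x⁻¹) * (x * x) * (y * y) := by
    simp only [commutatorElement_def]; group
  rw [this]
  exact mul_mem (mul_mem (nm_conj hxn hc) hx) hy

theorem comm_of_sq {κ : Subgroup G} {x y : G} (hx : x * x ∈ κ) (hy : y * y ∈ κ)
    (hxy : x * y * (x * y) ∈ κ) (hyn : y ∈ nm κ) : ⁅x, y⁆ ∈ κ := by
  have : ⁅x, y⁆ = (x * y * (x * y)) * (y⁻¹ * (x * x)⁻¹ * y) * (y * y)⁻¹ := by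
    simp only [commutatorElement_def]; group
  rw [this]
  exact mul_mem (mul_mem hxy (nm_conj' hyn (inv_mem hx))) (inv_mem hy)

theorem U_sq (hb : S.Min b) {D : Ln} {u : G} (hu : u ∈ S.U D) : u * u = 1 := by
  have key : u ∈ S.U D ∧ u * u = 1 := by
    refine Subgroup.iSup_induction (fun p : {p // S.I p D} => S.V p)
      (C := fun u => u ∈ S.U D ∧ u * u = 1) hu ?_ ?_ ?_
    · intro p v hv
      exact ⟨V_le_U p.2 hv, S.V_sq hv⟩
    · exact ⟨one_mem _, by simp⟩
    · rintro x y ⟨hx, hx'⟩ ⟨hy, hy'⟩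
      refine ⟨mul_mem hx hy, ?_⟩
      have := hb.U_comm hx hy
      calc x * y * (x * y) = x * (y * x) * y := by group
        _ = (x * x) * (y * y) := by rw [← this]; group
        _ = 1 := by rw [hx', hy', one_mul]
  exact key.2

theorem W_sq (hb : S.Min b) (hz : ∀ D, S.I a D → s ≤ S.Z D) (hs : ∀ D, S.I a D → ⁅S.U D, S.T a⁆ = s)
    {w : G} (hw : w ∈ S.W a) : w * w ∈ s := by
  have key : w ∈ S.W a ∧ w * w ∈ s := by
    refine Subgroup.iSup_induction (fun D : {D // S.I a D} => S.U D)
      (C := fun w => w ∈ S.W a ∧ w * w ∈ s) hw ?_ ?_ ?_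
    · intro D u hu
      exact ⟨U_le_W D.2 hu, by rw [U_sq hb hu]; exact one_mem _⟩
    · exact ⟨one_mem _, by simp⟩
    · rintro x y ⟨hx, hx'⟩ ⟨hy, hy'⟩
      refine ⟨mul_mem hx hy, sq_mul_mem hx' hy' (W_comm hb hz hs hy hx) ?_⟩
      rw [mem_nm]
      exact cj_eq_of_central fun k hk => W_cent hz hx hk
  exact key.2
end

set_option maxHeartbeats 1000000 in
theorem case_eq2_aux [Finite G] {a j p1 p4 : Pt} {C1 C2 C3 : Ln} (hb : S.Min 2)
    (fz : ∀ D, S.I a D → S.z j C2 ≤ S.Z D)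
    (fs : ∀ D, S.I a D → ⁅S.U D, S.T a⁆ = S.z j C2)
    (ff : ∀ u ∈ S.U C2, ∃ v ∈ S.V j, ∃ d ∈ S.Ds a, u = v * d)
    (gd : S.Ds a = S.U C3 ⊓ S.R j)
    (kz : ∀ D, S.I j D → S.z a C2 ≤ S.Z D)
    (ks : ∀ D, S.I j D → ⁅S.U D, S.T j⁆ = S.z a C2)
    (i22 : S.I j C2) (i32 : S.I a C2) (i33 : S.I a C3) (i21 : S.I j C1) (i11 : S.I p1 C1)
    (i43 : S.I p4 C3) (ne12 : C1 ≠ C2) (ne23 : C2 ≠ C3)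
    (c13 : ¬ S.V p1 ≤ S.R a)
    (full2 : ∀ e ∈ S.E C2, ∃ v ∈ S.V p4, ∃ r ∈ S.R j, e = v * r)
    (z24 : S.z j C2 = ⁅S.V j, S.V p4⁆) : False := by
  set sa := S.z j C2 with hsa
  set κ := sa ⊓ S.z a C2 with hκ
  suffices hmain : sa ≤ κ by
    refine S.nz i22 i21 ne12.symm ?_
    exact (hmain.trans inf_le_right).trans (kz _ i21)
  by_contra hnot
  have WaE : S.W a ≤ S.E C2 := ((W_le_T hb a).trans inf_le_left).trans (S.R_le i32)
  have WjE : S.W j ≤ S.E C2 := ((W_le_T hb j).trans inf_le_left).trans (S.R_le i22)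
  have κz : ∀ D, S.I a D → κ ≤ S.Z D := fun D hD => inf_le_left.trans (fz D hD)
  have κn : S.W a ≤ nm κ := fun w hw => by
    rw [mem_nm]
    exact cj_eq_of_central fun k hk => W_cent κz hw hk
  -- E C2 = W_j R_a
  have hWj : ¬ S.W j ≤ S.R a := fun hle => c13 (((V_le_U i11).trans (U_le_W i21)).trans hle)
  have hWjf : ∀ e ∈ S.E C2, ∃ w ∈ S.W j, ∃ r ∈ S.R a, e = w * r := by
    intro e he
    rw [← S.irr i22 i32 WjE (fun g hg _ => W_fix j hg) hWj] at he
    exact mem_sup_nm' (fun t ht => E_nm (WjE ht) i32) he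
  -- W_a = (W_a ⊓ W_j) U_{C3}
  have hU3 : S.U C3 ≤ S.E C2 := (hb.U_le_R i33).trans (S.R_le i32)
  have hU3n : S.U C3 ≤ nm (S.W a ⊓ S.W j) := fun u hu => by
    rw [mem_nm, cj_inf, W_fix a (S.E_pt (hU3 hu) i32), W_fix j (S.E_pt (hU3 hu) i22)]
  have hWa : S.W a ≤ (S.W a ⊓ S.W j) ⊔ S.U C3 := by
    refine iSup_le fun D => ?_
    by_cases hD : D.1 = C2
    · rw [hD]
      exact le_sup_of_le_left (le_inf (U_le_W i32) (U_le_W i22))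
    obtain ⟨e, he, heq⟩ := S.E_trans i32 i33 D.2 ne23.symm hD
    obtain ⟨w, hw, r, hr, rfl⟩ := hWjf e he
    rw [mul_smul, R_fix i33 i33 hr] at heq
    rw [← heq, S.U_smul]
    intro x hx
    rw [mem_cj] at hx
    set u := w⁻¹ * x * w with hu
    have hxu : x = ⁅w, u⁆ * u := by rw [← conj_eq_comm_mul, hu]; group
    rw [hxu]
    refine mul_mem (Subgroup.mem_sup_left ⟨?_, ?_⟩) (Subgroup.mem_sup_right hx)
    · have hwa : w ∈ nm (S.W a) := by rw [mem_nm]; exact W_fix a (S.E_pt (WjE hw) i32)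
      have hua := U_le_W i33 hx
      rw [commutatorElement_def]
      exact mul_mem (S := Subgroup G) (nm_conj hwa hua) (inv_mem hua)
    · have huj : u ∈ nm (S.W j) := by rw [mem_nm]; exact W_fix j (S.E_pt (hU3 hx) i22)
      rw [commutatorElement_def, mul_assoc, mul_assoc, ← mul_assoc u]
      exact mul_mem hw (nm_conj huj (inv_mem hw))
  -- N_C
  have hNC1 : S.W a ⊓ S.R j ≤ S.W j := by
    rintro w ⟨hw, hwR0⟩
    have hwR : w ∈ S.R j := hwR0
    obtain ⟨k, hk, u, hu, rfl⟩ := mem_sup_nm hU3n (hWa hw)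
    have hkj : k ∈ S.W j := hk.2
    have hkR : k ∈ S.R j := (W_le_T hb j hkj).1
    have huR : u ∈ S.R j := by
      have := mul_mem (inv_mem hkR) hwR
      simpa using this
    have : u ∈ S.Ds a := by rw [gd]; exact ⟨hu, huR⟩
    exact mul_mem hkj (U_le_W i22 (Ds_le_U i32 this))
  have hNC2 : S.W a ⊓ S.R j = S.W a ⊓ cz (S.U C2) := by
    apply le_antisymm
    · refine le_inf inf_le_left ?_
      rintro w ⟨hw, hwR⟩
      rw [mem_cz]
      intro u hu
      obtain ⟨v, hv, d, hd, rfl⟩ := ff u hu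
      have a1 := S.V_cent hv hwR
      have a2 := mem_cz.1 (W_le_T hb a hw).2 d hd
      rw [mul_assoc, a2, ← mul_assoc, a1, mul_assoc]
    · refine le_inf inf_le_left ?_
      rintro w ⟨hw, hwR⟩
      exact mem_R_of_cent i22 (WaE hw) fun v hv => mem_cz.1 hwR v (V_le_U i22 hv)
  let N : Ln → Subgroup G := fun D => S.W a ⊓ cz (S.U D)
  have N_smul : ∀ g : G, g • a = a → ∀ D, N (g • D) = cj g (N D) := fun g hg D => by
    change S.W a ⊓ cz (S.U (g • D)) = cj g (S.W a ⊓ cz (S.U D))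
    rw [S.U_smul, cj_inf, cj_cz, W_fix a hg]
  -- squares and commutators in N_D
  have hκfix : ∀ D, S.I a D → ∀ e ∈ S.E D, cj e κ = κ := fun D hD e he =>
    cj_eq_of_central fun k hk => S.Z_cent (κz D hD hk) he
  have hsqC : ∀ w ∈ N C2, w * w ∈ κ := fun w hw => by
    change w ∈ S.W a ⊓ cz (S.U C2) at hw
    rw [← hNC2] at hw
    exact ⟨W_sq hb fz fs hw.1, W_sq hb kz ks (hNC1 hw)⟩
  have hcoC : ∀ w ∈ N C2, ∀ w' ∈ N C2, ⁅w, w'⁆ ∈ κ := fun w hw w' hw' => by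
    change w ∈ S.W a ⊓ cz (S.U C2) at hw
    change w' ∈ S.W a ⊓ cz (S.U C2) at hw'
    rw [← hNC2] at hw hw'
    exact ⟨W_comm hb fz fs hw.1 hw'.1, W_comm hb kz ks (hNC1 hw) (hNC1 hw')⟩
  have hsq : ∀ D, S.I a D → ∀ w ∈ N D, w * w ∈ κ := by
    intro D hD w hw
    obtain ⟨F, hF, e, he, heq⟩ := line_trans i32 hD
    rw [← heq, N_smul e (S.E_pt he hF), mem_cj] at hw
    rw [← hκfix F hF e he, mem_cj]
    have := hsqC _ hw
    convert this using 1
    group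
  have hco : ∀ D, S.I a D → ∀ w ∈ N D, ∀ w' ∈ N D, ⁅w, w'⁆ ∈ κ := by
    intro D hD w hw w' hw'
    obtain ⟨F, hF, e, he, heq⟩ := line_trans i32 hD
    rw [← heq, N_smul e (S.E_pt he hF), mem_cj] at hw hw'
    rw [← hκfix F hF e he, mem_cj]
    have := hcoC _ hw _ hw'
    convert this using 1
    simp only [commutatorElement_def]
    group
  -- Y
  let Y : Subgroup G :=
    { carrier := {w | w ∈ S.W a ∧ ∀ w' ∈ S.W a, ⁅w, w'⁆ ∈ κ}
      one_mem' := ⟨one_mem _, fun w' _ => by simp⟩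
      mul_mem' := by
        rintro x y ⟨hx, hx'⟩ ⟨hy, hy'⟩
        refine ⟨mul_mem hx hy, fun w hw => ?_⟩
        rw [comm_mul_left]
        exact mul_mem (nm_conj (κn hx) (hy' w hw)) (hx' w hw)
      inv_mem' := by
        rintro x ⟨hx, hx'⟩
        refine ⟨inv_mem hx, fun w hw => ?_⟩
        have : ⁅x⁻¹, w⁆ = x⁻¹ * ⁅x, w⁆⁻¹ * x := by simp only [commutatorElement_def]; group
        rw [this]
        exact nm_conj' (κn hx) (inv_mem (hx' w hw)) }
  have hYW : Y ≤ S.W a := fun w hw => hw.1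
  have hYconj : ∀ g : G, g • a = a → cj g κ = κ → cj g Y = Y := by
    have aux : ∀ g : G, g • a = a → cj g κ = κ → cj g Y ≤ Y := by
      intro g hg hgκ w hw
      rw [mem_cj] at hw
      obtain ⟨h1, h2⟩ := hw
      have hW : cj g (S.W a) = S.W a := W_fix a hg
      refine ⟨by rw [← hW, mem_cj]; exact h1, fun w' hw' => ?_⟩
      rw [← hW, mem_cj] at hw'
      have := h2 _ hw'
      rw [← hgκ, mem_cj]
      convert this using 1
      simp only [commutatorElement_def]
      group
    intro g hg hgκ
    refine le_antisymm (aux g hg hgκ) ?_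
    have := aux g⁻¹ (by rw [inv_smul_eq_iff, hg]) (by rw [cj_eq_iff, inv_inv, hgκ])
    have := cj_mono (g := g) this
    rwa [cj_cj_inv] at this
  have hYR : Y ≤ S.R j := by
    by_contra hYn
    have hYf := S.irr i32 i22 (hYW.trans WaE) (fun g hg hgC => hYconj g hg (by
      rw [hκ, cj_inf, ← S.z_smul g a, hg, hgC]
      congr 1
      have := fs _ i32
      rw [← this, cj_comm, ← S.U_smul, ← S.T_smul, hg, hgC])) hYn
    apply hnot
    have e1 : sa = ⁅S.V j, Y⁆ := by
      refine comm_eq_of (hYW.trans WaE) fun c hc => ?_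
      rw [← hYf] at hc
      obtain ⟨y, hy, r, hr, rfl⟩ := mem_sup_nm' (fun t ht => E_nm (WaE (hYW ht)) i22) hc
      exact ⟨y, hy, r, fun v hv => S.V_cent hv hr, rfl⟩
    rw [e1, Subgroup.commutator_le]
    intro v hv y hy
    rw [← commutatorElement_inv]
    exact inv_mem (hy.2 v (U_le_W i32 (V_le_U i22 hv)))
  have hYN : ∀ D, S.I a D → Y ≤ N D := by
    intro D hD
    obtain ⟨F, hF, e, he, heq⟩ := line_trans i32 hD
    rw [← heq, N_smul e (S.E_pt he hF), ← hYconj e (S.E_pt he hF) (hκfix F hF e he)]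
    refine cj_mono ?_
    change Y ≤ S.W a ⊓ cz (S.U C2)
    rw [← hNC2]
    exact le_inf hYW hYR
  -- W = the product of the two
  have hfC : ∀ w ∈ S.W a, ∃ m ∈ N C3, ∃ l ∈ N C2, w = m * l := by
    intro w hw
    obtain ⟨v, hv, r, hr, rfl⟩ := full2 w (WaE hw)
    have hvU := V_le_U i43 hv
    have hvW := U_le_W i33 hvU
    refine ⟨v, ⟨hvW, ?_⟩, r, ?_, rfl⟩
    · exact mem_cz.2 fun k hk => hb.U_comm hk hvU
    · change r ∈ S.W a ⊓ cz (S.U C2)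
      rw [← hNC2]
      refine ⟨?_, hr⟩
      have := mul_mem (inv_mem hvW) hw
      simpa using this
  have htwo : ∀ D D', S.I a D → S.I a D' → D ≠ D' →
      ∃ g : G, g • a = a ∧ g • C2 = D ∧ g • C3 = D' := by
    intro D D' hD hD' hne
    obtain ⟨F, hF, e, he, heq⟩ := line_trans i32 hD
    have hea := S.E_pt he hF
    have hD2 : S.I a (e⁻¹ • D') := by
      rw [← S.I_iff e, hea, smul_inv_smul]; exact hD'
    have hD2n : e⁻¹ • D' ≠ C2 := by
      intro hh
      apply hne
      rw [← heq, ← hh, smul_inv_smul]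
    obtain ⟨f, hf, hfeq⟩ := S.E_trans i32 i33 hD2 ne23.symm hD2n
    refine ⟨e * f, ?_, ?_, ?_⟩
    · rw [mul_smul, S.E_pt hf i32, hea]
    · rw [mul_smul, S.E_line hf, heq]
    · rw [mul_smul, hfeq, smul_inv_smul]
  have hf : ∀ D D', S.I a D → S.I a D' → D ≠ D' → ∀ w ∈ S.W a,
      ∃ m ∈ N D', ∃ l ∈ N D, w = m * l := by
    intro D D' hD hD' hne w hw
    obtain ⟨g, hg, rfl, rfl⟩ := htwo D D' hD hD' hne
    rw [← W_fix a hg, mem_cj] at hw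
    obtain ⟨m, hm, l, hl, heq⟩ := hfC _ hw
    refine ⟨g * m * g⁻¹, ?_, g * l * g⁻¹, ?_, ?_⟩
    · rw [N_smul g hg]; exact conj_mem_cj hm
    · rw [N_smul g hg]; exact conj_mem_cj hl
    · have : w = g * (g⁻¹ * w * g) * g⁻¹ := by group
      rw [this, heq]; group
  have hNN : ∀ D D', S.I a D → S.I a D' → D ≠ D' → N D ⊓ N D' ≤ Y := by
    rintro D D' hD hD' hne w ⟨h1, h2⟩
    have h1' : w ∈ N D := h1
    have h2' : w ∈ N D' := h2
    refine ⟨h1'.1, fun w' hw' => ?_⟩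
    obtain ⟨m, hm, l, hl, rfl⟩ := hf D D' hD hD' hne w' hw'
    rw [comm_mul_right]
    exact mul_mem (hco D' hD' w h2' m hm) (nm_conj (κn hm.1) (hco D hD w h1' l hl))
  have hrelC : (N C2).relIndex (S.W a) = S.q := by
    have e1 : N C2 = S.W a ⊓ S.R j := hNC2.symm
    rw [e1, Subgroup.inf_relIndex_left, ← S.relR i22]
    refine relIndex_of_full WaE fun e he => ?_
    obtain ⟨v, hv, r, hr, rfl⟩ := full2 e he
    exact ⟨v, U_le_W i33 (V_le_U i43 hv), r, hr, rfl⟩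
  have hrel : ∀ D, S.I a D → (N D).relIndex (S.W a) = S.q := by
    intro D hD
    obtain ⟨F, hF, e, he, heq⟩ := line_trans i32 hD
    rw [← heq, N_smul e (S.E_pt he hF), ← W_fix a (S.E_pt he hF), ← hrelC]
    exact Subgroup.relIndex_map_map_of_injective _ _ (MulAut.conj e).injective
  have hrelY : ∀ D, S.I a D → Y.relIndex (N D) = S.q := by
    intro D hD
    obtain ⟨D', hD', hne, -⟩ := exists_third (S := S) (p := a) D D
    have e1 : Y = N D' ⊓ N D := le_antisymm (le_inf (hYN D' hD') (hYN D hD)) (hNN D' D hD' hD hne)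
    rw [e1, Subgroup.inf_relIndex_right, ← hrel D' hD']
    refine relIndex_of_full inf_le_left fun e he => ?_
    obtain ⟨m, hm, l, hl, rfl⟩ := hf D' D hD' hD hne e he
    exact ⟨m, hm, l, hl, rfl⟩
  have hcov := count_cover (W := S.W a) (Y := Y) (fun D : {D // S.I a D} => N D) S.hq (S.cardL a)
    (fun D => hYN D D.2) (fun D => inf_le_left)
    (fun D D' hne => hNN D D' D.2 D'.2 (fun hh => hne (Subtype.ext hh)))
    (fun D => hrel D D.2) (fun D => hrelY D D.2)
  have hallsq : ∀ w ∈ S.W a, w * w ∈ κ := fun w hw => by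
    obtain ⟨D, hD⟩ := hcov w hw
    exact hsq D D.2 w hD
  apply hnot
  rw [z24, Subgroup.commutator_le]
  intro v hv v' hv'
  have h1 := U_le_W i32 (V_le_U i22 hv)
  have h2 := U_le_W i33 (V_le_U i43 hv')
  exact comm_of_sq (hallsq _ h1) (hallsq _ h2) (hallsq _ (mul_mem h1 h2)) (κn h2)

theorem case_eq2 [Finite G] {P : ℕ → Pt} {C : ℕ → Ln} (hb : S.Min 2) (h : S.Good 2 5 P C) :
    False := by
  have fz : ∀ D, S.I (P 3) D → S.z (P 2) (C 2) ≤ S.Z D := (h.fwd hb 2 (by norm_num)).z_le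
  have fs : ∀ D, S.I (P 3) D → ⁅S.U D, S.T (P 3)⁆ = S.z (P 2) (C 2) := (h.fwd hb 2 (by norm_num)).sig
  have ff : ∀ u ∈ S.U (C 2), ∃ v ∈ S.V (P 2), ∃ d ∈ S.Ds (P 3), u = v * d :=
    (h.fwd hb 2 (by norm_num)).fac
  have gd : S.Ds (P 3) = S.U (C 3) ⊓ S.R (P 2) := (h.bwd hb 3 (by norm_num) (by norm_num)).ds
  have kz : ∀ D, S.I (P 2) D → S.z (P 3) (C 2) ≤ S.Z D := (h.bwd hb 2 (by norm_num) (by norm_num)).z_le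
  have ks : ∀ D, S.I (P 2) D → ⁅S.U D, S.T (P 2)⁆ = S.z (P 3) (C 2) :=
    (h.bwd hb 2 (by norm_num) (by norm_num)).sig
  have i22 : S.I (P 2) (C 2) := h.path.left 2 (by norm_num)
  have i32 : S.I (P 3) (C 2) := h.path.right 2 (by norm_num)
  have i33 : S.I (P 3) (C 3) := h.path.left 3 (by norm_num)
  have i21 : S.I (P 2) (C 1) := h.path.right 1 (by norm_num)
  have i11 : S.I (P 1) (C 1) := h.path.left 1 (by norm_num)
  have i43 : S.I (P 4) (C 3) := h.path.right 3 (by norm_num)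
  have ne12 : C 1 ≠ C 2 := h.ne hb (by norm_num) 1 (by norm_num)
  have ne23 : C 2 ≠ C 3 := h.ne hb (by norm_num) 2 (by norm_num)
  have w2 : S.Crit 2 (fun m => P (2 + m)) (fun m => C (2 + m)) := h.window 2 (by norm_num)
  have c13 : ¬ S.V (P 1) ≤ S.R (P 3) := h.crit 1 (by norm_num)
  have full2 : ∀ e ∈ S.E (C 2), ∃ v ∈ S.V (P 4), ∃ r ∈ S.R (P 2), e = v * r :=
    fun e he => w2.full' hb he
  have z24 : S.z (P 2) (C 2) = ⁅S.V (P 2), S.V (P 4)⁆ := by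
    have := w2.z_eq hb
    simp only [add_zero, Nat.reduceAdd] at this
    exact this
  exact case_eq2_aux hb fz fs ff gd kz ks i22 i32 i33 i21 i11 i43 ne12 ne23 c13 full2 z24

theorem exists_line (p : Pt) : ∃ D, S.I p D := by
  have h : 0 < Nat.card {D // S.I p D} := by rw [S.cardL]; omega
  obtain ⟨D⟩ := (Nat.card_pos_iff.1 h).1
  exact ⟨D.1, D.2⟩

variable (S) in
theorem contra [Finite G] [Nonempty Pt]
    (h1 : ∀ p p' C, S.I p C → S.I p' C → S.V p ≤ S.R p') : False := by
  classical
  obtain ⟨p0⟩ := ‹Nonempty Pt›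
  obtain ⟨D0, hD0⟩ := exists_line (S := S) p0
  by_cases hall : ∀ k P C, S.Path k P C → S.V (P 0) ≤ S.R (P k)
  · have hpath : ∀ p p', ∃ k P C, S.Path k P C ∧ P 0 = p ∧ P k = p' := by
      intro p p'
      have := S.conn p p'
      induction this using Relation.ReflTransGen.head_induction_on with
      | refl => exact ⟨0, fun _ => p', fun _ => D0, ⟨by omega, by omega⟩, rfl, rfl⟩
      | head hab _ ih =>
        obtain ⟨k, P, C, hP, h0, hk⟩ := ih
        obtain ⟨D, hD, hD'⟩ := hab
        exact ⟨k + 1, _, _, hP.pre hD (by rw [h0]; exact hD'), rfl, hk⟩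
    have hle : S.V p0 ≤ ⨅ p, S.R p := by
      refine le_iInf fun p => ?_
      obtain ⟨k, P, C, hP, h0, hk⟩ := hpath p0 p
      have := hall k P C hP
      rwa [h0, hk] at this
    have hinv : ∀ g : G, cj g (⨅ p, S.R p) = ⨅ p, S.R p := by
      intro g
      rw [cj_iInf]
      simp only [← S.R_smul]
      exact (MulAction.toPerm g).iInf_comp (g := fun p => S.R p)
    have := S.core (K := ⨅ p, S.R p) hD0 ((iInf_le _ p0).trans (S.R_le hD0)) (fun g _ => hinv g)
      (fun D' _ g _ => by rw [mem_nm]; exact hinv g)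
    apply V_ne hD0
    rw [eq_bot_iff, ← this]
    exact hle
  · have hex : ∃ k, ∃ P C, S.Path k P C ∧ ¬ S.V (P 0) ≤ S.R (P k) := by
      push Not at hall
      exact hall
    obtain ⟨P, C, hP, hn⟩ := Nat.find_spec hex
    have hlt : ∀ k < Nat.find hex, ∀ P C, S.Path k P C → S.V (P 0) ≤ S.R (P k) := by
      intro k hk P C hP
      by_contra hcon
      exact Nat.find_min hex hk ⟨P, C, hP, hcon⟩
    set b := Nat.find hex
    have hb2 : 2 ≤ b := by
      by_contra hlt2
      have : b = 0 ∨ b = 1 := by omega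
      rcases this with h0 | h0
      · rw [h0] at hn
        exact hn (S.V_le _)
      · rw [h0] at hn hP
        exact hn (h1 _ _ _ (hP.left 0 (by omega)) (hP.right 0 (by omega)))
    have hb : S.Min b := ⟨hb2, hlt⟩
    have hc : S.Crit b P C := ⟨hP, hn⟩
    obtain ⟨P', C', hG⟩ := Good.exists hb hc (b + 1)
    rcases Nat.lt_or_ge 2 b with h3 | h3
    · exact case_ge3 hb h3 (by rwa [show b + (b + 1) = 2 * b + 1 by omega] at hG)
    · have : b = 2 := by omega
      rw [this] at hG hb
      exact case_eq2 hb hG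
end Geo

section amal
variable {G : Type*} [Group G]

/-- Conjugates of `K` indexed by cosets of a subgroup normalising `K`. -/
noncomputable def liftS {H : Subgroup G} (K : Subgroup G) (p : G ⧸ H) : Subgroup G :=
  cj (Quotient.out p) K

theorem liftS_mk {H K : Subgroup G} (h : H ≤ nm K) (g : G) :
    liftS K (QuotientGroup.mk g : G ⧸ H) = cj g K := by
  unfold liftS
  obtain ⟨⟨k, hk⟩, e⟩ := QuotientGroup.mk_out_eq_mul H g
  rw [e, cj_mul, mem_nm.1 (h hk)]

theorem liftS_smul {H K : Subgroup G} (h : H ≤ nm K) (g : G) (p : G ⧸ H) :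
    liftS K (g • p) = cj g (liftS K p) := by
  obtain ⟨a, rfl⟩ := QuotientGroup.mk_surjective p
  rw [MulAction.Quotient.smul_mk, smul_eq_mul, liftS_mk h, liftS_mk h, cj_mul]

theorem relIndex_cj (g : G) (A B : Subgroup G) : (cj g A).relIndex (cj g B) = A.relIndex B :=
  Subgroup.relIndex_map_map_of_injective _ _ (MulAut.conj g).injective

theorem cj_le {g : G} {A B : Subgroup G} : cj g A ≤ B ↔ A ≤ cj g⁻¹ B := by
  rw [← cj_le_iff (g := g⁻¹), cj_inv_cj]

theorem le_cj {g : G} {A B : Subgroup G} : A ≤ cj g B ↔ cj g⁻¹ A ≤ B := by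
  rw [cj_le, inv_inv]

theorem mk_eq_iff {H : Subgroup G} {a b : G} :
    (QuotientGroup.mk a : G ⧸ H) = QuotientGroup.mk b ↔ a⁻¹ * b ∈ H := QuotientGroup.eq

/-- two cosets meet -/
def Inc (H N : Subgroup G) (p : G ⧸ H) (C : G ⧸ N) : Prop :=
  ∃ g : G, p = QuotientGroup.mk g ∧ C = QuotientGroup.mk g

theorem smul_mk' {H : Subgroup G} (g a : G) :
    g • (QuotientGroup.mk a : G ⧸ H) = QuotientGroup.mk (g * a) := rfl

theorem fix_mk {H : Subgroup G} {g a : G} :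
    g • (QuotientGroup.mk a : G ⧸ H) = QuotientGroup.mk a ↔ a⁻¹ * g * a ∈ H := by
  rw [smul_mk', eq_comm, mk_eq_iff, mul_assoc]

theorem inc_mk {H N : Subgroup G} {g : G} {C : G ⧸ N} :
    Inc H N (QuotientGroup.mk g) C ↔ ∃ h ∈ H, C = QuotientGroup.mk (g * h) := by
  constructor
  · rintro ⟨a, h1, h2⟩
    exact ⟨g⁻¹ * a, mk_eq_iff.1 h1, by rw [h2]; congr 1; group⟩
  · rintro ⟨h, hh, rfl⟩
    exact ⟨g * h, by rw [mk_eq_iff]; simpa using hh, rfl⟩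

theorem inc_mk' {H N : Subgroup G} {g : G} {p : G ⧸ H} :
    Inc H N p (QuotientGroup.mk g) ↔ ∃ n ∈ N, p = QuotientGroup.mk (g * n) := by
  constructor
  · rintro ⟨a, h1, h2⟩
    exact ⟨g⁻¹ * a, mk_eq_iff.1 h2, by rw [h1]; congr 1; group⟩
  · rintro ⟨h, hh, rfl⟩
    exact ⟨g * h, rfl, by rw [mk_eq_iff]; simpa using hh⟩

/-- The data feeding the geometry. -/
structure Amal (H N E R V Z : Subgroup G) (q : ℕ) : Prop where
  hq : 2 ≤ q
  hRH : H ≤ nm R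
  hVH : H ≤ nm V
  hEN : N ≤ nm E
  hZN : N ≤ nm Z
  hBN : N ≤ nm (H ⊓ N)
  hEH : E ≤ H
  hEN' : E ≤ N
  htr : ∀ h ∈ H, h ∉ N → ∀ h' ∈ H, h' ∉ N → ∃ e ∈ E, (e * h)⁻¹ * h' ∈ N
  hRE : R ≤ E
  hVR : V ≤ R
  hVc : ∀ v ∈ V, ∀ r ∈ R, v * r = r * v
  hVs : ∀ v ∈ V, v * v = 1
  hZV : Z ≤ V
  hZc : ∀ v ∈ Z, ∀ r ∈ E, v * r = r * v
  cent : ∀ t ∈ E, t ∉ R → ∀ v ∈ V, v * t = t * v → v ∈ Z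
  relR : R.relIndex E = q
  relV : Z.relIndex V = q
  hcore : ∀ K ≤ E, N ≤ nm K → (∀ h ∈ H, cj h E ≤ nm K) → K = ⊥
  hirr : ∀ K ≤ E, H ⊓ N ≤ nm K → ¬ K ≤ R → K ⊔ R = E
  hnz : ∀ h ∈ H, h ∉ N → ¬ ⁅V, E⁆ ≤ cj h Z
  hcard : N.relIndex H = q + 1
  hgen : H ⊔ N = ⊤

variable {H N E R V Z : Subgroup G} {q : ℕ}

/-- The geometry. -/
noncomputable def Amal.geo (A : Amal H N E R V Z q) : Geo G (G ⧸ H) (G ⧸ N) where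
  I := Inc H N
  R := liftS R
  V := liftS V
  E := liftS E
  Z := liftS Z
  q := q
  hq := A.hq
  I_smul := by
    rintro g _ _ ⟨a, rfl, rfl⟩
    exact ⟨g * a, rfl, rfl⟩
  R_smul := liftS_smul A.hRH
  V_smul := liftS_smul A.hVH
  E_smul := liftS_smul A.hEN
  Z_smul := liftS_smul A.hZN
  flag := by
    rintro _ _ _ _ ⟨a, rfl, rfl⟩ ⟨b, rfl, rfl⟩
    refine ⟨b * a⁻¹, ?_, ?_⟩ <;> rw [smul_mk'] <;> congr 1 <;> group
  E_line := by
    intro C e he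
    obtain ⟨a, rfl⟩ := QuotientGroup.mk_surjective C
    rw [liftS_mk A.hEN, mem_cj] at he
    rw [fix_mk]
    exact A.hEN' he
  E_pt := by
    rintro _ e _ he ⟨a, rfl, rfl⟩
    rw [liftS_mk A.hEN, mem_cj] at he
    rw [fix_mk]
    exact A.hEH he
  E_trans := by
    rintro _ _ C' C'' ⟨a, rfl, rfl⟩ h1 h2 hne1 hne2
    obtain ⟨h, hh, rfl⟩ := inc_mk.1 h1
    obtain ⟨h', hh', rfl⟩ := inc_mk.1 h2
    have k1 : h ∉ N := fun hn => hne1 (by rw [eq_comm, mk_eq_iff]; simpa using hn)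
    have k2 : h' ∉ N := fun hn => hne2 (by rw [eq_comm, mk_eq_iff]; simpa using hn)
    obtain ⟨e, he, hen⟩ := A.htr h hh k1 h' hh' k2
    refine ⟨a * e * a⁻¹, ?_, ?_⟩
    · rw [liftS_mk A.hEN]; exact conj_mem_cj he
    · rw [smul_mk', mk_eq_iff]
      convert hen using 1
      group
  R_le := by
    rintro _ _ ⟨a, rfl, rfl⟩
    rw [liftS_mk A.hEN, liftS_mk A.hRH]
    exact cj_mono A.hRE
  V_le := fun p => cj_mono A.hVR
  V_cent := by
    intro p v r hv hr
    have hv := mem_cj.1 hv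
    have hr := mem_cj.1 hr
    have := A.hVc _ hv _ hr
    have h2 : ∀ g : G, g⁻¹ * v * g * (g⁻¹ * r * g) = g⁻¹ * r * g * (g⁻¹ * v * g) → v * r = r * v := by
      intro g hg
      have h3 : g * (g⁻¹ * v * g * (g⁻¹ * r * g)) * g⁻¹ = g * (g⁻¹ * r * g * (g⁻¹ * v * g)) * g⁻¹ := by
        rw [hg]
      simpa [mul_assoc] using h3
    exact h2 _ this
  V_sq := by
    intro p v hv
    have hv := mem_cj.1 hv
    have := A.hVs _ hv
    have h2 : ∀ g : G, g⁻¹ * v * g * (g⁻¹ * v * g) = 1 → v * v = 1 := by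
      intro g hg
      have h3 : g * (g⁻¹ * v * g * (g⁻¹ * v * g)) * g⁻¹ = g * 1 * g⁻¹ := by
        rw [hg]
      simpa [mul_assoc] using h3
    exact h2 _ this
  Z_le := by
    rintro _ _ ⟨a, rfl, rfl⟩
    rw [liftS_mk A.hVH, liftS_mk A.hZN]
    exact cj_mono A.hZV
  Z_cent := by
    intro p v r hv hr
    have hv := mem_cj.1 hv
    have hr := mem_cj.1 hr
    have := A.hZc _ hv _ hr
    have h2 : ∀ g : G, g⁻¹ * v * g * (g⁻¹ * r * g) = g⁻¹ * r * g * (g⁻¹ * v * g) → v * r = r * v := by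
      intro g hg
      have h3 : g * (g⁻¹ * v * g * (g⁻¹ * r * g)) * g⁻¹ = g * (g⁻¹ * r * g * (g⁻¹ * v * g)) * g⁻¹ := by
        rw [hg]
      simpa [mul_assoc] using h3
    exact h2 _ this
  cent := by
    rintro _ _ t v ⟨a, rfl, rfl⟩ ht ht' hv hc
    rw [liftS_mk A.hEN, mem_cj] at ht
    rw [liftS_mk A.hRH, mem_cj] at ht'
    rw [liftS_mk A.hVH, mem_cj] at hv
    rw [liftS_mk A.hZN, mem_cj]
    refine A.cent _ ht ht' _ hv ?_
    calc a⁻¹ * v * a * (a⁻¹ * t * a) = a⁻¹ * (v * t) * a := by group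
      _ = a⁻¹ * (t * v) * a := by rw [hc]
      _ = _ := by group
  relR := by
    rintro _ _ ⟨a, rfl, rfl⟩
    rw [liftS_mk A.hEN, liftS_mk A.hRH, relIndex_cj, A.relR]
  relV := by
    rintro _ _ ⟨a, rfl, rfl⟩
    rw [liftS_mk A.hVH, liftS_mk A.hZN, relIndex_cj, A.relV]
  core := by
    rintro _ _ K ⟨a, rfl, rfl⟩ hK hst hE
    rw [liftS_mk A.hEN, le_cj] at hK
    rw [← cj_eq_bot (g := a⁻¹)]
    refine A.hcore _ hK (fun n hn => ?_) fun h hh => ?_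
    · have := hst (a * n * a⁻¹) (by rw [fix_mk]; simpa [mul_assoc] using hn)
      rw [mem_nm]
      rw [cj_mul, cj_mul, cj_eq_iff, ← cj_mul] at this
      rw [← cj_mul]; exact this
    · have := hE (QuotientGroup.mk (a * h)) (inc_mk.2 ⟨h, hh, rfl⟩)
      rw [liftS_mk A.hEN, cj_mul, cj_le, ← nm_cj] at this
      exact this
  irr := by
    rintro _ j _ K ⟨a, rfl, rfl⟩ hj hK hst hn
    obtain ⟨n, hnN, rfl⟩ := inc_mk'.1 hj
    rw [liftS_mk A.hRH] at hn ⊢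
    rw [liftS_mk A.hEN] at hK ⊢
    have hE : cj a E = cj (a * n) E := by rw [cj_mul, mem_nm.1 (A.hEN hnN)]
    rw [hE] at hK ⊢
    have h1 := A.hirr (cj (a * n)⁻¹ K) (le_cj.1 hK) ?_ (fun hh => hn (le_cj.2 hh))
    · rw [← h1, cj_sup, cj_cj_inv]
    · intro c hc
      rw [nm_cj, mem_cj]
      have hc' : n * c * n⁻¹ ∈ H ⊓ N := nm_conj (A.hBN hnN) hc
      rw [mem_nm]
      have := hst (a * (n * c * n⁻¹) * a⁻¹) (by rw [fix_mk]; simpa [mul_assoc] using hc'.1)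
        (by rw [fix_mk]; simpa [mul_assoc] using hc'.2)
      convert this using 2
      group
  nz := by
    rintro _ _ C' ⟨a, rfl, rfl⟩ h1 hne
    obtain ⟨h, hh, rfl⟩ := inc_mk.1 h1
    have k1 : h ∉ N := fun hn => hne (by rw [mk_eq_iff]; simpa using hn)
    rw [liftS_mk A.hVH, liftS_mk A.hZN, liftS_mk A.hEN, ← cj_comm, cj_mul, cj_le_iff]
    exact A.hnz h hh k1
  cardL := by
    intro p
    obtain ⟨a, rfl⟩ := QuotientGroup.mk_surjective p
    rw [← A.hcard]
    let f : (H ⧸ N.subgroupOf H) → {D // Inc H N (QuotientGroup.mk a) D} :=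
      Quotient.lift (fun h : H => ⟨QuotientGroup.mk (a * h), inc_mk.2 ⟨h, h.2, rfl⟩⟩) (by
        intro h h' hh
        have h1 := QuotientGroup.leftRel_apply.1 hh
        rw [Subgroup.mem_subgroupOf] at h1
        rw [Subtype.mk.injEq, mk_eq_iff]
        convert h1 using 1
        simp)
    refine (Nat.card_congr (Equiv.ofBijective f ⟨?_, ?_⟩)).symm
    · intro x y hxy
      obtain ⟨h, rfl⟩ := QuotientGroup.mk_surjective x
      obtain ⟨h', rfl⟩ := QuotientGroup.mk_surjective y
      have h1 : (QuotientGroup.mk (a * h) : G ⧸ N) = QuotientGroup.mk (a * h') :=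
        congrArg Subtype.val hxy
      rw [mk_eq_iff] at h1
      rw [mk_eq_iff, Subgroup.mem_subgroupOf]
      convert h1 using 1
      simp
    · rintro ⟨D, hD⟩
      obtain ⟨h, hh, rfl⟩ := inc_mk.1 hD
      exact ⟨QuotientGroup.mk ⟨h, hh⟩, rfl⟩
  conn := by
    have key : ∀ g ∈ H ⊔ N, ∀ a : G, Relation.ReflTransGen
        (fun a b : G ⧸ H => ∃ C : G ⧸ N, Inc H N a C ∧ Inc H N b C)
        (QuotientGroup.mk a) (QuotientGroup.mk (a * g)) := by
      intro g hg
      rw [Subgroup.sup_eq_closure] at hg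
      refine Subgroup.closure_induction (k := (H : Set G) ∪ N)
        (p := fun g _ => ∀ a : G, Relation.ReflTransGen
        (fun a b : G ⧸ H => ∃ C : G ⧸ N, Inc H N a C ∧ Inc H N b C)
        (QuotientGroup.mk a) (QuotientGroup.mk (a * g))) ?_ ?_ ?_ ?_ hg
      · rintro g (hg | hg) a
        · have : (QuotientGroup.mk (a * g) : G ⧸ H) = QuotientGroup.mk a := by
            rw [eq_comm, mk_eq_iff]; simpa using hg
          rw [this]
        · exact Relation.ReflTransGen.single ⟨QuotientGroup.mk a, ⟨a, rfl, rfl⟩,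
            inc_mk'.2 ⟨g, hg, rfl⟩⟩
      · intro a; rw [mul_one]
      · intro x y _ _ hx hy a
        rw [← mul_assoc]
        exact (hx a).trans (hy _)
      · intro x _ hx a
        have h1 := hx (a * x⁻¹)
        rw [inv_mul_cancel_right] at h1
        haveI : Std.Symm (fun a b : G ⧸ H => ∃ C : G ⧸ N, Inc H N a C ∧ Inc H N b C) :=
          ⟨by rintro _ _ ⟨C, h2, h3⟩; exact ⟨C, h3, h2⟩⟩
        exact Std.Symm.symm _ _ h1
    intro p p'
    obtain ⟨a, rfl⟩ := QuotientGroup.mk_surjective p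
    obtain ⟨b, rfl⟩ := QuotientGroup.mk_surjective p'
    have := key (a⁻¹ * b) (by rw [A.hgen]; trivial) a
    rwa [mul_inv_cancel_left] at this

theorem Amal.exists [Finite G] (A : Amal H N E R V Z q) : ∃ n ∈ N, ¬ V ≤ cj n R := by
  by_contra! hc
  refine A.geo.contra ?_
  rintro _ p' _ ⟨a, rfl, rfl⟩ h
  obtain ⟨n, hn, rfl⟩ := inc_mk'.1 h
  change liftS V _ ≤ liftS R _
  rw [liftS_mk A.hVH, liftS_mk A.hRH, cj_mul, cj_le_iff]
  exact hc n hn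

end amal

section opsec
variable {G : Type*} [Group G]

/-- central involutions (with the identity) -/
def om (K : Subgroup G) : Subgroup G where
  carrier := {v | v ∈ K ∧ (∀ k ∈ K, v * k = k * v) ∧ v * v = 1}
  one_mem' := ⟨one_mem _, by simp, by simp⟩
  mul_mem' := by
    rintro a b ⟨ha, ha1, ha2⟩ ⟨hb, hb1, hb2⟩
    refine ⟨mul_mem ha hb, fun k hk => ?_, ?_⟩
    · rw [mul_assoc, hb1 k hk, ← mul_assoc, ha1 k hk, mul_assoc]
    · rw [mul_assoc, ← mul_assoc b, ← ha1 b hb, mul_assoc a b b, hb2, mul_one, ha2]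
  inv_mem' := by
    rintro a ⟨ha, ha1, ha2⟩
    have : a⁻¹ = a := inv_eq_of_mul_eq_one_left ha2
    rw [this]; exact ⟨ha, ha1, ha2⟩

theorem mem_om {K : Subgroup G} {v : G} :
    v ∈ om K ↔ v ∈ K ∧ (∀ k ∈ K, v * k = k * v) ∧ v * v = 1 := Iff.rfl

theorem om_le (K : Subgroup G) : om K ≤ K := fun _ h => h.1

theorem cj_om (g : G) (K : Subgroup G) : cj g (om K) = om (cj g K) := by
  have key : ∀ (g : G) (K : Subgroup G), cj g (om K) ≤ om (cj g K) := by
    intro g K v hv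
    obtain ⟨h1, h2, h3⟩ := mem_om.1 (mem_cj.1 hv)
    refine mem_om.2 ⟨mem_cj.2 h1, fun k hk => ?_, ?_⟩
    · have h4 := h2 _ (mem_cj.1 hk)
      have h5 : g * (g⁻¹ * v * g * (g⁻¹ * k * g)) * g⁻¹ = g * (g⁻¹ * k * g * (g⁻¹ * v * g)) * g⁻¹ := by
        rw [h4]
      simpa [mul_assoc] using h5
    · have h5 : g * (g⁻¹ * v * g * (g⁻¹ * v * g)) * g⁻¹ = g * 1 * g⁻¹ := by rw [h3]
      simpa [mul_assoc] using h5
  refine le_antisymm (key g K) ?_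
  rw [le_cj]
  refine (key _ _).trans ?_
  rw [cj_inv_cj]

theorem nm_om (K : Subgroup G) : nm K ≤ nm (om K) := by
  intro g hg
  rw [mem_nm] at hg ⊢
  rw [cj_om, hg]

/-- `T` is a `p`-subgroup of `K` normalised by `K`. -/
def NormP (p : ℕ) (K T : Subgroup G) : Prop := T ≤ K ∧ K ≤ nm T ∧ IsPGroup p T

theorem nm_sup {A B : Subgroup G} : nm A ⊓ nm B ≤ nm (A ⊔ B) := by
  intro g hg
  rw [mem_nm, cj_sup, mem_nm.1 hg.1, mem_nm.1 hg.2]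

theorem nm_inf {A B : Subgroup G} : nm A ⊓ nm B ≤ nm (A ⊓ B) := by
  intro g hg
  rw [mem_nm, cj_inf, mem_nm.1 hg.1, mem_nm.1 hg.2]

theorem card_cj (g : G) (K : Subgroup G) : Nat.card (cj g K) = Nat.card K :=
  Nat.card_congr (K.equivMapOfInjective _ (MulAut.conj g).injective).symm.toEquiv

theorem isPGroup_cj {p : ℕ} {g : G} {K : Subgroup G} (h : IsPGroup p K) : IsPGroup p (cj g K) :=
  h.map _

theorem exists_Op [Finite G] (p : ℕ) [Fact p.Prime] (K : Subgroup G) :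
    ∃ T, NormP p K T ∧ ∀ T', NormP p K T' → T' ≤ T := by
  have h0 : {T | NormP p K T}.Nonempty :=
    ⟨⊥, bot_le, fun g _ => by rw [mem_nm, cj_bot], IsPGroup.of_bot⟩
  obtain ⟨T, hT, hmax⟩ := Set.exists_max_image _ (fun T : Subgroup G => Nat.card T)
    (Set.toFinite {T | NormP p K T}) h0
  refine ⟨T, hT, fun T' hT' => ?_⟩
  have h1 : NormP p K (T' ⊔ T) := by
    refine ⟨sup_le hT'.1 hT.1, (le_inf hT'.2.1 hT.2.1).trans nm_sup, ?_⟩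
    exact IsPGroup.to_sup_of_normal_right' hT'.2.2 hT.2.2 (hT'.1.trans hT.2.1)
  have h2 : T = T' ⊔ T := Subgroup.eq_of_le_of_card_ge le_sup_right (hmax _ h1)
  rw [h2]; exact le_sup_left

/-- The largest normal `p`-subgroup. -/
noncomputable def Op [Finite G] (p : ℕ) [Fact p.Prime] (K : Subgroup G) : Subgroup G :=
  Classical.choose (exists_Op p K)

variable [Finite G] (p : ℕ) [Fact p.Prime] (K : Subgroup G)

theorem Op_spec : NormP p K (Op p K) := (Classical.choose_spec (exists_Op p K)).1

theorem Op_max {T : Subgroup G} (h : NormP p K T) : T ≤ Op p K :=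
  (Classical.choose_spec (exists_Op p K)).2 T h

theorem Op_le : Op p K ≤ K := (Op_spec p K).1

theorem NormP.cj {p : ℕ} {K T : Subgroup G} (h : NormP p K T) (g : G) : NormP p (cj g K) (cj g T) :=
  ⟨cj_mono h.1, by rw [nm_cj]; exact cj_mono h.2.1, isPGroup_cj h.2.2⟩

theorem cj_Op (g : G) : cj g (Op p K) = Op p (cj g K) := by
  apply le_antisymm
  · exact Op_max _ _ ((Op_spec p K).cj g)
  · rw [le_cj]
    apply Op_max
    have := (Op_spec p (cj g K)).cj g⁻¹
    rwa [cj_inv_cj] at this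

theorem nm_Op : nm K ≤ nm (Op p K) := by
  intro g hg
  rw [mem_nm] at hg ⊢
  rw [cj_Op, hg]

/-- If `S ≤ K ≤ nm S` then `Op S ≤ Op K`. -/
theorem Op_mono {S K : Subgroup G} (h : S ≤ K) (h' : K ≤ nm S) : Op p S ≤ Op p K :=
  Op_max _ _ ⟨(Op_le p S).trans h, h'.trans (nm_Op p S), (Op_spec p S).2.2⟩

theorem solv_abel {M : Subgroup G} [hs : Group.IsSolvable M] (hM : M ≠ ⊥) :
    ∃ A ≤ M, A ≠ ⊥ ∧ M ≤ nm A ∧ ∀ a ∈ A, ∀ b ∈ A, a * b = b * a := by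
  classical
  have hex := hs.solvable
  have hk := Nat.find_spec hex
  have hk0 : Nat.find hex ≠ 0 := by
    intro h0
    rw [h0, derivedSeries_zero] at hk
    apply hM
    rw [eq_bot_iff]
    intro m hm
    have h1 : (⟨m, hm⟩ : M) ∈ (⊤ : Subgroup M) := trivial
    rw [hk, Subgroup.mem_bot] at h1
    simpa using congrArg Subtype.val h1
  obtain ⟨j, hj⟩ := Nat.exists_eq_succ_of_ne_zero hk0
  have hjlt : derivedSeries M j ≠ ⊥ := Nat.find_min hex (by omega)
  rw [hj, derivedSeries_succ] at hk
  refine ⟨(derivedSeries M j).map M.subtype, ?_, ?_, ?_, ?_⟩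
  · rintro _ ⟨a, _, rfl⟩; exact a.2
  · intro h
    exact hjlt ((Subgroup.map_eq_bot_iff_of_injective _ M.subtype_injective).1 h)
  · rw [le_nm]
    rintro m hm _ ⟨a, ha, rfl⟩
    have hn : (derivedSeries M j).Normal := derivedSeries_normal M j
    exact ⟨_, hn.conj_mem a ha ⟨m, hm⟩, rfl⟩
  · rintro _ ⟨a, ha, rfl⟩ _ ⟨b, hb, rfl⟩
    have h1 : ⁅a, b⁆ ∈ (⊥ : Subgroup M) := by
      rw [← hk]; exact Subgroup.commutator_mem_commutator ha hb
    rw [Subgroup.mem_bot, comm_eq_one_iff] at h1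
    exact congrArg Subtype.val h1

theorem solv_Op {M : Subgroup G} [Group.IsSolvable M] (hM : M ≠ ⊥) :
    ∃ (p : ℕ) (_ : Fact p.Prime), Op p M ≠ ⊥ := by
  obtain ⟨A, hAM, hA, hn, hc⟩ := solv_abel hM
  have h1 : Nat.card A ≠ 1 := fun h => hA (Subgroup.card_eq_one.1 h)
  obtain ⟨p, hp, hd⟩ := Nat.exists_prime_and_dvd h1
  have : Fact p.Prime := ⟨hp⟩
  refine ⟨p, ⟨hp⟩, fun hb => ?_⟩
  obtain ⟨a, ha⟩ := exists_prime_orderOf_dvd_card' p hd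
  let T : Subgroup G :=
    { carrier := {a | a ∈ A ∧ a ^ p = 1}
      one_mem' := ⟨one_mem _, one_pow _⟩
      mul_mem' := by
        rintro a b ⟨ha, ha1⟩ ⟨hb, hb1⟩
        refine ⟨mul_mem ha hb, ?_⟩
        rw [(show Commute a b from hc a ha b hb).mul_pow, ha1, hb1, one_mul]
      inv_mem' := by
        rintro a ⟨ha, ha1⟩
        exact ⟨inv_mem ha, by rw [inv_pow, ha1, inv_one]⟩ }
  have hT : NormP p M T := by
    refine ⟨fun a h => hAM h.1, ?_, ?_⟩
    · rw [le_nm]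
      rintro m hm t ⟨ht, ht1⟩
      exact ⟨nm_conj (hn hm) ht, by rw [conj_pow, ht1]; group⟩
    · rintro ⟨t, ht, ht1⟩
      refine ⟨1, Subtype.ext ?_⟩
      simpa using ht1
  have h2 := Op_max p M hT
  rw [hb] at h2
  have h3 : (a : G) ∈ T := by
    refine ⟨a.2, ?_⟩
    have := pow_orderOf_eq_one a
    rw [ha] at this
    exact congrArg Subtype.val this
  have h4 := h2 h3
  rw [Subgroup.mem_bot] at h4
  have h5 : a = 1 := Subtype.ext h4
  rw [h5, orderOf_one] at ha
  exact hp.one_lt.ne ha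

theorem om_ne_bot {K : Subgroup G} (hK : K ≠ ⊥) (h2 : IsPGroup 2 K) : om K ≠ ⊥ := by
  have : Fact (Nat.Prime 2) := ⟨Nat.prime_two⟩
  have : Nontrivial K := (Subgroup.nontrivial_iff_ne_bot K).2 hK
  have := h2.center_nontrivial
  have h3 : IsPGroup 2 (Subgroup.center K) := h2.to_subgroup _
  obtain ⟨k, hk0, hk⟩ := h3.nontrivial_iff_card.1 inferInstance
  obtain ⟨a, ha⟩ := exists_prime_orderOf_dvd_card' 2
    (show 2 ∣ Nat.card (Subgroup.center K) by rw [hk]; exact dvd_pow_self _ (by omega))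
  intro hb
  have h4 : ((a : K) : G) ∈ om K := by
    refine ⟨a.1.2, fun k hk => ?_, ?_⟩
    · have := Subgroup.mem_center_iff.1 a.2 ⟨k, hk⟩
      exact (congrArg Subtype.val this).symm
    · have := pow_orderOf_eq_one a
      rw [ha, pow_two] at this
      exact congrArg (fun z : Subgroup.center K => ((z : K) : G)) this
  rw [hb, Subgroup.mem_bot] at h4
  have h5 : a = 1 := Subtype.ext (Subtype.ext h4)
  rw [h5, orderOf_one] at ha
  omega

end opsec

section perms
variable {Ω : Type*} [DecidableEq Ω]
open Equiv

theorem perm_conj_swap (g : Perm Ω) (a b : Ω) : g * swap a b * g⁻¹ = swap (g a) (g b) := by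
  rw [swap_apply_apply]

theorem perm_gen_H {M : Subgroup (Perm Ω)} {o i c : Ω} (hoi : o ≠ i) (hco : c ≠ o) (hci : c ≠ i)
    (hS : ∀ σ : Perm Ω, σ o = o → σ i = i → σ ∈ M) (hs : swap i c ∈ M) (σ : Perm Ω) (h : σ o = o) :
    σ ∈ M := by
  by_cases h1 : σ i = i
  · exact hS σ h h1
  have hd : σ i ≠ o := fun h2 => hoi (σ.injective (h.trans h2.symm))
  have h2 : swap i (σ i) ∈ M := by
    have h3 : swap c (σ i) ∈ M := hS _ (swap_apply_of_ne_of_ne hco.symm hd.symm)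
      (swap_apply_of_ne_of_ne hci.symm (Ne.symm h1))
    have h4 := mul_mem (mul_mem h3 hs) (inv_mem h3)
    rw [perm_conj_swap, swap_apply_left, swap_apply_of_ne_of_ne hci.symm (Ne.symm h1)] at h4
    exact h4
  have h3 : swap i (σ i) * σ ∈ M := by
    apply hS
    · rw [Perm.mul_apply, h, swap_apply_of_ne_of_ne hoi hd.symm]
    · rw [Perm.mul_apply, swap_apply_right]
  have h4 := mul_mem h2 h3
  rwa [← mul_assoc, swap_mul_self, one_mul] at h4

theorem perm_gen_P {M : Subgroup (Perm Ω)} {o c : Ω} (hco : c ≠ o)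
    (hS : ∀ σ : Perm Ω, σ o = o → σ ∈ M) (hs : swap o c ∈ M) (σ : Perm Ω) : σ ∈ M := by
  by_cases h1 : σ o = o
  · exact hS σ h1
  have h2 : swap o (σ o) ∈ M := by
    have h3 : swap c (σ o) ∈ M := hS _ (swap_apply_of_ne_of_ne hco.symm (Ne.symm h1))
    have h4 := mul_mem (mul_mem h3 hs) (inv_mem h3)
    rw [perm_conj_swap, swap_apply_left, swap_apply_of_ne_of_ne hco.symm (Ne.symm h1)] at h4
    exact h4
  have h3 : swap o (σ o) * σ ∈ M := by
    apply hS
    rw [Perm.mul_apply, swap_apply_right]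
  have h4 := mul_mem h2 h3
  rwa [← mul_assoc, swap_mul_self, one_mul] at h4

theorem perm_swap {M : Subgroup (Perm Ω)} {j c : Ω} {t : Perm Ω} (hj : t j = j) (hcj : c ≠ j)
    (htc : t c ≠ c) (hsw : swap (t c) c ∈ M) (hk : swap j c * t * (swap j c)⁻¹ ∈ M) :
    swap j c ∈ M := by
  have hdj : t c ≠ j := fun h => hcj (t.injective (h.trans hj.symm))
  have h1 := mul_mem (mul_mem (inv_mem hk) hsw) hk
  have h2 := perm_conj_swap (swap j c * t * (swap j c)⁻¹)⁻¹ (t c) c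
  rw [inv_inv] at h2
  rw [h2] at h1
  have e1 : (swap j c * t * (swap j c)⁻¹) j = t c := by
    simp [Perm.mul_apply, swap_apply_of_ne_of_ne hdj htc]
  have e2 : (swap j c * t * (swap j c)⁻¹) c = c := by
    simp [Perm.mul_apply, hj]
  rwa [Perm.inv_eq_iff_eq.2 e1.symm, Perm.inv_eq_iff_eq.2 e2.symm] at h1

theorem perm_free [Fintype Ω] (hc : Fintype.card Ω = 4 ∨ Fintype.card Ω = 6) {o i c : Ω}
    (hoi : o ≠ i) (hco : c ≠ o) (hci : c ≠ i) {t : Perm Ω} (h1 : t o = o) (h2 : t i = i)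
    (h3 : t c = c) (ht : t ≠ 1) : t ^ 3 = 1 ∨ ∃ d f, d ≠ f ∧ d ≠ o ∧ d ≠ i ∧ d ≠ c ∧
      f ≠ o ∧ f ≠ i ∧ f ≠ c ∧ t = swap d f := by
  obtain ⟨d, hd⟩ : ∃ d, t d ≠ d := by
    by_contra! h
    exact ht (Equiv.ext h)
  have hdo : d ≠ o := by rintro rfl; exact hd h1
  have hdi : d ≠ i := by rintro rfl; exact hd h2
  have hdc : d ≠ c := by rintro rfl; exact hd h3
  have hfo : t d ≠ o := fun h => hdo (t.injective (h.trans h1.symm))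
  have hfi : t d ≠ i := fun h => hdi (t.injective (h.trans h2.symm))
  have hfc : t d ≠ c := fun h => hdc (t.injective (h.trans h3.symm))
  have hcard : ({o, i, c, d, t d} : Finset Ω).card = 5 := by
    rw [Finset.card_insert_of_notMem, Finset.card_insert_of_notMem, Finset.card_insert_of_notMem,
      Finset.card_insert_of_notMem, Finset.card_singleton]
    all_goals simp only [Finset.mem_insert, Finset.mem_singleton, not_or]
    · exact hd.symm
    · exact ⟨hdc.symm, hfc.symm⟩
    · exact ⟨hci.symm, hdi.symm, hfi.symm⟩
    · exact ⟨hoi, hco.symm, hdo.symm, hfo.symm⟩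
  have h6 : Fintype.card Ω = 6 := by
    have := Finset.card_le_univ ({o, i, c, d, t d} : Finset Ω)
    omega
  have hcc : (({o, i, c, d, t d} : Finset Ω)ᶜ).card = 1 := by
    rw [Finset.card_compl]; omega
  obtain ⟨g, hg⟩ := Finset.card_eq_one.1 hcc
  have hall : ∀ w, w = o ∨ w = i ∨ w = c ∨ w = d ∨ w = t d ∨ w = g := by
    intro w
    by_cases hw : w ∈ ({o, i, c, d, t d} : Finset Ω)
    · simp only [Finset.mem_insert, Finset.mem_singleton] at hw
      rcases hw with h | h | h | h | h
      · exact Or.inl h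
      · exact Or.inr (Or.inl h)
      · exact Or.inr (Or.inr (Or.inl h))
      · exact Or.inr (Or.inr (Or.inr (Or.inl h)))
      · exact Or.inr (Or.inr (Or.inr (Or.inr (Or.inl h))))
    · rw [← Finset.mem_compl, hg, Finset.mem_singleton] at hw
      exact Or.inr (Or.inr (Or.inr (Or.inr (Or.inr hw))))
  have hg' : g ∉ ({o, i, c, d, t d} : Finset Ω) := by
    rw [← Finset.mem_compl, hg]; simp
  simp only [Finset.mem_insert, Finset.mem_singleton, not_or] at hg'
  obtain ⟨g1, g2, g3, g4, g5⟩ := hg'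
  have inj : ∀ {a b}, t a = t b → a = b := fun h => t.injective h
  have f1 : t (t d) ≠ o := fun h => hfo (inj (h.trans h1.symm))
  have f2 : t (t d) ≠ i := fun h => hfi (inj (h.trans h2.symm))
  have f3 : t (t d) ≠ c := fun h => hfc (inj (h.trans h3.symm))
  have f4 : t (t d) ≠ t d := fun h => hd (inj h)
  have k1 : t g ≠ o := fun h => g1 (inj (h.trans h1.symm))
  have k2 : t g ≠ i := fun h => g2 (inj (h.trans h2.symm))
  have k3 : t g ≠ c := fun h => g3 (inj (h.trans h3.symm))
  have k4 : t g ≠ t d := fun h => g4 (inj h)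
  have k5 : t g ≠ t (t d) := fun h => g5 (inj h)
  rcases hall (t (t d)) with h | h | h | h | h | h
  · exact absurd h f1
  · exact absurd h f2
  · exact absurd h f3
  · right
    refine ⟨d, t d, hd.symm, hdo, hdi, hdc, hfo, hfi, hfc, ?_⟩
    have hgg : t g = g := by
      rcases hall (t g) with h' | h' | h' | h' | h' | h'
      · exact absurd h' k1
      · exact absurd h' k2
      · exact absurd h' k3
      · exact absurd (h'.trans h.symm) k5
      · exact absurd h' k4
      · exact h'
    ext w
    rcases hall w with rfl | rfl | rfl | rfl | rfl | rfl
    · rw [swap_apply_of_ne_of_ne hdo.symm hfo.symm, h1]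
    · rw [swap_apply_of_ne_of_ne hdi.symm hfi.symm, h2]
    · rw [swap_apply_of_ne_of_ne hdc.symm hfc.symm, h3]
    · rw [swap_apply_left]
    · rw [swap_apply_right, h]
    · rw [swap_apply_of_ne_of_ne g4 g5, hgg]
  · exact absurd h f4
  · left
    have hgg : t g = d := by
      rcases hall (t g) with h' | h' | h' | h' | h' | h'
      · exact absurd h' k1
      · exact absurd h' k2
      · exact absurd h' k3
      · exact h'
      · exact absurd h' k4
      · exact absurd (h'.trans h.symm) k5
    ext w
    rw [pow_succ, pow_two]
    simp only [Perm.mul_apply, Perm.one_apply]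
    rcases hall w with rfl | rfl | rfl | rfl | rfl | rfl
    · rw [h1, h1, h1]
    · rw [h2, h2, h2]
    · rw [h3, h3, h3]
    · rw [h, hgg]
    · rw [h, hgg]
    · rw [hgg, h]

/-- 2-transitivity away from a fixed set. -/
theorem perm_two_trans {o i a b c d : Ω} (hab : a ≠ b) (hcd : c ≠ d)
    (ha : o ≠ a ∧ i ≠ a) (hb : o ≠ b ∧ i ≠ b) (hc : o ≠ c ∧ i ≠ c) (hd : o ≠ d ∧ i ≠ d) :
    ∃ σ : Perm Ω, σ o = o ∧ σ i = i ∧ σ a = c ∧ σ b = d := by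
  have h1 : swap a c b ≠ c := by
    intro h
    exact hab ((swap a c).injective (h.trans (swap_apply_left a c).symm)).symm
  have key : ∀ w, w ≠ a → w ≠ b → w ≠ c → w ≠ d → swap (swap a c b) d (swap a c w) = w := by
    intro w wa wb wc wd
    rw [swap_apply_of_ne_of_ne wa wc, swap_apply_of_ne_of_ne _ wd]
    rw [← swap_apply_of_ne_of_ne wa wc]
    exact fun h => wb ((swap a c).injective h)
  refine ⟨swap (swap a c b) d * swap a c, ?_, ?_, ?_, ?_⟩
  · exact key o ha.1 hb.1 hc.1 hd.1
  · exact key i ha.2 hb.2 hc.2 hd.2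
  · rw [Perm.mul_apply, swap_apply_left, swap_apply_of_ne_of_ne h1.symm hcd]
  · rw [Perm.mul_apply, swap_apply_left]
end perms

/-- A group `P` with a surjection onto the symmetric group, inside `G`. -/
structure Pre (G Ω : Type*) [Group G] where
  P : Subgroup G
  f : G → Perm Ω
  f_mul : ∀ g ∈ P, ∀ h ∈ P, f (g * h) = f g * f h
  f_surj : ∀ σ : Perm Ω, ∃ g ∈ P, f g = σ
  o : Ω
  i : Ω
  hoi : o ≠ i

namespace Pre
variable {G Ω : Type*} [Group G] (S : Pre G Ω)

theorem f_one : S.f 1 = 1 := by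
  have := S.f_mul 1 (one_mem _) 1 (one_mem _)
  rw [mul_one] at this
  exact mul_left_cancel (a := S.f 1) (by rw [mul_one]; exact this.symm)

theorem f_inv {g : G} (hg : g ∈ S.P) : S.f g⁻¹ = (S.f g)⁻¹ := by
  have := S.f_mul g hg g⁻¹ (inv_mem hg)
  rw [mul_inv_cancel, f_one] at this
  exact (inv_eq_of_mul_eq_one_right this.symm).symm

theorem f_conj {g h : G} (hg : g ∈ S.P) (hh : h ∈ S.P) :
    S.f (g * h * g⁻¹) = S.f g * S.f h * (S.f g)⁻¹ := by
  rw [S.f_mul _ (mul_mem hg hh) _ (inv_mem hg), S.f_mul _ hg _ hh, S.f_inv hg]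

/-- Pull-back of a subgroup of the symmetric group. -/
def pb (K : Subgroup (Perm Ω)) : Subgroup G where
  carrier := {g | g ∈ S.P ∧ S.f g ∈ K}
  one_mem' := ⟨one_mem _, by rw [f_one]; exact one_mem _⟩
  mul_mem' := by
    rintro a b ⟨ha, ha'⟩ ⟨hb, hb'⟩
    exact ⟨mul_mem ha hb, by rw [S.f_mul _ ha _ hb]; exact mul_mem ha' hb'⟩
  inv_mem' := by
    rintro a ⟨ha, ha'⟩
    exact ⟨inv_mem ha, by rw [S.f_inv ha]; exact inv_mem ha'⟩

/-- Image in the symmetric group. -/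
def im (M : Subgroup G) : Subgroup (Perm Ω) where
  carrier := {σ | ∃ g ∈ M, g ∈ S.P ∧ S.f g = σ}
  one_mem' := ⟨1, one_mem _, one_mem _, S.f_one⟩
  mul_mem' := by
    rintro _ _ ⟨a, ha, ha', rfl⟩ ⟨b, hb, hb', rfl⟩
    exact ⟨a * b, mul_mem ha hb, mul_mem ha' hb', S.f_mul _ ha' _ hb'⟩
  inv_mem' := by
    rintro _ ⟨a, ha, ha', rfl⟩
    exact ⟨a⁻¹, inv_mem ha, inv_mem ha', S.f_inv ha'⟩

/-- kernel -/
def Q : Subgroup G := S.pb ⊥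
/-- point stabiliser -/
def H : Subgroup G := S.pb (stabilizer (Perm Ω) S.o)
/-- stabiliser of a point -/
def st (c : Ω) : Subgroup G := S.pb (stabilizer (Perm Ω) c)
/-- two-point stabiliser -/
def B : Subgroup G := S.H ⊓ S.st S.i
/-- normaliser of the two-point stabiliser -/
def N : Subgroup G := nm S.B

theorem mem_Q {g : G} : g ∈ S.Q ↔ g ∈ S.P ∧ S.f g = 1 := Iff.rfl
theorem mem_H {g : G} : g ∈ S.H ↔ g ∈ S.P ∧ S.f g S.o = S.o := Iff.rfl
theorem mem_st {g : G} {c : Ω} : g ∈ S.st c ↔ g ∈ S.P ∧ S.f g c = c := Iff.rfl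
theorem mem_B {g : G} : g ∈ S.B ↔ g ∈ S.P ∧ S.f g S.o = S.o ∧ S.f g S.i = S.i := by
  constructor
  · rintro ⟨h1, h2⟩
    exact ⟨h1.1, h1.2, h2.2⟩
  · rintro ⟨h1, h2, h3⟩
    exact ⟨⟨h1, h2⟩, ⟨h1, h3⟩⟩

theorem Q_le_B : S.Q ≤ S.B := by
  intro g hg
  rw [mem_Q] at hg
  rw [mem_B, hg.2]
  exact ⟨hg.1, rfl, rfl⟩

theorem B_le_H : S.B ≤ S.H := inf_le_left
theorem H_le_P : S.H ≤ S.P := fun _ h => h.1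
theorem B_le_P : S.B ≤ S.P := S.B_le_H.trans S.H_le_P
theorem Q_le_P : S.Q ≤ S.P := fun _ h => h.1

theorem P_nm_Q : S.P ≤ nm S.Q := by
  rw [le_nm]
  intro g hg k hk
  rw [mem_Q] at hk ⊢
  refine ⟨mul_mem (mul_mem hg hk.1) (inv_mem hg), ?_⟩
  rw [S.f_conj hg hk.1, hk.2]; simp

theorem mem_of_f {M : Subgroup G} (hM : S.Q ≤ M) {g : G} (hg : g ∈ S.P) (h : S.f g ∈ S.im M) :
    g ∈ M := by
  obtain ⟨m, hm, hmP, e⟩ := h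
  have h1 : m⁻¹ * g ∈ S.Q := by
    rw [mem_Q]
    refine ⟨mul_mem (inv_mem hmP) hg, ?_⟩
    rw [S.f_mul _ (inv_mem hmP) _ hg, S.f_inv hmP, e, inv_mul_cancel]
  have := mul_mem hm (hM h1)
  rwa [mul_inv_cancel_left] at this

theorem im_of_B {M : Subgroup G} (hM : S.B ≤ M) (σ : Perm Ω) (h1 : σ S.o = S.o) (h2 : σ S.i = S.i) :
    σ ∈ S.im M := by
  obtain ⟨g, hg, rfl⟩ := S.f_surj σ
  exact ⟨g, hM (S.mem_B.2 ⟨hg, h1, h2⟩), hg, rfl⟩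

theorem moves [DecidableEq Ω] {t : G} (ht : t ∈ S.B) (htQ : t ∉ S.Q) :
    ∃ c, S.f t c ≠ c ∧ c ≠ S.o ∧ c ≠ S.i ∧ S.f t c ≠ S.o ∧ S.f t c ≠ S.i := by
  rw [mem_B] at ht
  obtain ⟨c, hc⟩ : ∃ c, S.f t c ≠ c := by
    by_contra! h
    exact htQ (S.mem_Q.2 ⟨ht.1, Equiv.ext h⟩)
  have h1 : c ≠ S.o := by rintro rfl; exact hc ht.2.1
  have h2 : c ≠ S.i := by rintro rfl; exact hc ht.2.2
  exact ⟨c, hc, h1, h2, fun h => h1 ((S.f t).injective (h.trans ht.2.1.symm)),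
    fun h => h2 ((S.f t).injective (h.trans ht.2.2.symm))⟩

theorem gen_H [DecidableEq Ω] {M : Subgroup G} (hB : S.B ≤ M) {t : G} (ht : t ∈ S.B) (htQ : t ∉ S.Q)
    (h : ∀ g ∈ S.H, g * t * g⁻¹ ∈ M) : S.H ≤ M := by
  obtain ⟨c, h1, h2, h3, h4, h5⟩ := S.moves ht htQ
  have htB := S.mem_B.1 ht
  have key : swap S.i c ∈ S.im M := by
    refine perm_swap htB.2.2 h3 h1 ?_ ?_
    · exact S.im_of_B hB _ (Equiv.swap_apply_of_ne_of_ne h4.symm h2.symm)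
        (Equiv.swap_apply_of_ne_of_ne h5.symm h3.symm)
    · obtain ⟨g, hg, e⟩ := S.f_surj (swap S.i c)
      refine ⟨g * t * g⁻¹, h g (S.mem_H.2 ⟨hg, ?_⟩), mul_mem (mul_mem hg htB.1) (inv_mem hg), ?_⟩
      · rw [e, Equiv.swap_apply_of_ne_of_ne S.hoi h2.symm]
      · rw [S.f_conj hg htB.1, e]
  intro g hg
  rw [mem_H] at hg
  exact S.mem_of_f (S.Q_le_B.trans hB) hg.1
    (perm_gen_H S.hoi h2 h3 (S.im_of_B hB) key _ hg.2)

theorem gen_P [DecidableEq Ω] {M : Subgroup G} (hB : S.B ≤ M) {t : G} (ht : t ∈ S.B) (htQ : t ∉ S.Q)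
    (h : ∀ g ∈ S.P, g * t * g⁻¹ ∈ M) : S.P ≤ M := by
  have hH := S.gen_H hB ht htQ (fun g hg => h g (S.H_le_P hg))
  obtain ⟨c, h1, h2, h3, h4, h5⟩ := S.moves ht htQ
  have htB := S.mem_B.1 ht
  have key : swap S.o c ∈ S.im M := by
    refine perm_swap htB.2.1 h2 h1 ?_ ?_
    · exact S.im_of_B hB _ (Equiv.swap_apply_of_ne_of_ne h4.symm h2.symm)
        (Equiv.swap_apply_of_ne_of_ne h5.symm h3.symm)
    · obtain ⟨g, hg, e⟩ := S.f_surj (swap S.o c)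
      refine ⟨g * t * g⁻¹, h g hg, mul_mem (mul_mem hg htB.1) (inv_mem hg), ?_⟩
      rw [S.f_conj hg htB.1, e]
  intro g hg
  refine S.mem_of_f (S.Q_le_B.trans hB) hg (perm_gen_P h2 ?_ key _)
  intro σ hσ
  obtain ⟨g, hg, rfl⟩ := S.f_surj σ
  exact ⟨g, hH (S.mem_H.2 ⟨hg, hσ⟩), hg, rfl⟩

theorem gen_P' [DecidableEq Ω] {M : Subgroup G} (hH : S.H ≤ M) {r : G} (hr : r ∈ S.P) (hrM : r ∈ M)
    (hf : S.f r = swap S.o S.i) : S.P ≤ M := by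
  intro g hg
  refine S.mem_of_f (S.Q_le_B.trans (S.B_le_H.trans hH)) hg (perm_gen_P S.hoi.symm ?_ ?_ _)
  · intro σ hσ
    obtain ⟨g, hg, rfl⟩ := S.f_surj σ
    exact ⟨g, hH (S.mem_H.2 ⟨hg, hσ⟩), hg, rfl⟩
  · exact ⟨r, hrM, hr, hf⟩

theorem swap_mem_N [DecidableEq Ω] {r : G} (hr : r ∈ S.P) (hf : S.f r = swap S.o S.i) : r ∈ S.N := by
  have key : ∀ r ∈ S.P, S.f r = swap S.o S.i → cj r S.B ≤ S.B := by
    intro r hr hf g hg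
    have := S.mem_B.1 (mem_cj.1 hg)
    have hgP : g ∈ S.P := by
      have := mul_mem (mul_mem hr this.1) (inv_mem hr)
      simpa [mul_assoc] using this
    have e := S.f_conj (inv_mem hr) hgP
    rw [inv_inv, S.f_inv hr, hf] at e
    obtain ⟨_, h1, h2⟩ := this
    rw [e] at h1 h2
    rw [mem_B]
    refine ⟨hgP, ?_, ?_⟩
    · simp [Perm.mul_apply, Equiv.swap_apply_eq_iff] at h2
      exact h2
    · simp [Perm.mul_apply, Equiv.swap_apply_eq_iff] at h1
      exact h1
  refine mem_nm.2 (le_antisymm (key r hr hf) ?_)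
  rw [le_cj]
  refine key _ (inv_mem hr) ?_
  rw [S.f_inv hr, hf, Equiv.swap_inv]

end Pre

namespace Pre
variable {G Ω : Type*} [Group G] (S : Pre G Ω) [DecidableEq Ω]

theorem T_trans {T : Subgroup G} (hTB : T ≤ S.B) (hBT : S.B ≤ nm T) (hTQ : ¬ T ≤ S.Q)
    {a b : Ω} (ha : S.o ≠ a ∧ S.i ≠ a) (hb : S.o ≠ b ∧ S.i ≠ b) : ∃ t ∈ T, S.f t a = b := by
  by_cases hab : a = b
  · exact ⟨1, one_mem _, by rw [S.f_one, hab]; rfl⟩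
  obtain ⟨t, htT, htQ⟩ := SetLike.not_le_iff_exists.1 hTQ
  obtain ⟨c, h1, h2, h3, h4, h5⟩ := S.moves (hTB htT) htQ
  obtain ⟨σ, s1, s2, s3, s4⟩ := perm_two_trans h1.symm hab ⟨h2.symm, h3.symm⟩ ⟨h4.symm, h5.symm⟩ ha hb
  obtain ⟨g, hg, rfl⟩ := S.f_surj σ
  have hgB : g ∈ S.B := S.mem_B.2 ⟨hg, s1, s2⟩
  refine ⟨g * t * g⁻¹, nm_conj (hBT hgB) htT, ?_⟩
  rw [S.f_conj hg (S.B_le_P (hTB htT)), Perm.mul_apply, Perm.mul_apply,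
    Perm.inv_eq_iff_eq.2 s3.symm, s4]

theorem f_pow {g : G} (hg : g ∈ S.P) (k : ℕ) : S.f (g ^ k) = S.f g ^ k := by
  induction k with
  | zero => simp [S.f_one]
  | succ k ih => rw [pow_succ, pow_succ, S.f_mul _ (pow_mem hg k) _ hg, ih]

theorem T_cube {T : Subgroup G} (hTP : T ≤ S.P) (h2 : IsPGroup 2 T) {t : G} (ht : t ∈ T)
    (h3 : S.f t ^ 3 = 1) : S.f t = 1 := by
  obtain ⟨k, hk⟩ := h2 ⟨t, ht⟩
  have hk' : t ^ 2 ^ k = 1 := congrArg Subtype.val hk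
  have h4 : S.f t ^ 2 ^ k = 1 := by rw [← S.f_pow (hTP ht), hk', S.f_one]
  have d1 := orderOf_dvd_of_pow_eq_one h3
  have d2 := orderOf_dvd_of_pow_eq_one h4
  have : Nat.Coprime 3 (2 ^ k) := Nat.Coprime.pow_right _ (by norm_num)
  rw [← orderOf_eq_one_iff]
  exact Nat.eq_one_of_dvd_coprimes this d1 d2

variable [Fintype Ω]

theorem exists_third (hcard : Fintype.card Ω = 4 ∨ Fintype.card Ω = 6) :
    ∃ c d, S.o ≠ c ∧ S.i ≠ c ∧ S.o ≠ d ∧ S.i ≠ d ∧ c ≠ d := by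
  have h1 : ({S.o, S.i} : Finset Ω).card = 2 := Finset.card_pair S.hoi
  have h2 : 1 < (({S.o, S.i} : Finset Ω)ᶜ).card := by
    rw [Finset.card_compl]; omega
  obtain ⟨c, hc, d, hd, hcd⟩ := Finset.one_lt_card.1 h2
  simp only [Finset.mem_compl, Finset.mem_insert, Finset.mem_singleton, not_or] at hc hd
  exact ⟨c, d, Ne.symm hc.1, Ne.symm hc.2, Ne.symm hd.1, Ne.symm hd.2, hcd⟩

theorem T_free (hcard : Fintype.card Ω = 4 ∨ Fintype.card Ω = 6)
    {T : Subgroup G} (hTB : T ≤ S.B) (hBT : S.B ≤ nm T) (h2 : IsPGroup 2 T)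
    {c : Ω} (hc : S.o ≠ c ∧ S.i ≠ c) {t : G} (ht : t ∈ T) (htc : S.f t c = c) : t ∈ S.Q := by
  have htB := S.mem_B.1 (hTB ht)
  have hTP := hTB.trans S.B_le_P
  refine S.mem_Q.2 ⟨htB.1, ?_⟩
  by_contra hne
  rcases perm_free hcard S.hoi hc.1.symm hc.2.symm htB.2.1 htB.2.2 htc hne with h3 | h3
  · exact hne (S.T_cube hTP h2 ht h3)
  · obtain ⟨d, f, hdf, d1, d2, d3, f1, f2, f3, e⟩ := h3
    obtain ⟨b, hb, eb⟩ := S.f_surj (swap c d)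
    have hbB : b ∈ S.B := by
      rw [mem_B, eb]
      exact ⟨hb, Equiv.swap_apply_of_ne_of_ne hc.1 d1.symm,
        Equiv.swap_apply_of_ne_of_ne hc.2 d2.symm⟩
    have h4 : t * (b * t * b⁻¹) ∈ T := mul_mem ht (nm_conj (hBT hbB) ht)
    have h5 : S.f (t * (b * t * b⁻¹)) = swap f d * swap f c := by
      rw [S.f_mul _ (hTP ht) _ (hTP (nm_conj (hBT hbB) ht)), S.f_conj hb (hTP ht), eb, e,
        perm_conj_swap, Equiv.swap_apply_right, Equiv.swap_apply_of_ne_of_ne f3 hdf.symm,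
        Equiv.swap_comm d f, Equiv.swap_comm c f]
    have h6 := Equiv.Perm.isThreeCycle_swap_mul_swap_same hdf.symm f3 d3
    have h7 := S.T_cube hTP h2 h4 (by rw [h5, ← h6.orderOf, pow_orderOf_eq_one])
    rw [h5] at h7
    have := h6.orderOf
    rw [h7, orderOf_one] at this
    omega

theorem card_delta : Nat.card {c : Ω // S.o ≠ c ∧ S.i ≠ c} = Fintype.card Ω - 2 := by
  rw [Nat.card_eq_fintype_card, Fintype.card_subtype]
  have : (Finset.univ.filter fun c => S.o ≠ c ∧ S.i ≠ c) = ({S.o, S.i} : Finset Ω)ᶜ := by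
    ext c
    simp [not_or, eq_comm]
  rw [this, Finset.card_compl, Finset.card_pair S.hoi]

theorem relIndex_st {T : Subgroup G} (hTB : T ≤ S.B) (hBT : S.B ≤ nm T) (hTQ : ¬ T ≤ S.Q)
    {c : Ω} (hc : S.o ≠ c ∧ S.i ≠ c) : (S.st c).relIndex T = Fintype.card Ω - 2 := by
  rw [← S.card_delta]
  have hTP := hTB.trans S.B_le_P
  have hmem : ∀ t : T, S.o ≠ S.f t c ∧ S.i ≠ S.f t c := by
    intro t
    have h := S.mem_B.1 (hTB t.2)
    exact ⟨fun h' => hc.1 ((S.f t).injective (h.2.1.trans h')),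
      fun h' => hc.2 ((S.f t).injective (h.2.2.trans h'))⟩
  have hiff : ∀ s t : T, s⁻¹ * t ∈ (S.st c).subgroupOf T ↔ S.f s c = S.f t c := by
    intro s t
    rw [Subgroup.mem_subgroupOf, mem_st]
    have hs := hTP s.2
    have ht := hTP t.2
    have : S.f ((s⁻¹ * t : T) : G) = (S.f s)⁻¹ * S.f t := by
      rw [Subgroup.coe_mul, Subgroup.coe_inv, S.f_mul _ (inv_mem hs) _ ht, S.f_inv hs]
    rw [this, Perm.mul_apply, Perm.inv_eq_iff_eq]
    exact ⟨fun h => h.2.symm, fun h => ⟨hTP (s⁻¹ * t).2, h.symm⟩⟩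
  let F : (T ⧸ (S.st c).subgroupOf T) → {c : Ω // S.o ≠ c ∧ S.i ≠ c} :=
    Quotient.lift (fun t : T => ⟨S.f t c, hmem t⟩) (by
      intro s t hst
      have h1 := QuotientGroup.leftRel_apply.1 hst
      rw [Subtype.mk.injEq]
      exact (hiff s t).1 h1)
  refine Nat.card_congr (Equiv.ofBijective F ⟨?_, ?_⟩)
  · intro x y hxy
    obtain ⟨s, rfl⟩ := QuotientGroup.mk_surjective x
    obtain ⟨t, rfl⟩ := QuotientGroup.mk_surjective y
    rw [mk_eq_iff, hiff]
    exact congrArg Subtype.val hxy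
  · rintro ⟨d, hd⟩
    obtain ⟨t, ht, e⟩ := S.T_trans hTB hBT hTQ hc hd
    exact ⟨QuotientGroup.mk ⟨t, ht⟩, Subtype.ext e⟩

theorem p_eq_two (hcard : Fintype.card Ω = 4 ∨ Fintype.card Ω = 6)
    {p : ℕ} [hp : Fact p.Prime] [Finite G] {T : Subgroup G} (hTB : T ≤ S.B)
    (hBT : S.B ≤ nm T) (hTQ : ¬ T ≤ S.Q) (hT : IsPGroup p T) : p = 2 := by
  obtain ⟨c, d, h1, h2, -⟩ := S.exists_third hcard
  have h3 := S.relIndex_st hTB hBT hTQ ⟨h1, h2⟩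
  have h4 : (S.st c).relIndex T ∣ Nat.card T := Subgroup.relIndex_dvd_card _ _
  obtain ⟨k, hk⟩ := (IsPGroup.iff_card).1 hT
  rw [h3, hk] at h4
  have h5 : 2 ∣ p ^ k := dvd_trans (by rcases hcard with h | h <;> rw [h] <;> norm_num) h4
  have h6 := Nat.prime_two.dvd_of_dvd_pow h5
  exact ((Nat.prime_dvd_prime_iff_eq Nat.prime_two hp.out).1 h6).symm

theorem relIndex_Q (hcard : Fintype.card Ω = 4 ∨ Fintype.card Ω = 6)
    {T : Subgroup G} (hTB : T ≤ S.B) (hBT : S.B ≤ nm T) (hTQ : ¬ T ≤ S.Q)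
    (h2 : IsPGroup 2 T) : S.Q.relIndex T = Fintype.card Ω - 2 := by
  obtain ⟨c, d, h1, h3, -⟩ := S.exists_third hcard
  rw [← S.relIndex_st hTB hBT hTQ ⟨h1, h3⟩, ← Subgroup.inf_relIndex_right,
    ← Subgroup.inf_relIndex_right (S.st c)]
  congr 1
  ext t
  constructor
  · rintro ⟨a, b⟩
    refine ⟨S.mem_st.2 ⟨a.1, ?_⟩, b⟩
    rw [(S.mem_Q.1 a).2]; rfl
  · rintro ⟨a, b⟩
    exact ⟨S.T_free hcard hTB hBT h2 ⟨h1, h3⟩ b (S.mem_st.1 a).2, b⟩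

theorem H_inf_N (hcard : Fintype.card Ω = 4 ∨ Fintype.card Ω = 6) :
    S.H ⊓ S.N = S.B := by
  apply le_antisymm
  · rintro h ⟨hH, hN⟩
    have hH := S.mem_H.1 hH
    refine S.mem_B.2 ⟨hH.1, hH.2, ?_⟩
    by_contra hne
    have hco : S.o ≠ S.f h S.i := fun h' => S.hoi ((S.f h).injective (hH.2.trans h'))
    obtain ⟨d, hd⟩ : ∃ d, S.o ≠ d ∧ S.i ≠ d ∧ d ≠ S.f h S.i := by
      obtain ⟨c, d, h1, h2, h3, h4, h5⟩ := S.exists_third hcard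
      by_cases hc : c = S.f h S.i
      · exact ⟨d, h3, h4, fun e => h5 (hc.trans e.symm)⟩
      · exact ⟨c, h1, h2, hc⟩
    obtain ⟨b, hb, eb⟩ := S.f_surj (swap (S.f h S.i) d)
    have hbB : b ∈ S.B := by
      rw [mem_B, eb]
      exact ⟨hb, Equiv.swap_apply_of_ne_of_ne hco hd.1,
        Equiv.swap_apply_of_ne_of_ne (Ne.symm hne) hd.2.1⟩
    have h1 := S.mem_B.1 (nm_conj (inv_mem hN) hbB)
    have h2 := h1.2.2
    rw [S.f_conj (inv_mem hH.1) hb, S.f_inv hH.1, inv_inv, eb, Perm.mul_apply, Perm.mul_apply,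
      Equiv.swap_apply_left, Perm.inv_eq_iff_eq] at h2
    exact hd.2.2 h2
  · exact le_inf S.B_le_H (le_nm_self _)

theorem relIndex_N_H (hcard : Fintype.card Ω = 4 ∨ Fintype.card Ω = 6) :
    S.N.relIndex S.H = Fintype.card Ω - 1 := by
  rw [← Subgroup.inf_relIndex_left, S.H_inf_N hcard]
  have hc : Nat.card {c : Ω // S.o ≠ c} = Fintype.card Ω - 1 := by
    rw [Nat.card_eq_fintype_card, Fintype.card_subtype]
    have : (Finset.univ.filter fun c => S.o ≠ c) = ({S.o} : Finset Ω)ᶜ := by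
      ext c
      simp [eq_comm]
    rw [this, Finset.card_compl, Finset.card_singleton]
  rw [← hc]
  have hmem : ∀ t : S.H, S.o ≠ S.f t S.i := by
    intro t h'
    exact S.hoi ((S.f t).injective ((S.mem_H.1 t.2).2.trans h'))
  have hiff : ∀ s t : S.H, s⁻¹ * t ∈ S.B.subgroupOf S.H ↔ S.f s S.i = S.f t S.i := by
    intro s t
    rw [Subgroup.mem_subgroupOf, mem_B]
    have hs := S.H_le_P s.2
    have ht := S.H_le_P t.2
    have : S.f ((s⁻¹ * t : S.H) : G) = (S.f s)⁻¹ * S.f t := by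
      rw [Subgroup.coe_mul, Subgroup.coe_inv, S.f_mul _ (inv_mem hs) _ ht, S.f_inv hs]
    have h2 := (S.mem_H.1 (s⁻¹ * t).2)
    constructor
    · intro h
      have := this ▸ h.2.2
      rw [Perm.mul_apply, Perm.inv_eq_iff_eq] at this
      exact this.symm
    · intro h
      refine ⟨h2.1, h2.2, ?_⟩
      rw [this, Perm.mul_apply, Perm.inv_eq_iff_eq, h]
  let F : (S.H ⧸ S.B.subgroupOf S.H) → {c : Ω // S.o ≠ c} :=
    Quotient.lift (fun t : S.H => ⟨S.f t S.i, hmem t⟩) (by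
      intro s t hst
      have h1 := QuotientGroup.leftRel_apply.1 hst
      rw [Subtype.mk.injEq]
      exact (hiff s t).1 h1)
  refine Nat.card_congr (Equiv.ofBijective F ⟨?_, ?_⟩)
  · intro x y hxy
    obtain ⟨s, rfl⟩ := QuotientGroup.mk_surjective x
    obtain ⟨t, rfl⟩ := QuotientGroup.mk_surjective y
    rw [mk_eq_iff, hiff]
    exact congrArg Subtype.val hxy
  · rintro ⟨d, hd⟩
    obtain ⟨g, hg, e⟩ := S.f_surj (swap S.i d)
    refine ⟨QuotientGroup.mk ⟨g, S.mem_H.2 ⟨hg, ?_⟩⟩, Subtype.ext ?_⟩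
    · rw [e, Equiv.swap_apply_of_ne_of_ne S.hoi hd]
    · change S.f g S.i = d
      rw [e, Equiv.swap_apply_left]
end Pre

/-- The complete local data. -/
structure Loc (G Ω : Type*) [Group G] [Fintype Ω] extends Pre G Ω where
  e : G
  he : e ∈ nm toPre.B
  hee : e * e ∈ P
  core : ∀ K ≤ P, P ≤ nm K → e ∈ nm K → K = ⊥
  gen : ∀ M : Subgroup G, P ≤ M → e ∈ M → M = ⊤
  solv : Group.IsSolvable toPre.B
  hcard : Fintype.card Ω = 4 ∨ Fintype.card Ω = 6

instance fact2 : Fact (Nat.Prime 2) := ⟨Nat.prime_two⟩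

namespace Loc
variable {G Ω : Type*} [Group G] [Finite G] [Fintype Ω] [DecidableEq Ω] (S : Loc G Ω)

/-- `O_2` of the edge stabiliser -/
noncomputable def E : Subgroup G := Op 2 S.B
/-- `O_2` of the kernel -/
noncomputable def R : Subgroup G := Op 2 S.Q
/-- central involutions of `R` -/
noncomputable def V : Subgroup G := om S.R
/-- central involutions of `E` -/
noncomputable def Z : Subgroup G := om S.E
/-- `n - 2` -/
def q (_ : Loc G Ω) : ℕ := Fintype.card Ω - 2

theorem q_cases : S.q = 2 ∨ S.q = 4 := by
  unfold q
  rcases S.hcard with h | h <;> rw [h]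
  · left; rfl
  · right; rfl

theorem E_le_B : S.E ≤ S.B := Op_le _ _
theorem N_nm_E : S.N ≤ nm S.E := nm_Op 2 S.B
theorem B_le_N : S.B ≤ S.N := le_nm_self _
theorem B_nm_E : S.B ≤ nm S.E := S.B_le_N.trans S.N_nm_E
theorem P_nm_R : S.P ≤ nm S.R := S.P_nm_Q.trans (nm_Op 2 S.Q)
theorem P_nm_V : S.P ≤ nm S.V := S.P_nm_R.trans (nm_om _)
theorem N_nm_Z : S.N ≤ nm S.Z := S.N_nm_E.trans (nm_om _)
theorem e_mem_N : S.e ∈ S.N := S.he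
theorem R_le_Q : S.R ≤ S.Q := Op_le _ _
theorem V_le_R : S.V ≤ S.R := om_le _
theorem Z_le_E : S.Z ≤ S.E := om_le _
theorem E2 : IsPGroup 2 S.E := (Op_spec 2 S.B).2.2
theorem R2 : IsPGroup 2 S.R := (Op_spec 2 S.Q).2.2

theorem B_nm_Q : S.B ≤ nm S.Q := S.B_le_P.trans S.P_nm_Q

theorem R_eq : S.R = S.E ⊓ S.Q := by
  apply le_antisymm
  · refine le_inf (Op_mono 2 S.Q_le_B S.B_nm_Q) (Op_le _ _)
  · apply Op_max
    refine ⟨inf_le_right, ?_, S.E2.to_le inf_le_left⟩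
    exact (le_inf (S.Q_le_B.trans S.B_nm_E) (le_nm_self _)).trans nm_inf

theorem R_le_E : S.R ≤ S.E := by rw [R_eq]; exact inf_le_left

theorem not_le_R {T : Subgroup G} (hT : T ≤ S.E) : ¬ T ≤ S.R ↔ ¬ T ≤ S.Q := by
  rw [R_eq]
  constructor
  · intro h h'; exact h (le_inf hT h')
  · intro h h'; exact h (h'.trans inf_le_right)

theorem notMem_R {t : G} (ht : t ∈ S.E) : t ∉ S.R ↔ t ∉ S.Q := by
  rw [R_eq]
  constructor
  · intro h h'; exact h ⟨ht, h'⟩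
  · intro h h'; exact h h'.2

theorem core' {K : Subgroup G} (hK : K ≤ S.P) (hH : S.H ≤ nm K) (hN : S.N ≤ nm K) : K = ⊥ := by
  refine S.core K hK ?_ (hN S.e_mem_N)
  obtain ⟨r, hr, er⟩ := S.f_surj (swap S.o S.i)
  exact S.gen_P' hH hr (hN (S.swap_mem_N hr er)) er

theorem H_sup_N : S.H ⊔ S.N = ⊤ := by
  refine S.gen _ ?_ ((le_sup_right : S.N ≤ _) S.e_mem_N)
  obtain ⟨r, hr, er⟩ := S.f_surj (swap S.o S.i)
  exact S.gen_P' le_sup_left hr ((le_sup_right : S.N ≤ _) (S.swap_mem_N hr er)) er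

theorem Op_bot_of_le (p : ℕ) [Fact p.Prime] (h : Op p S.B ≤ S.Q) : Op p S.B = ⊥ := by
  have h1 : Op p S.B = Op p S.Q := by
    apply le_antisymm
    · exact Op_max _ _ ⟨h, S.Q_le_B.trans (Op_spec p S.B).2.1, (Op_spec p S.B).2.2⟩
    · exact Op_mono p S.Q_le_B S.B_nm_Q
  refine S.core _ (h.trans S.Q_le_P) ?_ (nm_Op p S.B S.he)
  rw [h1]
  exact S.P_nm_Q.trans (nm_Op p _)

theorem Op_odd (p : ℕ) [Fact p.Prime] (hp : p ≠ 2) : Op p S.B = ⊥ := by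
  apply S.Op_bot_of_le
  by_contra h
  exact hp (S.p_eq_two S.hcard (Op_le p S.B) (Op_spec p S.B).2.1 h (Op_spec p S.B).2.2)

theorem B_ne_bot : S.B ≠ ⊥ := by
  intro hb
  obtain ⟨c, d, h1, h2, h3, h4, h5⟩ := S.exists_third S.hcard
  obtain ⟨g, hg, eg⟩ := S.f_surj (swap c d)
  have : g ∈ S.B := by
    rw [Pre.mem_B, eg]
    exact ⟨hg, Equiv.swap_apply_of_ne_of_ne h1 h3, Equiv.swap_apply_of_ne_of_ne h2 h4⟩
  rw [hb, Subgroup.mem_bot] at this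
  rw [this, S.f_one] at eg
  exact h5 (Equiv.swap_eq_one_iff.1 eg.symm)

theorem E_not_le_Q : ¬ S.E ≤ S.Q := by
  intro h
  have := S.solv
  obtain ⟨p, hp, hne⟩ := solv_Op S.B_ne_bot
  by_cases h2 : p = 2
  · subst h2
    exact hne (S.Op_bot_of_le 2 h)
  · exact hne (S.Op_odd p h2)

theorem E_not_le_R : ¬ S.E ≤ S.R := (S.not_le_R le_rfl).2 S.E_not_le_Q

theorem relR' {K : Subgroup G} (hK : K ≤ S.E) (hB : S.B ≤ nm K) (hR : ¬ K ≤ S.R) :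
    S.R.relIndex K = S.q := by
  rw [not_le_R _ hK] at hR
  have := S.relIndex_Q S.hcard (hK.trans S.E_le_B) hB hR (S.E2.to_le hK)
  rw [q, ← this, R_eq, ← Subgroup.inf_relIndex_right, ← Subgroup.inf_relIndex_right S.Q]
  congr 1
  rw [inf_right_comm, inf_eq_right.2 hK, inf_comm]

theorem relR : S.R.relIndex S.E = S.q := S.relR' le_rfl S.B_nm_E S.E_not_le_R

theorem q_pos : S.q ≠ 0 := by rcases S.q_cases with h | h <;> rw [h] <;> norm_num

theorem irr' {K : Subgroup G} (hK : K ≤ S.E) (hB : S.B ≤ nm K) (hR : ¬ K ≤ S.R) {t : G}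
    (ht : t ∈ S.E) : ∃ a ∈ K, ∃ r ∈ S.R, t = a * r := by
  refine full_of_relIndex hK ?_ ?_ ht
  · rw [S.relR' hK hB hR, S.relR]
  · rw [S.relR]; exact S.q_pos

theorem irr {K : Subgroup G} (hK : K ≤ S.E) (hB : S.B ≤ nm K) (hR : ¬ K ≤ S.R) :
    K ⊔ S.R = S.E := by
  refine le_antisymm (sup_le hK S.R_le_E) ?_
  intro t ht
  obtain ⟨a, ha, r, hr, rfl⟩ := S.irr' hK hB hR ht
  exact Subgroup.mul_mem_sup ha hr

/-- Generation of `P`. -/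
theorem genP {M T : Subgroup G} (hB : S.B ≤ M) (hT : T ≤ S.E) (hR : ¬ T ≤ S.R)
    (h : ∀ g ∈ S.P, cj g T ≤ M) : S.P ≤ M := by
  rw [not_le_R _ hT] at hR
  obtain ⟨t, htT, htQ⟩ := SetLike.not_le_iff_exists.1 hR
  exact S.gen_P hB (S.E_le_B (hT htT)) htQ fun g hg => h g hg (conj_mem_cj htT)

theorem genH {M T : Subgroup G} (hB : S.B ≤ M) (hT : T ≤ S.E) (hR : ¬ T ≤ S.R)
    (h : ∀ g ∈ S.H, cj g T ≤ M) : S.H ≤ M := by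
  rw [not_le_R _ hT] at hR
  obtain ⟨t, htT, htQ⟩ := SetLike.not_le_iff_exists.1 hR
  exact S.gen_H hB (S.E_le_B (hT htT)) htQ fun g hg => h g hg (conj_mem_cj htT)

theorem cj_e_B : cj S.e S.B = S.B := mem_nm.1 S.he

theorem ee_mem_B : S.e * S.e ∈ nm S.R := S.P_nm_R S.hee

theorem cj_ee_R : cj S.e (cj S.e S.R) = S.R := by
  rw [← cj_mul]; exact mem_nm.1 S.ee_mem_B

theorem cj_ee_V : cj S.e (cj S.e S.V) = S.V := by
  rw [← cj_mul]; exact mem_nm.1 (S.P_nm_V S.hee)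

theorem B_nm_cj_R : S.B ≤ nm (cj S.e S.R) := by
  rw [nm_cj, ← S.cj_e_B]
  exact cj_mono (S.B_le_P.trans S.P_nm_R)

theorem RR_B : S.B ≤ nm (S.R ⊓ cj S.e S.R) :=
  (le_inf (S.B_le_P.trans S.P_nm_R) S.B_nm_cj_R).trans nm_inf

theorem RR_e : S.e ∈ nm (S.R ⊓ cj S.e S.R) := by
  rw [mem_nm, cj_inf, S.cj_ee_R, inf_comm]

theorem cent_le_nm {A K : Subgroup G} (h : ∀ a ∈ A, ∀ k ∈ K, a * k = k * a) : A ≤ nm K := by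
  intro a ha
  exact mem_nm.2 (cj_eq_of_central fun k hk => (h a ha k hk).symm)

/-- case `Z ≰ R` -/
theorem caseZ (h : ¬ S.Z ≤ S.R) : S.R ⊓ cj S.e S.R = ⊥ := by
  refine S.core _ ((inf_le_left.trans S.R_le_Q).trans S.Q_le_P) ?_ S.RR_e
  refine S.genP S.RR_B S.Z_le_E h fun g hg => ?_
  apply cent_le_nm
  intro a ha k hk
  have hk1 : k ∈ S.R := hk.1
  have hk2 : k ∈ cj g S.R := by rw [mem_nm.1 (S.P_nm_R hg)]; exact hk1
  have h1 := (mem_om.1 (mem_cj.1 ha)).2.1 _ (S.R_le_E (mem_cj.1 hk2))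
  have h5 : g * (g⁻¹ * a * g * (g⁻¹ * k * g)) * g⁻¹ = g * (g⁻¹ * k * g * (g⁻¹ * a * g)) * g⁻¹ := by
    rw [h1]
  simpa [mul_assoc] using h5

theorem Z_le_V (h : S.Z ≤ S.R) : S.Z ≤ S.V := by
  intro z hz
  obtain ⟨h1, h2, h3⟩ := mem_om.1 hz
  exact mem_om.2 ⟨h hz, fun k hk => h2 k (S.R_le_E hk), h3⟩

theorem mem_Z {v : G} (hv : v ∈ S.V) (h : ∀ t ∈ S.E, v * t = t * v) : v ∈ S.Z :=
  mem_om.2 ⟨S.R_le_E (S.V_le_R hv), h, (mem_om.1 hv).2.2⟩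

theorem V_comm {v r : G} (hv : v ∈ S.V) (hr : r ∈ S.R) : v * r = r * v := (mem_om.1 hv).2.1 r hr

theorem E_ne_bot : S.E ≠ ⊥ := by
  intro h
  exact S.E_not_le_R (by rw [h]; exact bot_le)

theorem Z_ne_bot : S.Z ≠ ⊥ := om_ne_bot S.E_ne_bot S.E2

end Loc

section EAsec
variable {G : Type*} [Group G]

/-- elementary abelian 2-subgroups -/
def EA (A : Subgroup G) : Prop := (∀ a ∈ A, ∀ b ∈ A, a * b = b * a) ∧ ∀ a ∈ A, a * a = 1

theorem conj_rel {g a b : G} (h : g⁻¹ * a * g * (g⁻¹ * b * g) = g⁻¹ * b * g * (g⁻¹ * a * g)) :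
    a * b = b * a := by
  have h5 : g * (g⁻¹ * a * g * (g⁻¹ * b * g)) * g⁻¹ = g * (g⁻¹ * b * g * (g⁻¹ * a * g)) * g⁻¹ := by
    rw [h]
  simpa [mul_assoc] using h5

theorem EA.cj {A : Subgroup G} (h : EA A) (g : G) : EA (cj g A) := by
  refine ⟨fun a ha b hb => conj_rel (h.1 _ (mem_cj.1 ha) _ (mem_cj.1 hb)), fun a ha => ?_⟩
  have h1 := h.2 _ (mem_cj.1 ha)
  have h5 : g * (g⁻¹ * a * g * (g⁻¹ * a * g)) * g⁻¹ = g * 1 * g⁻¹ := by rw [h1]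
  simpa [mul_assoc] using h5

theorem EA_om (K : Subgroup G) : EA (om K) :=
  ⟨fun _ ha b hb => (mem_om.1 ha).2.1 b (om_le _ hb), fun _ ha => (mem_om.1 ha).2.2⟩

theorem le_nm_of_cj_le {K J : Subgroup G} (h : ∀ g ∈ K, cj g J ≤ J) : K ≤ nm J := by
  rw [le_nm]
  intro g hg k hk
  exact h g hg (conj_mem_cj hk)
end EAsec

namespace Loc
variable {G Ω : Type*} [Group G] [Finite G] [Fintype Ω] [DecidableEq Ω] (S : Loc G Ω)

theorem exists_A : ∃ A ≤ S.E, EA A ∧ ¬ A ≤ S.R ∧ ∀ A' ≤ S.E, EA A' → Nat.card A' ≤ Nat.card A := by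
  obtain ⟨A0, ⟨h1, h2⟩, hmax⟩ := Set.exists_max_image {A : Subgroup G | A ≤ S.E ∧ EA A}
    (fun T : Subgroup G => Nat.card T) (Set.toFinite _) ⟨S.Z, S.Z_le_E, EA_om _⟩
  by_contra! hc
  have hall : ∀ A ≤ S.E, EA A → Nat.card A = Nat.card A0 → A ≤ S.R := by
    intro A hA hE hcA
    by_contra hR
    obtain ⟨A', k1, k2, k3⟩ := hc A hA hE hR
    have := hmax A' ⟨k1, k2⟩
    rw [hcA] at k3
    exact absurd this (not_le.2 k3)
  let J : Subgroup G := ⨆ A : {A : Subgroup G // A ≤ S.E ∧ EA A ∧ Nat.card A = Nat.card A0}, A.1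
  have hJ : J ≤ S.R := iSup_le fun A => hall A.1 A.2.1 A.2.2.1 A.2.2.2
  have hmem : ∀ A : Subgroup G, A ≤ S.E → EA A → Nat.card A = Nat.card A0 → A ≤ J := by
    intro A a1 a2 a3
    exact le_iSup (fun A : {A : Subgroup G // A ≤ S.E ∧ EA A ∧ Nat.card A = Nat.card A0} => A.1)
      ⟨A, a1, a2, a3⟩
  have hJb : J = ⊥ := by
    refine S.core' (hJ.trans (S.R_le_Q.trans S.Q_le_P)) ?_ ?_
    · apply le_nm_of_cj_le
      intro g hg
      change cj g (⨆ A : _, _) ≤ J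
      rw [cj_iSup]
      refine iSup_le fun A => hmem _ ?_ (A.2.2.1.cj g) (by rw [card_cj, A.2.2.2])
      have := cj_mono (g := g) (hall A.1 A.2.1 A.2.2.1 A.2.2.2)
      rw [mem_nm.1 (S.P_nm_R (S.H_le_P hg))] at this
      exact this.trans S.R_le_E
    · apply le_nm_of_cj_le
      intro g hg
      change cj g (⨆ A : _, _) ≤ J
      rw [cj_iSup]
      refine iSup_le fun A => hmem _ ?_ (A.2.2.1.cj g) (by rw [card_cj, A.2.2.2])
      have := cj_mono (g := g) A.2.1
      rwa [mem_nm.1 (S.N_nm_E hg)] at this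
  have hA0 : A0 = ⊥ := by
    have := hmem A0 h1 h2 rfl
    rw [hJb] at this
    exact le_bot_iff.1 this
  have h3 := hmax S.Z ⟨S.Z_le_E, EA_om _⟩
  rw [hA0, Subgroup.card_bot] at h3
  exact S.Z_ne_bot ((Subgroup.card_le_one_iff_eq_bot _).1 h3)

theorem V_bound {A : Subgroup G} (hAE : A ≤ S.E) (hA : EA A)
    (hmax : ∀ A' ≤ S.E, EA A' → Nat.card A' ≤ Nat.card A) :
    (S.V ⊓ A).relIndex S.V ≤ S.R.relIndex A := by
  have hn : A ⊓ S.R ≤ nm S.V := inf_le_right.trans ((S.R_le_Q.trans S.Q_le_P).trans S.P_nm_V)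
  have hfull : ∀ w ∈ S.V ⊔ (A ⊓ S.R), ∃ a ∈ S.V, ∃ r ∈ A ⊓ S.R, w = a * r :=
    fun w hw => mem_sup_nm hn hw
  have hEA : EA (S.V ⊔ (A ⊓ S.R)) := by
    constructor
    · intro a ha b hb
      obtain ⟨v, hv, r, hr, rfl⟩ := hfull a ha
      obtain ⟨w, hw, s, hs, rfl⟩ := hfull b hb
      have c1 : Commute v w := S.V_comm hv (S.V_le_R hw)
      have c2 : Commute v s := S.V_comm hv hs.2
      have c3 : Commute w r := S.V_comm hw hr.2
      have c4 : Commute r s := hA.1 _ hr.1 _ hs.1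
      exact (c1.mul_right c2).mul_left (c3.symm.mul_right c4)
    · intro a ha
      obtain ⟨v, hv, r, hr, rfl⟩ := hfull a ha
      have c2 : v * r = r * v := S.V_comm hv hr.2
      have s1 : v * v = 1 := (mem_om.1 hv).2.2
      have s2 : r * r = 1 := hA.2 _ hr.1
      calc v * r * (v * r) = v * (r * v) * r := by group
        _ = (v * v) * (r * r) := by rw [← c2]; group
        _ = 1 := by rw [s1, s2, one_mul]
  have h1 := hmax _ (sup_le (S.V_le_R.trans S.R_le_E) (inf_le_left.trans hAE)) hEA
  rw [card_relIndex (le_sup_right : A ⊓ S.R ≤ S.V ⊔ (A ⊓ S.R)),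
    card_relIndex (inf_le_left : A ⊓ S.R ≤ A)] at h1
  have h2 := Nat.le_of_mul_le_mul_right h1 Nat.card_pos
  rw [← relIndex_of_full le_sup_left hfull, Subgroup.inf_relIndex_left] at h2
  refine le_trans (le_of_eq ?_) h2
  rw [← Subgroup.inf_relIndex_right (A ⊓ S.R)]
  congr 1
  rw [inf_assoc, inf_eq_right.2 S.V_le_R, inf_comm]

theorem relI_ne (A B : Subgroup G) : A.relIndex B ≠ 0 :=
  Subgroup.index_ne_zero_of_finite (H := A.subgroupOf B)

theorem relZ_le : S.Z.relIndex S.V ≤ S.q := by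
  obtain ⟨A, hAE, hA, hAR, hmax⟩ := S.exists_A
  have hb := S.V_bound hAE hA hmax
  have hn : A ≤ nm S.R := hAE.trans (S.E_le_B.trans (S.B_le_P.trans S.P_nm_R))
  have hfull : ∀ w ∈ A ⊔ S.R, ∃ a ∈ A, ∃ r ∈ S.R, w = a * r := fun w hw => mem_sup_nm' hn hw
  have h1 : S.R.relIndex A = S.R.relIndex (A ⊔ S.R) := relIndex_of_full le_sup_left hfull
  have h2 := Subgroup.relIndex_mul_relIndex S.R (A ⊔ S.R) S.E le_sup_right (sup_le hAE S.R_le_E)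
  rw [← h1, S.relR] at h2
  have h3 : S.R.relIndex A ≠ 1 := fun h => hAR (Subgroup.relIndex_eq_one.1 h)
  have hcomm : ∀ v ∈ S.V ⊓ A, A ⊔ S.R ≤ Subgroup.centralizer {v} := by
    intro v hv
    refine sup_le ?_ ?_
    · intro a ha
      rw [Subgroup.mem_centralizer_singleton_iff]
      exact hA.1 a ha v hv.2
    · intro r hr
      rw [Subgroup.mem_centralizer_singleton_iff]
      exact (S.V_comm hv.1 hr).symm
  by_cases hE : S.E ≤ A ⊔ S.R
  · have h4 : S.V ⊓ A ≤ S.Z := by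
      intro v hv
      refine S.mem_Z hv.1 fun t ht => ?_
      have := hcomm v hv (hE ht)
      rw [Subgroup.mem_centralizer_singleton_iff] at this
      exact this.symm
    have h5 := Subgroup.relIndex_le_of_le_left (L := S.V) h4 (relI_ne _ _)
    refine h5.trans (hb.trans ?_)
    refine Nat.le_of_dvd (Nat.pos_of_ne_zero S.q_pos) ⟨_, h2.symm⟩
  · have h4 : (A ⊔ S.R).relIndex S.E ≠ 1 := fun h => hE (Subgroup.relIndex_eq_one.1 h)
    have h5 : S.q = 4 ∧ S.R.relIndex A = 2 ∧ (A ⊔ S.R).relIndex S.E = 2 := by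
      generalize S.R.relIndex A = a at *
      generalize (A ⊔ S.R).relIndex S.E = b at *
      rcases S.q_cases with hq | hq <;> rw [hq] at h2 ⊢
      · have ha : a ≤ 2 := Nat.le_of_dvd (by norm_num) ⟨_, h2.symm⟩
        interval_cases a <;> omega
      · have ha : a ≤ 4 := Nat.le_of_dvd (by norm_num) ⟨_, h2.symm⟩
        interval_cases a <;> omega
    obtain ⟨hq, hA2, hF2⟩ := h5
    have hnB : ¬ S.B ≤ nm (A ⊔ S.R) := by
      intro hB
      have := S.irr (sup_le hAE S.R_le_E) hB (fun h => hAR (le_sup_left.trans h))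
      rw [sup_assoc, sup_idem] at this
      exact hE this.ge
    obtain ⟨b, hbB, hb2⟩ : ∃ b ∈ S.B, ¬ cj b (A ⊔ S.R) ≤ A ⊔ S.R := by
      by_contra! h
      exact hnB (le_nm_of_cj_le h)
    have hbV : cj b S.V = S.V := mem_nm.1 (S.P_nm_V (S.B_le_P hbB))
    have hbE : cj b S.E = S.E := mem_nm.1 (S.B_nm_E hbB)
    have hL := Subgroup.relIndex_mul_relIndex (A ⊔ S.R) ((A ⊔ S.R) ⊔ cj b (A ⊔ S.R)) S.E
      le_sup_left (sup_le (sup_le hAE S.R_le_E)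
        (by rw [← hbE]; exact cj_mono (sup_le hAE S.R_le_E)))
    rw [hF2] at hL
    have h6 : (A ⊔ S.R).relIndex ((A ⊔ S.R) ⊔ cj b (A ⊔ S.R)) ≠ 1 :=
      fun h => hb2 (le_sup_right.trans (Subgroup.relIndex_eq_one.1 h))
    have h7 : ((A ⊔ S.R) ⊔ cj b (A ⊔ S.R)).relIndex S.E = 1 := by
      generalize (A ⊔ S.R).relIndex ((A ⊔ S.R) ⊔ cj b (A ⊔ S.R)) = a at *
      generalize ((A ⊔ S.R) ⊔ cj b (A ⊔ S.R)).relIndex S.E = b at *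
      have ha : a ≤ 2 := Nat.le_of_dvd (by norm_num) ⟨_, hL.symm⟩
      interval_cases a <;> omega
    have h8 := Subgroup.relIndex_eq_one.1 h7
    have h9 : (S.V ⊓ A) ⊓ cj b (S.V ⊓ A) ≤ S.Z := by
      intro v hv
      have hv1 : v ∈ S.V ⊓ A := hv.1
      have hv2 : v ∈ cj b (S.V ⊓ A) := hv.2
      refine S.mem_Z hv1.1 fun t ht => ?_
      have h10 : (A ⊔ S.R) ⊔ cj b (A ⊔ S.R) ≤ Subgroup.centralizer {v} := by
        refine sup_le (hcomm v hv1) ?_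
        intro t ht
        have := hcomm _ (mem_cj.1 hv2) (mem_cj.1 ht)
        rw [Subgroup.mem_centralizer_singleton_iff] at this ⊢
        exact conj_rel this
      have := h10 (h8 ht)
      rw [Subgroup.mem_centralizer_singleton_iff] at this
      exact this.symm
    have h10 : (cj b (S.V ⊓ A)).relIndex S.V = (S.V ⊓ A).relIndex S.V := by
      conv_lhs => rw [← hbV]
      rw [relIndex_cj, hbV]
    have h11 := Subgroup.relIndex_le_of_le_left (L := S.V) h9 (relI_ne _ _)
    have h12 := Subgroup.relIndex_inf_le (H := S.V ⊓ A) (K := cj b (S.V ⊓ A)) (L := S.V)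
    rw [h10] at h12
    rw [hA2] at hb
    rw [hq]
    calc _ ≤ _ := h11
      _ ≤ _ := h12
      _ ≤ 2 * 2 := Nat.mul_le_mul hb hb
end Loc

namespace Loc
variable {G Ω : Type*} [Group G] [Finite G] [Fintype Ω] [DecidableEq Ω] (S : Loc G Ω)

theorem fH {g h : G} (hg : g ∈ S.H) (hh : h ∈ S.H) : S.f (g * h) S.i = S.f g (S.f h S.i) := by
  rw [S.f_mul _ (S.H_le_P hg) _ (S.H_le_P hh)]; rfl

theorem f_ne_o {h : G} (hh : h ∈ S.H) : S.o ≠ S.f h S.i := by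
  intro h1
  have h2 := (S.mem_H.1 hh).2
  exact S.hoi ((S.f h).injective (h2.trans h1))

theorem cjZ_eq {g h : G} (hg : g ∈ S.H) (hh : h ∈ S.H) (e : S.f g S.i = S.f h S.i) :
    cj g S.Z = cj h S.Z := by
  have h1 : h⁻¹ * g ∈ S.B := by
    have h2 := mul_mem (inv_mem hh) hg
    refine S.mem_B.2 ⟨S.H_le_P h2, (S.mem_H.1 h2).2, ?_⟩
    rw [S.fH (inv_mem hh) hg, e, S.f_inv (S.H_le_P hh)]
    simp
  have h2 := mem_nm.1 (S.N_nm_Z (S.B_le_N h1))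
  conv_rhs => rw [← h2, ← cj_mul, mul_inv_cancel_left]

/-- the intersection of all lines -/
noncomputable def X : Subgroup G := ⨅ h : S.H, cj (h : G) S.Z

theorem X_le {h : G} (hh : h ∈ S.H) : S.X ≤ cj h S.Z := iInf_le (fun h : S.H => cj (h : G) S.Z) ⟨h, hh⟩

theorem X_le_Z : S.X ≤ S.Z := by
  have := S.X_le (one_mem S.H)
  rwa [cj_one] at this

theorem H_nm_X : S.H ≤ nm S.X := by
  apply le_nm_of_cj_le
  intro g hg
  refine le_iInf fun h => ?_
  have := cj_mono (g := g) (S.X_le (mul_mem (inv_mem hg) h.2))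
  rwa [← cj_mul, mul_inv_cancel_left] at this

theorem inter_aux {k v : G} (hk : k ∈ S.H) (hne : S.f k S.i ≠ S.i) (h1 : v ∈ S.Z)
    (h2 : v ∈ cj k S.Z) : v ∈ S.X := by
  refine Subgroup.mem_iInf.2 fun l => ?_
  by_cases hl : S.f l S.i = S.i
  · rw [S.cjZ_eq l.2 (one_mem S.H) (by rw [hl, S.f_one]; rfl), cj_one]; exact h1
  · obtain ⟨t, ht, et⟩ := S.T_trans S.E_le_B S.B_nm_E S.E_not_le_Q
      ⟨S.f_ne_o hk, hne.symm⟩ ⟨S.f_ne_o l.2, fun h => hl h.symm⟩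
    have htH := S.B_le_H (S.E_le_B ht)
    rw [← S.cjZ_eq (mul_mem htH hk) l.2 (by rw [S.fH htH hk, et]), cj_mul, mem_cj]
    have h3 := (mem_om.1 h1).2.1 t ht
    rw [mul_assoc, h3, inv_mul_cancel_left]
    exact h2

theorem inter {h k v : G} (hh : h ∈ S.H) (hk : k ∈ S.H) (hne : S.f h S.i ≠ S.f k S.i)
    (h1 : v ∈ cj h S.Z) (h2 : v ∈ cj k S.Z) : v ∈ S.X := by
  have h3 : h⁻¹ * v * h ∈ S.X := by
    refine S.inter_aux (mul_mem (inv_mem hh) hk) ?_ (mem_cj.1 h1) ?_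
    · rw [S.fH (inv_mem hh) hk, S.f_inv (S.H_le_P hh)]
      intro h
      rw [Perm.inv_eq_iff_eq] at h
      exact hne h.symm
    · have := conj_mem_cj (g := h⁻¹) h2
      rw [← cj_mul] at this
      simpa using this
  rw [← mem_cj, mem_nm.1 (S.H_nm_X hh)] at h3
  exact h3

theorem Z_not_le_X (hZ : S.Z ≤ S.R) : ¬ S.Z ≤ S.X := by
  intro h
  have h1 := le_antisymm h S.X_le_Z
  refine S.Z_ne_bot (S.core' (hZ.trans (S.R_le_Q.trans S.Q_le_P)) ?_ S.N_nm_Z)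
  rw [h1]; exact S.H_nm_X

theorem cjZ_not_le_X (hZ : S.Z ≤ S.R) {h : G} (hh : h ∈ S.H) : ¬ cj h S.Z ≤ S.X := by
  intro h1
  rw [cj_le, mem_nm.1 (S.H_nm_X (inv_mem hh))] at h1
  exact S.Z_not_le_X hZ h1

theorem cjZ_le_V (hZ : S.Z ≤ S.R) {h : G} (hh : h ∈ S.H) : cj h S.Z ≤ S.V := by
  have := cj_mono (g := h) (S.Z_le_V hZ)
  rwa [mem_nm.1 (S.P_nm_V (S.H_le_P hh))] at this

theorem cent_X {t h v : G} (ht : t ∈ S.E) (htR : t ∉ S.R) (hh : h ∈ S.H) (hne : S.f h S.i ≠ S.i)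
    (hv : v ∈ cj h S.Z) (hc : v * t = t * v) : v ∈ S.X := by
  have htH := S.B_le_H (S.E_le_B ht)
  refine S.inter hh (mul_mem htH hh) ?_ hv ?_
  · rw [S.fH htH hh]
    intro h1
    exact (S.notMem_R ht).1 htR (S.T_free S.hcard S.E_le_B S.B_nm_E S.E2
      ⟨S.f_ne_o hh, hne.symm⟩ ht h1.symm)
  · rw [cj_mul, mem_cj, mul_assoc, hc, inv_mul_cancel_left]
    exact hv

/-- elements commuting with `g` modulo `X` -/
noncomputable def F (hZ : S.Z ≤ S.R) (g : G) : Subgroup G where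
  carrier := {v | v ∈ S.V ∧ g * v * g⁻¹ * v⁻¹ ∈ S.X}
  one_mem' := ⟨one_mem _, by simp [one_mem]⟩
  mul_mem' := by
    rintro v w ⟨hv, hv'⟩ ⟨hw, hw'⟩
    refine ⟨mul_mem hv hw, ?_⟩
    have h1 := S.V_comm hv (S.V_le_R (S.Z_le_V hZ (S.X_le_Z hw')))
    have h2 : g * (v * w) * g⁻¹ * (v * w)⁻¹
        = g * v * g⁻¹ * v⁻¹ * (v * (g * w * g⁻¹ * w⁻¹) * v⁻¹) := by group
    rw [h2, h1, mul_inv_cancel_right]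
    exact mul_mem hv' hw'
  inv_mem' := by
    rintro v ⟨hv, hv'⟩
    have h1 : v⁻¹ = v := inv_eq_of_mul_eq_one_right (mem_om.1 hv).2.2
    rw [h1]
    exact ⟨hv, hv'⟩

theorem F_a (hZ : S.Z ≤ S.R) (h2 : S.X.relIndex S.Z = 2) {g h : G} (hg : g ∈ S.H) (hh : h ∈ S.H)
    (hf : S.f g (S.f h S.i) = S.f h S.i) : cj h S.Z ≤ S.F hZ g := by
  have e1 : cj g (cj h S.Z) = cj h S.Z := by
    rw [← cj_mul]
    exact S.cjZ_eq (mul_mem hg hh) hh (by rw [S.fH hg hh, hf])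
  have e2 : S.X.relIndex (cj h S.Z) = 2 := by
    conv_lhs => rw [← mem_nm.1 (S.H_nm_X hh)]
    rw [relIndex_cj, h2]
  intro v hv
  refine ⟨S.cjZ_le_V hZ hh hv, ?_⟩
  have hgv : g * v * g⁻¹ ∈ cj h S.Z := by
    rw [← e1]; exact conj_mem_cj hv
  have hx : g * v * g⁻¹ ∈ S.X ↔ v ∈ S.X := by
    conv_lhs => rw [← mem_nm.1 (S.H_nm_X hg)]
    rw [mem_cj]; simp [mul_assoc]
  have := Subgroup.mul_mem_iff_of_index_two (H := S.X.subgroupOf (cj h S.Z)) e2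
    (a := ⟨g * v * g⁻¹, hgv⟩) (b := ⟨v⁻¹, inv_mem hv⟩)
  simp only [Subgroup.mem_subgroupOf, Subgroup.coe_mul] at this
  rw [this, hx, inv_mem_iff]

theorem F_b (hZ : S.Z ≤ S.R) {g h : G} (hg : g ∈ S.H) (hh : h ∈ S.H)
    (hF : cj h S.Z ≤ S.F hZ g) : S.f g (S.f h S.i) = S.f h S.i := by
  by_contra hne
  apply S.cjZ_not_le_X hZ (mul_mem hg hh)
  intro v hv
  refine S.inter (mul_mem hg hh) hh (by rwa [S.fH hg hh]) hv ?_
  rw [cj_mul] at hv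
  have hw := mem_cj.1 hv
  have h1 := (hF hw).2
  have h2 := mul_mem (S.X_le hh h1) hw
  simpa [mul_assoc] using h2

theorem line (c : Ω) (hc : c ≠ S.o) : ∃ h ∈ S.H, S.f h S.i = c := by
  obtain ⟨h, hh, e⟩ := S.f_surj (swap S.i c)
  refine ⟨h, S.mem_H.2 ⟨hh, ?_⟩, ?_⟩
  · rw [e, Equiv.swap_apply_of_ne_of_ne S.hoi hc.symm]
  · rw [e, Equiv.swap_apply_left]

theorem zeta_ne_two (hZ : S.Z ≤ S.R) (hq : S.q = 4) : S.X.relIndex S.Z ≠ 2 := by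
  intro h2
  have hc : Fintype.card Ω = 6 := by
    have := S.hcard
    unfold q at hq; omega
  have h5 : (Finset.univ.erase S.o).card = 5 := by
    rw [Finset.card_erase_of_mem (Finset.mem_univ _), Finset.card_univ, hc]
  let p := (Finset.equivFinOfCardEq h5).symm
  have hp : ∀ j, ((p j : Ω)) ≠ S.o := fun j => Finset.ne_of_mem_erase (p j).2
  have hpi : ∀ j k, j ≠ k → (p j : Ω) ≠ p k := fun j k hjk h => hjk (p.injective (Subtype.ext h))
  choose l hl el using fun j => S.line (p j) (hp j)
  have sw : ∀ j k, ∃ g ∈ S.H, S.f g = swap (p j : Ω) (p k) := by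
    intro j k
    obtain ⟨g, hg, e⟩ := S.f_surj (swap (p j : Ω) (p k))
    refine ⟨g, S.mem_H.2 ⟨hg, ?_⟩, e⟩
    rw [e, Equiv.swap_apply_of_ne_of_ne (hp j).symm (hp k).symm]
  have inF : ∀ j k m g, g ∈ S.H → S.f g = swap (p j : Ω) (p k) → m ≠ j → m ≠ k →
      cj (l m) S.Z ≤ S.F hZ g := by
    intro j k m g hg e h1 h2'
    refine S.F_a hZ h2 hg (hl m) ?_
    rw [el, e, Equiv.swap_apply_of_ne_of_ne (hpi _ _ h1) (hpi _ _ h2')]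
  have notF : ∀ j k g, g ∈ S.H → S.f g = swap (p j : Ω) (p k) → j ≠ k →
      ¬ cj (l j) S.Z ≤ S.F hZ g := by
    intro j k g hg e h1 h
    have := S.F_b hZ hg (hl j) h
    rw [el, e, Equiv.swap_apply_left] at this
    exact hpi _ _ h1.symm this
  obtain ⟨g, hg, eg⟩ := sw 3 4
  obtain ⟨g', hg', eg'⟩ := sw 2 3
  have a0 := inF 3 4 0 g hg eg (by decide) (by decide)
  have a1 := inF 3 4 1 g hg eg (by decide) (by decide)
  have a2 := inF 3 4 2 g hg eg (by decide) (by decide)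
  have b0 := inF 2 3 0 g' hg' eg' (by decide) (by decide)
  have b1 := inF 2 3 1 g' hg' eg' (by decide) (by decide)
  have a3 := notF 3 4 g hg eg (by decide)
  have b2 := notF 2 3 g' hg' eg' (by decide)
  have r1 : (cj (l 0) S.Z).relIndex S.V ≤ 4 := by
    have := S.relZ_le
    rw [hq] at this
    conv_lhs => rw [← mem_nm.1 (S.P_nm_V (S.H_le_P (hl 0)))]
    rwa [relIndex_cj]
  have r2 := Subgroup.relIndex_mul_relIndex (cj (l 0) S.Z) (S.F hZ g) S.V a0 (fun v hv => hv.1)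
  have r3 : (S.F hZ g).relIndex S.V ≠ 1 := fun h =>
    a3 ((S.cjZ_le_V hZ (hl 3)).trans (Subgroup.relIndex_eq_one.1 h))
  have r4 := Subgroup.relIndex_mul_relIndex (cj (l 0) S.Z) (cj (l 0) S.Z ⊔ cj (l 1) S.Z) (S.F hZ g)
    le_sup_left (sup_le a0 a1)
  have r5 : (cj (l 0) S.Z).relIndex (cj (l 0) S.Z ⊔ cj (l 1) S.Z) ≠ 1 := by
    intro h
    have h1 := (le_sup_right : cj (l 1) S.Z ≤ _).trans (Subgroup.relIndex_eq_one.1 h)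
    refine S.cjZ_not_le_X hZ (hl 1) fun v hv => S.inter (hl 0) (hl 1) ?_ (h1 hv) hv
    rw [el, el]
    exact hpi _ _ (by decide)
  have n1 := relI_ne (S.F hZ g) S.V
  have n2 := relI_ne (cj (l 0) S.Z) (cj (l 0) S.Z ⊔ cj (l 1) S.Z)
  have n3 := relI_ne (cj (l 0) S.Z ⊔ cj (l 1) S.Z) (S.F hZ g)
  have r6 : (cj (l 0) S.Z ⊔ cj (l 1) S.Z).relIndex (S.F hZ g) = 1 := by
    rw [← r4] at r2
    generalize (S.F hZ g).relIndex S.V = a at *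
    generalize (cj (l 0) S.Z).relIndex (cj (l 0) S.Z ⊔ cj (l 1) S.Z) = b at *
    generalize (cj (l 0) S.Z ⊔ cj (l 1) S.Z).relIndex (S.F hZ g) = c at *
    rw [← r2] at r1
    by_contra hc1
    have ha : 2 ≤ a := by omega
    have hb : 2 ≤ b := by omega
    have hcc : 2 ≤ c := by omega
    have : 2 * 2 * 2 ≤ b * c * a := Nat.mul_le_mul (Nat.mul_le_mul hb hcc) ha
    omega
  exact b2 ((a2.trans (Subgroup.relIndex_eq_one.1 r6)).trans (sup_le b0 b1))

theorem zeta_ne_one (hZ : S.Z ≤ S.R) : S.X.relIndex S.Z ≠ 1 := fun h =>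
  S.Z_not_le_X hZ (Subgroup.relIndex_eq_one.1 h)

/-- the centraliser of `t` in `V` is `Z` and `|V : Z| = q`. -/
theorem cent_aux (hZ : S.Z ≤ S.R) {t : G} (ht : t ∈ S.E) (htR : t ∉ S.R) :
    S.V ⊓ Subgroup.centralizer {t} ≤ S.Z ∧ S.Z.relIndex S.V = S.q := by
  obtain ⟨c, d, h1, h2, -⟩ := S.exists_third S.hcard
  obtain ⟨h, hh, eh⟩ := S.line c h1.symm
  set C := S.V ⊓ Subgroup.centralizer {t} with hC
  have hZC : S.Z ≤ C := by
    refine le_inf (S.Z_le_V hZ) fun z hz => ?_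
    rw [Subgroup.mem_centralizer_singleton_iff]
    exact (mem_om.1 hz).2.1 t ht
  have b1 : S.X.relIndex S.Z ≤ C.relIndex S.V := by
    have e2 : S.X.relIndex (cj h S.Z) = S.X.relIndex S.Z := by
      conv_lhs => rw [← mem_nm.1 (S.H_nm_X hh)]
      rw [relIndex_cj]
    rw [← e2]
    have e3 : C.relIndex (cj h S.Z) ≤ C.relIndex S.V :=
      Subgroup.relIndex_le_of_le_right (S.cjZ_le_V hZ hh) (relI_ne _ _)
    refine le_trans ?_ e3
    rw [← Subgroup.inf_relIndex_right C]
    refine Subgroup.relIndex_le_of_le_left ?_ (relI_ne _ _)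
    intro v hv
    have hv1 : v ∈ C := hv.1
    have hv2 := hv1.2
    have hv2 := Subgroup.mem_centralizer_singleton_iff.1 hv2
    exact S.cent_X ht htR hh (by rw [eh]; exact h2.symm) hv.2 hv2
  have b2 := Subgroup.relIndex_mul_relIndex S.Z C S.V hZC inf_le_left
  have b3 := S.relZ_le
  have b4 := S.zeta_ne_one hZ
  have b5 := S.zeta_ne_two hZ
  have n1 := relI_ne S.X S.Z
  have n2 := relI_ne S.Z C
  obtain ⟨k, hk⟩ := IsPGroup.iff_card.1 (S.R2.to_le S.V_le_R)
  have b6 : S.Z.relIndex S.V ∣ 2 ^ k := hk ▸ Subgroup.relIndex_dvd_card _ _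
  have b7 : S.Z.relIndex S.V ≠ 3 := by
    intro h3
    rw [h3] at b6
    have := Nat.Prime.dvd_of_dvd_pow Nat.prime_three b6
    omega
  have key : S.Z.relIndex C = 1 ∧ S.Z.relIndex S.V = S.q := by
    generalize S.X.relIndex S.Z = z at *
    generalize S.Z.relIndex C = a at *
    generalize C.relIndex S.V = b at *
    generalize S.Z.relIndex S.V = m at *
    have ha : a = 1 := by
      by_contra ha
      have ha2 : 2 ≤ a := by omega
      rcases S.q_cases with hq | hq
      · have := Nat.mul_le_mul ha2 (show 2 ≤ b by omega); omega
      · have := Nat.mul_le_mul ha2 (show 3 ≤ b by have := b5 hq; omega); omega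
    refine ⟨ha, ?_⟩
    rw [ha, one_mul] at b2
    rcases S.q_cases with hq | hq
    · omega
    · have := b5 hq; omega
  exact ⟨Subgroup.relIndex_eq_one.1 key.1, key.2⟩

end Loc

namespace Loc
variable {G Ω : Type*} [Group G] [Finite G] [Fintype Ω] [DecidableEq Ω] (S : Loc G Ω)

theorem exists_t : ∃ t ∈ S.E, t ∉ S.R := SetLike.not_le_iff_exists.1 S.E_not_le_R

theorem relV (hZ : S.Z ≤ S.R) : S.Z.relIndex S.V = S.q := by
  obtain ⟨t, ht, htR⟩ := S.exists_t
  exact (S.cent_aux hZ ht htR).2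

theorem cent (hZ : S.Z ≤ S.R) {t v : G} (ht : t ∈ S.E) (htR : t ∉ S.R) (hv : v ∈ S.V)
    (h : v * t = t * v) : v ∈ S.Z :=
  (S.cent_aux hZ ht htR).1 ⟨hv, Subgroup.mem_centralizer_singleton_iff.2 h⟩

theorem ne_i {h : G} (hh : h ∈ S.H) (hN : h ∉ S.N) : S.f h S.i ≠ S.i := fun e =>
  hN (S.B_le_N (S.mem_B.2 ⟨S.H_le_P hh, (S.mem_H.1 hh).2, e⟩))

theorem hnz (hZ : S.Z ≤ S.R) {h : G} (hh : h ∈ S.H) (hN : h ∉ S.N) : ¬ ⁅S.V, S.E⁆ ≤ cj h S.Z := by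
  intro hle
  obtain ⟨t, ht, htR⟩ := S.exists_t
  have htH := S.B_le_H (S.E_le_B ht)
  have hne := S.ne_i hh hN
  refine S.cjZ_not_le_X hZ (mul_mem htH hh) fun v hv => ?_
  refine S.inter hh (mul_mem htH hh) ?_ ?_ hv
  · rw [S.fH htH hh]
    intro h1
    exact (S.notMem_R ht).1 htR (S.T_free S.hcard S.E_le_B S.B_nm_E S.E2
      ⟨S.f_ne_o hh, hne.symm⟩ ht h1.symm)
  · rw [cj_mul] at hv
    have hw := mem_cj.1 hv
    have h1 := inv_mem (hle (Subgroup.commutator_mem_commutator (S.cjZ_le_V hZ hh hw) ht))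
    have h2 := mul_mem h1 hw
    rw [commutatorElement_inv, commutatorElement_def] at h2
    simpa [mul_assoc] using h2

theorem amal (hZ : S.Z ≤ S.R) : Amal S.H S.N S.E S.R S.V S.Z S.q where
  hq := by rcases S.q_cases with h | h <;> omega
  hRH := S.H_le_P.trans S.P_nm_R
  hVH := S.H_le_P.trans S.P_nm_V
  hEN := S.N_nm_E
  hZN := S.N_nm_Z
  hBN := by rw [S.H_inf_N S.hcard]; exact le_rfl
  hEH := S.E_le_B.trans S.B_le_H
  hEN' := S.E_le_B.trans S.B_le_N
  htr := by
    intro h hh hN h' hh' hN'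
    obtain ⟨t, ht, et⟩ := S.T_trans S.E_le_B S.B_nm_E S.E_not_le_Q
      ⟨S.f_ne_o hh, (S.ne_i hh hN).symm⟩ ⟨S.f_ne_o hh', (S.ne_i hh' hN').symm⟩
    have htH := S.B_le_H (S.E_le_B ht)
    refine ⟨t, ht, S.B_le_N ?_⟩
    have h1 := mul_mem htH hh
    have h2 := mul_mem (inv_mem h1) hh'
    refine S.mem_B.2 ⟨S.H_le_P h2, (S.mem_H.1 h2).2, ?_⟩
    rw [S.fH (inv_mem h1) hh', ← et, ← S.fH htH hh, S.f_inv (S.H_le_P h1)]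
    simp
  hRE := S.R_le_E
  hVR := S.V_le_R
  hVc := fun v hv r hr => S.V_comm hv hr
  hVs := fun v hv => (mem_om.1 hv).2.2
  hZV := S.Z_le_V hZ
  hZc := fun v hv r hr => (mem_om.1 hv).2.1 r hr
  cent := fun t ht htR v hv h => S.cent hZ ht htR hv h
  relR := S.relR
  relV := S.relV hZ
  hcore := by
    intro K hK hN hH
    refine S.core' (hK.trans (S.E_le_B.trans S.B_le_P)) ?_ hN
    exact S.genH (S.B_le_N.trans hN) le_rfl S.E_not_le_R hH
  hirr := by
    intro K hK hB hR
    rw [S.H_inf_N S.hcard] at hB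
    exact S.irr hK hB hR
  hnz := fun h hh hN => S.hnz hZ hh hN
  hcard := by
    rw [S.relIndex_N_H S.hcard, q]
    have := S.hcard
    omega
  hgen := S.H_sup_N

theorem V_not_le (hZ : S.Z ≤ S.R) : ¬ S.V ≤ cj S.e S.R := by
  intro hVe
  obtain ⟨n, hn, hnV⟩ := (S.amal hZ).exists
  have hVE : S.V ≤ S.E := S.V_le_R.trans S.R_le_E
  have hT : ∀ m ∈ S.N, cj m S.V ≤ S.E := by
    intro m hm
    have := cj_mono (g := m) hVE
    rwa [mem_nm.1 (S.N_nm_E hm)] at this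
  have hTB : ∀ m ∈ S.N, S.B ≤ nm (cj m S.V) := by
    intro m hm
    have h1 : cj m S.B = S.B := mem_nm.1 hm
    rw [nm_cj, ← h1]
    exact cj_mono (S.B_le_P.trans S.P_nm_V)
  -- the inverse conjugate is not inside `R`
  have hn' : ¬ cj n⁻¹ S.V ≤ S.R := by
    intro h
    rw [cj_le, inv_inv] at h
    exact hnV h
  have hVZ : ¬ S.V ≤ S.Z := by
    intro h
    have h1 := Subgroup.relIndex_eq_one.2 h
    rw [S.relV hZ] at h1
    rcases S.q_cases with h | h <;> omega
  have hTR : ¬ cj n S.V ≤ S.R := by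
    intro h
    obtain ⟨t, ht, htR⟩ := SetLike.not_le_iff_exists.1 hn'
    refine hVZ fun v hv => S.cent hZ (hT _ (inv_mem hn) ht) htR hv ?_
    have h1 : n * t * n⁻¹ ∈ S.V := by
      have := mem_cj.1 ht; rwa [inv_inv] at this
    have h2 : n * v * n⁻¹ ∈ S.R := h (conj_mem_cj hv)
    have h3 := S.V_comm h1 h2
    have h4 : n⁻¹⁻¹ * v * n⁻¹ * (n⁻¹⁻¹ * t * n⁻¹) = n⁻¹⁻¹ * t * n⁻¹ * (n⁻¹⁻¹ * v * n⁻¹) := by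
      rw [inv_inv]; exact h3.symm
    exact conj_rel h4
  -- factorisation
  have hfac : ∀ r ∈ S.R, ∃ v ∈ S.V, ∃ s ∈ cj n S.R, r = v * s := by
    intro r hr
    have h1 : n⁻¹ * r * n ∈ S.E := by
      have := conj_mem_cj (g := n⁻¹) (S.R_le_E hr)
      rw [mem_nm.1 (S.N_nm_E (inv_mem hn)), inv_inv] at this
      exact this
    obtain ⟨a, ha, s, hs, e⟩ := S.irr' (hT _ (inv_mem hn)) (hTB _ (inv_mem hn)) hn' h1
    have ha' : n * a * n⁻¹ ∈ S.V := by
      have := mem_cj.1 ha; rwa [inv_inv] at this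
    refine ⟨_, ha', n * s * n⁻¹, conj_mem_cj hs, ?_⟩
    have : r = n * (n⁻¹ * r * n) * n⁻¹ := by group
    rw [this, e]; group
  have hcomm : ∀ t ∈ cj n S.V, ∀ r ∈ S.R, t * r * t⁻¹ * r⁻¹ ∈ S.V := by
    intro t ht r hr
    obtain ⟨v, hv, s, hs, rfl⟩ := hfac r hr
    have h1 : t * s = s * t := conj_rel (S.V_comm (mem_cj.1 ht) (mem_cj.1 hs))
    have htV : t * v * t⁻¹ ∈ S.V := by
      have := conj_mem_cj (g := t) hv
      rwa [mem_nm.1 (S.P_nm_V (S.B_le_P (S.E_le_B (hT n hn ht))))] at this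
    have h2 : t * (v * s) * t⁻¹ * (v * s)⁻¹ = t * v * t⁻¹ * v⁻¹ := by
      calc t * (v * s) * t⁻¹ * (v * s)⁻¹ = t * v * t⁻¹ * (t * s) * t⁻¹ * s⁻¹ * v⁻¹ := by group
        _ = t * v * t⁻¹ * (s * t) * t⁻¹ * s⁻¹ * v⁻¹ := by rw [h1]
        _ = t * v * t⁻¹ * v⁻¹ := by group
    rw [h2]
    exact mul_mem htV (inv_mem hv)
  set K := S.R ⊓ cj S.e S.R with hK
  have hVK : S.V ≤ K := le_inf S.V_le_R hVe
  have hPK : S.P ≤ nm K := by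
    refine S.genP S.RR_B (hT n hn) hTR fun g hg => ?_
    rw [le_nm]
    intro a ha k hk
    have hkR : k ∈ S.R := hk.1
    have hkR' : g⁻¹ * k * g ∈ S.R := by
      rw [← mem_cj, mem_nm.1 (S.P_nm_R hg)]; exact hkR
    have h1 := hcomm _ (mem_cj.1 ha) _ hkR'
    have h2 : a * k * a⁻¹ * k⁻¹ ∈ S.V := by
      have := conj_mem_cj (g := g) h1
      rw [mem_nm.1 (S.P_nm_V hg)] at this
      convert this using 1
      group
    have h3 := mul_mem (hVK h2) hk
    simpa using h3
  have hKb : K = ⊥ := S.core K ((inf_le_left.trans S.R_le_Q).trans S.Q_le_P) hPK S.RR_e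
  apply hVZ
  rw [hKb] at hVK
  exact hVK.trans bot_le

/-- The group theoretic main theorem. -/
theorem main {M : Subgroup G} (hMQ : M ≤ S.Q) (hB : S.B ≤ nm M) (he : S.e ∈ nm M)
    (hM : ∀ g ∈ S.P, M ≤ cj (g * S.e) S.Q) : M = ⊥ := by
  by_contra hne
  have hMB : M ≤ S.B := hMQ.trans S.Q_le_B
  have hsB := S.solv
  have hsM : Group.IsSolvable M := Group.isSolvable_of_isSolvable_injective (Subgroup.inclusion_injective hMB)
  obtain ⟨p, hp, hD⟩ := solv_Op hne
  by_cases hp2 : p = 2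
  swap
  · apply hD
    have := Op_mono p hMB hB
    rw [S.Op_odd p hp2] at this
    exact le_bot_iff.1 this
  subst hp2
  apply hD
  have hDe : S.e ∈ nm (Op 2 M) := nm_Op 2 M he
  let S2 : Subgroup G := ⨅ g : S.P, cj ((g : G) * S.e) S.Q
  have hP2 : S.P ≤ nm S2 := by
    apply le_nm_of_cj_le
    intro g hg
    refine le_iInf fun h => ?_
    have h1 : S2 ≤ cj (((⟨g⁻¹ * h, mul_mem (inv_mem hg) h.2⟩ : S.P) : G) * S.e) S.Q :=
      iInf_le (fun g : S.P => cj ((g : G) * S.e) S.Q) _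
    have := cj_mono (g := g) h1
    rw [← cj_mul, ← mul_assoc, mul_inv_cancel_left] at this
    exact this
  have hQ2 : ∀ g ∈ S.P, S2 ≤ cj (g * S.e) S.Q := fun g hg =>
    iInf_le (fun g : S.P => cj ((g : G) * S.e) S.Q) ⟨g, hg⟩
  have hM2 : M ≤ S2 := le_iInf fun g => hM g g.2
  have hS2P : cj S.e S.Q ≤ S.B := by
    have := cj_mono (g := S.e) S.Q_le_B
    rwa [S.cj_e_B] at this
  have hS2B : S2 ≤ S.B := by
    have := hQ2 1 (one_mem _)
    rw [one_mul] at this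
    exact this.trans hS2P
  have hD2 : ∀ g ∈ S.P, Op 2 M ≤ cj (g * S.e) S.R := by
    intro g hg
    refine (Op_mono 2 hM2 (hS2B.trans hB)).trans ?_
    have h1 : cj (g * S.e) S.Q ≤ nm S2 := by
      refine le_trans ?_ hP2
      rw [cj_mul]
      have := cj_mono (g := g) (hS2P.trans S.B_le_P)
      rwa [cj_self hg] at this
    have := Op_mono 2 (hQ2 g hg) h1
    rwa [← cj_Op] at this
  have hDe' : Op 2 M ≤ cj S.e S.R := by
    have := hD2 1 (one_mem _)
    rwa [one_mul] at this
  by_cases hZ : S.Z ≤ S.R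
  · refine S.core _ ((Op_le 2 M).trans (hMB.trans S.B_le_P)) ?_ hDe
    have hT : cj S.e S.V ≤ S.E := by
      have := cj_mono (g := S.e) (S.V_le_R.trans S.R_le_E)
      rwa [mem_nm.1 (S.N_nm_E S.e_mem_N)] at this
    have hTR : ¬ cj S.e S.V ≤ S.R := by
      intro h
      have := cj_mono (g := S.e) h
      rw [S.cj_ee_V] at this
      exact S.V_not_le hZ this
    refine S.genP (hB.trans (nm_Op 2 M)) hT hTR fun g hg => ?_
    apply cent_le_nm
    intro a ha k hk
    have hk' := hD2 g hg hk
    rw [← cj_mul] at ha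
    exact conj_rel (S.V_comm (mem_cj.1 ha) (mem_cj.1 hk'))
  · have h1 : Op 2 M ≤ S.R := by
      have := cj_mono (g := S.e) hDe'
      rwa [S.cj_ee_R, mem_nm.1 hDe] at this
    have := le_inf h1 hDe'
    rw [S.caseZ hZ] at this
    exact le_bot_iff.1 this

end Loc

/-- the Klein four group in the symmetric group of degree four -/
def klein : Subgroup (Perm (Fin 4)) where
  carrier := {g | g * g = 1 ∧ Perm.sign g = 1}
  one_mem' := ⟨by simp, by simp⟩
  mul_mem' := by
    have : ∀ a b : Perm (Fin 4), (a * a = 1 ∧ Perm.sign a = 1) → (b * b = 1 ∧ Perm.sign b = 1) →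
        (a * b * (a * b) = 1 ∧ Perm.sign (a * b) = 1) := by decide +kernel
    intro a b ha hb
    exact this a b ha hb
  inv_mem' := by
    rintro a ⟨h1, h2⟩
    refine ⟨?_, by simp [h2]⟩
    rw [← mul_inv_rev, h1, inv_one]

theorem solv4 : Group.IsSolvable (Perm (Fin 4)) := by
  refine ⟨3, ?_⟩
  have h1 : derivedSeries (Perm (Fin 4)) 1 ≤ (Perm.sign (α := Fin 4)).ker := by
    rw [derivedSeries_one, commutator_def, Subgroup.commutator_le]
    intro a _ b _
    rw [MonoidHom.mem_ker, map_commutatorElement, commutatorElement_eq_one_iff_mul_comm, mul_comm]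
  have h2 : derivedSeries (Perm (Fin 4)) 2 ≤ klein := by
    rw [derivedSeries_succ]
    refine (Subgroup.commutator_mono h1 h1).trans ?_
    rw [Subgroup.commutator_le]
    have : ∀ a b : Perm (Fin 4), Perm.sign a = 1 → Perm.sign b = 1 →
        (⁅a, b⁆ * ⁅a, b⁆ = 1 ∧ Perm.sign ⁅a, b⁆ = 1) := by decide +kernel
    intro a ha b hb
    exact this a b ha hb
  rw [derivedSeries_succ, eq_bot_iff]
  refine (Subgroup.commutator_mono h2 h2).trans ?_
  rw [Subgroup.commutator_le]
  have : ∀ a b : Perm (Fin 4), (a * a = 1 ∧ Perm.sign a = 1) → (b * b = 1 ∧ Perm.sign b = 1) →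
      a * b = b * a := by decide +kernel
  intro a ha b hb
  rw [Subgroup.mem_bot, commutatorElement_eq_one_iff_mul_comm]
  exact this a b ha hb

theorem solv_small {α : Type*} [Fintype α] (h : Fintype.card α = 2 ∨ Fintype.card α = 4) :
    Group.IsSolvable (Perm α) := by
  rcases h with h | h
  · let e := Fintype.equivFinOfCardEq h
    refine Group.isSolvable_of_comm fun a b => ?_
    have : ∀ a b : Perm (Fin 2), a * b = b * a := by decide
    exact (e.permCongrHom).injective (by rw [map_mul, map_mul]; exact this _ _)
  · let e := Fintype.equivFinOfCardEq h
    have := solv4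
    exact Group.isSolvable_of_isSolvable_injective (f := e.permCongrHom.toMonoidHom)
      e.permCongrHom.injective

theorem perfect_bot {n : ℕ} (hn : n = 4 ∨ n = 6) {a b : Fin n} (hab : a ≠ b)
    {I : Subgroup (Perm (Fin n))} (hI : ⁅I, I⁆ = I) (h : ∀ σ ∈ I, σ a = a ∧ σ b = b) : I = ⊥ := by
  classical
  let p : Fin n → Prop := fun c => c ≠ a ∧ c ≠ b
  have hc : Fintype.card {c // p c} = 2 ∨ Fintype.card {c // p c} = 4 := by
    rw [Fintype.card_subtype]
    have : (Finset.univ.filter p) = ({a, b} : Finset (Fin n))ᶜ := by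
      ext c
      simp [p, not_or]
    rw [this, Finset.card_compl, Finset.card_pair hab, Fintype.card_fin]
    omega
  have hs := solv_small hc
  have hs2 : Group.IsSolvable (Perm.ofSubtype (p := p)).range :=
    Group.isSolvable_of_surjective (f := (Perm.ofSubtype (p := p)).rangeRestrict)
      (MonoidHom.rangeRestrict_surjective _)
  have hle : I ≤ (Perm.ofSubtype (p := p)).range := by
    intro σ hσ
    obtain ⟨h1, h2⟩ := h σ hσ
    have h3 : ∀ x, p (σ x) ↔ p x := by
      intro x
      have e1 : σ x = a ↔ x = a := by
        conv_lhs => rw [← h1]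
        exact σ.injective.eq_iff
      have e2 : σ x = b ↔ x = b := by
        conv_lhs => rw [← h2]
        exact σ.injective.eq_iff
      simp only [p, Ne, e1, e2]
    refine ⟨σ.subtypePerm h3, Perm.ofSubtype_subtypePerm h3 ?_⟩
    intro x hx
    refine ⟨?_, ?_⟩
    · rintro rfl; exact hx h1
    · rintro rfl; exact hx h2
  have hs3 : Group.IsSolvable I :=
    Group.isSolvable_of_isSolvable_injective (Subgroup.inclusion_injective hle)
  by_contra hne
  have : Nontrivial I := (Subgroup.nontrivial_iff_ne_bot _).2 hne
  have h1 := Group.IsSolvable.commutator_lt_top_of_nontrivial I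
  apply h1.ne
  apply Subgroup.map_injective I.subtype_injective
  rw [Subgroup.map_subtype_commutator, hI, ← MonoidHom.range_eq_map, Subgroup.range_subtype]

/-- The local hypotheses for an abstract group acting on a graph. -/
structure Act (n : ℕ) (A V : Type*) [Group A] [MulAction A V] (Γ : SimpleGraph V) : Prop where
  hn : n = 4 ∨ n = 6
  conn : Γ.Connected
  adj : ∀ (g : A) (u v : V), Γ.Adj u v → Γ.Adj (g • u) (g • v)
  tr : ∀ u v : V, ∃ g : A, g • u = v
  loc : ∀ x : V, ∃ (e : Γ.neighborSet x ≃ OPairs n)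
      (φ : MulAction.stabilizer A x →* Equiv.Perm (Fin n)),
    Function.Surjective φ ∧
    ∀ (g : MulAction.stabilizer A x) (v : Γ.neighborSet x),
      ((e.symm (φ g • e v) : Γ.neighborSet x) : V) = g • (v : V)

theorem opairs_trans {n : ℕ} (p r : OPairs n) : ∃ σ : Perm (Fin n), σ • p = r := by
  obtain ⟨⟨a, b⟩, hab⟩ := p
  obtain ⟨⟨c, d⟩, hcd⟩ := r
  simp only [ne_eq] at hab hcd
  refine ⟨swap (swap a c b) d * swap a c, Subtype.ext (Prod.ext ?_ ?_)⟩
  · change swap (swap a c b) d (swap a c a) = c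
    rw [Equiv.swap_apply_left]
    refine Equiv.swap_apply_of_ne_of_ne ?_ hcd
    intro h
    have : swap a c a = swap a c b := by rw [Equiv.swap_apply_left]; exact h
    exact hab ((swap a c).injective this)
  · change swap (swap a c b) d (swap a c b) = d
    rw [Equiv.swap_apply_left]

/-- pointwise stabiliser of a ball -/
def bst (A : Type*) {V : Type*} [Group A] [MulAction A V] (Γ : SimpleGraph V) (x : V) (i : ℕ) :
    Subgroup A :=
  ⨅ (v : V) (_ : Γ.dist x v ≤ i), MulAction.stabilizer A v

theorem mem_bst {A V : Type*} [Group A] [MulAction A V] {Γ : SimpleGraph V} {x : V} {i : ℕ} {g : A} :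
    g ∈ bst A Γ x i ↔ ∀ v, Γ.dist x v ≤ i → g • v = v := by
  simp [bst, Subgroup.mem_iInf]

namespace Act
variable {n : ℕ} {A V : Type*} [Group A] [MulAction A V] {Γ : SimpleGraph V}


theorem adj_iff (T : Act n A V Γ) (g : A) (u v : V) : Γ.Adj (g • u) (g • v) ↔ Γ.Adj u v := by
  refine ⟨fun h => ?_, T.adj g u v⟩
  have := T.adj g⁻¹ _ _ h
  simpa using this

theorem dist_le (T : Act n A V Γ) (g : A) (u v : V) : Γ.dist (g • u) (g • v) ≤ Γ.dist u v := by
  obtain ⟨p, hp⟩ := T.conn.exists_walk_length_eq_dist u v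
  let f : Γ →g Γ := ⟨fun w => g • w, fun h => T.adj g _ _ h⟩
  rw [← hp, ← SimpleGraph.Walk.length_map f p]
  exact SimpleGraph.dist_le (p.map f)

theorem cj_bst (T : Act n A V Γ) (g : A) (x : V) (i : ℕ) : cj g (bst A Γ x i) = bst A Γ (g • x) i := by
  ext a
  rw [mem_cj, mem_bst, mem_bst]
  constructor
  · intro h v hv
    have h1 := T.dist_le g⁻¹ (g • x) v
    rw [inv_smul_smul] at h1
    have := h (g⁻¹ • v) (h1.trans hv)
    rw [mul_smul, mul_smul, smul_inv_smul] at this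
    exact MulAction.injective g⁻¹ this
  · intro h v hv
    have h1 := T.dist_le g x v
    have := h (g • v) (h1.trans hv)
    rw [mul_smul, mul_smul, this, inv_smul_smul]

theorem loc_trans (T : Act n A V Γ) {x y z : V} (hy : Γ.Adj x y) (hz : Γ.Adj x z) :
    ∃ g : A, g • x = x ∧ g • y = z := by
  obtain ⟨e, φ, hs, he⟩ := T.loc x
  obtain ⟨σ, hσ⟩ := opairs_trans (e ⟨y, hy⟩) (e ⟨z, hz⟩)
  obtain ⟨g, rfl⟩ := hs σ
  refine ⟨g, g.2, ?_⟩
  have := he g ⟨y, hy⟩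
  rw [hσ, Equiv.symm_apply_apply] at this
  exact this.symm

theorem perfect_step (T : Act n A V Γ) {u v : V} (huv : Γ.Adj v u) {K : Subgroup A} (hK : ⁅K, K⁆ = K)
    (hu : ∀ k ∈ K, k • u = u) (hv : ∀ k ∈ K, k • v = v) {w : V} (hw : Γ.Adj v w) :
    ∀ k ∈ K, k • w = w := by
  obtain ⟨e, φ, hs, he⟩ := T.loc v
  have hle : K ≤ stabilizer A v := hv
  have hK' : ⁅K.subgroupOf (stabilizer A v), K.subgroupOf (stabilizer A v)⁆
      = K.subgroupOf (stabilizer A v) := by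
    apply Subgroup.map_injective (stabilizer A v).subtype_injective
    rw [Subgroup.map_commutator, Subgroup.map_subgroupOf_eq_of_le hle, hK]
  have hI : ⁅(K.subgroupOf (stabilizer A v)).map φ, (K.subgroupOf (stabilizer A v)).map φ⁆
      = (K.subgroupOf (stabilizer A v)).map φ := by
    rw [← Subgroup.map_commutator, hK']
  have hb := perfect_bot T.hn (e ⟨u, huv⟩).2 hI (by
    rintro _ ⟨k, hk, rfl⟩
    have h1 := he k ⟨u, huv⟩
    have h2 : k • u = u := hu k hk
    have h3 : φ k • e ⟨u, huv⟩ = e ⟨u, huv⟩ := by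
      apply e.symm.injective
      rw [Equiv.symm_apply_apply]
      exact Subtype.ext (h1.trans h2)
    have h4 := congrArg Subtype.val h3
    exact ⟨congrArg Prod.fst h4, congrArg Prod.snd h4⟩)
  intro k hk
  have h1 : φ ⟨k, hle hk⟩ = 1 := by
    have : φ ⟨k, hle hk⟩ ∈ (K.subgroupOf (stabilizer A v)).map φ :=
      Subgroup.mem_map_of_mem φ (by rw [Subgroup.mem_subgroupOf]; exact hk)
    rwa [hb, Subgroup.mem_bot] at this
  have h2 := he ⟨k, hle hk⟩ ⟨w, hw⟩
  rw [h1, one_smul, Equiv.symm_apply_apply] at h2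
  exact h2.symm

theorem perfect_walk (T : Act n A V Γ) {K : Subgroup A} (hK : ⁅K, K⁆ = K) {v w : V} (p : Γ.Walk v w) :
    (∃ u, Γ.Adj v u ∧ ∀ k ∈ K, k • u = u) → (∀ k ∈ K, k • v = v) → ∀ k ∈ K, k • w = w := by
  induction p with
  | nil => intro _ h; exact h
  | cons h p ih =>
    rintro ⟨u, hu, hku⟩ hv
    exact ih ⟨_, h.symm, hv⟩ (T.perfect_step hu hK hku hv h)

theorem solv (T : Act n A V Γ) [Finite A] [FaithfulSMul A V] {x y : V} (hxy : Γ.Adj x y) {B : Subgroup A}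
    (hB : ∀ b ∈ B, b • x = x ∧ b • y = y) : Group.IsSolvable B := by
  rw [Group.isSolvable_iff_commutator_lt]
  intro L hL
  refine lt_of_le_of_ne (Subgroup.commutator_le_self L) fun hp => hL ?_
  apply Subgroup.map_injective B.subtype_injective
  rw [Subgroup.map_bot, eq_bot_iff]
  have hK : ⁅L.map B.subtype, L.map B.subtype⁆ = L.map B.subtype := by
    rw [← Subgroup.map_commutator, hp]
  have hle : L.map B.subtype ≤ B := Subgroup.map_subtype_le L
  intro k hk
  rw [Subgroup.mem_bot]
  apply FaithfulSMul.eq_of_smul_eq_smul (α := V)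
  intro w
  rw [one_smul]
  obtain ⟨p⟩ := T.conn.preconnected x w
  exact T.perfect_walk hK p ⟨y, hxy, fun k hk => (hB k (hle hk)).2⟩
    (fun k hk => (hB k (hle hk)).1) k hk

theorem flip (T : Act n A V Γ) {x y : V} (hxy : Γ.Adj x y) : ∃ e : A, e • x = y ∧ e • y = x := by
  obtain ⟨g, hg⟩ := T.tr x y
  have h1 : Γ.Adj x (g⁻¹ • x) := by
    have := T.adj g⁻¹ _ _ hxy.symm
    rw [← hg, inv_smul_smul] at this
    exact this
  obtain ⟨h, h2, h3⟩ := T.loc_trans hxy h1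
  exact ⟨g * h, by rw [mul_smul, h2, hg], by rw [mul_smul, h3, smul_inv_smul]⟩

theorem reach (T : Act n A V Γ) {x y : V} (hxy : Γ.Adj x y) {e : A} (he : e • x = y) {M : Subgroup A}
    (hP : stabilizer A x ≤ M) (heM : e ∈ M) {v w : V} (p : Γ.Walk v w) :
    (∃ m ∈ M, m • x = v) → ∃ m ∈ M, m • x = w := by
  induction p with
  | nil => exact id
  | cons h p ih =>
    rintro ⟨m, hm, rfl⟩
    apply ih
    rename_i w' _
    have h1 : Γ.Adj x (m⁻¹ • w') := by
      have := T.adj m⁻¹ _ _ h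
      rwa [inv_smul_smul] at this
    obtain ⟨g, h2, h3⟩ := T.loc_trans hxy h1
    refine ⟨m * g * e, mul_mem (mul_mem hm (hP h2)) heM, ?_⟩
    rw [mul_smul, he, mul_smul, h3, smul_inv_smul]

theorem gen (T : Act n A V Γ) {x y : V} (hxy : Γ.Adj x y) {e : A} (he : e • x = y) {M : Subgroup A}
    (hP : stabilizer A x ≤ M) (heM : e ∈ M) : M = ⊤ := by
  rw [eq_top_iff]
  intro g _
  obtain ⟨p⟩ := T.conn.preconnected x (g • x)
  obtain ⟨m, hm, e1⟩ := T.reach hxy he hP heM p ⟨1, one_mem _, one_smul _ _⟩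
  have : m⁻¹ * g ∈ M := hP (by rw [mem_stabilizer_iff, mul_smul, ← e1, inv_smul_smul])
  have := mul_mem hm this
  rwa [mul_inv_cancel_left] at this

theorem core (T : Act n A V Γ) [FaithfulSMul A V] {x : V} {K : Subgroup A} (hK : K ≤ stabilizer A x)
    (hnm : nm K = ⊤) : K = ⊥ := by
  rw [eq_bot_iff]
  intro k hk
  rw [Subgroup.mem_bot]
  apply FaithfulSMul.eq_of_smul_eq_smul (α := V)
  intro w
  obtain ⟨g, rfl⟩ := T.tr x w
  have h1 : g ∈ nm K := by rw [hnm]; trivial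
  have h2 : g⁻¹ * k * g ∈ K := by
    rw [← mem_cj, mem_nm.1 h1]; exact hk
  have h3 : (g⁻¹ * k * g) • x = x := hK h2
  rw [mul_smul, mul_smul, inv_smul_eq_iff] at h3
  rw [one_smul]; exact h3

open Classical in
theorem final (T : Act n A V Γ) [Finite A] [FaithfulSMul A V] (x : V) : bst A Γ x 3 = ⊥ := by
  obtain ⟨ε, φ, hs, hε⟩ := T.loc x
  have h2n : 2 ≤ n := by rcases T.hn with h | h <;> omega
  let o : Fin n := ⟨0, by omega⟩
  let i : Fin n := ⟨1, by omega⟩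
  have hoi : o ≠ i := by simp [o, i]
  let y : V := ε.symm ⟨(o, i), hoi⟩
  have hxy : Γ.Adj x y := (ε.symm ⟨(o, i), hoi⟩).2
  obtain ⟨e, e1, e2⟩ := T.flip hxy
  let S0 : Pre A (Fin n) :=
    { P := stabilizer A x
      f := fun g => if h : g ∈ stabilizer A x then φ ⟨g, h⟩ else 1
      f_mul := by
        intro g hg h hh
        rw [dif_pos hg, dif_pos hh, dif_pos (mul_mem hg hh), ← map_mul]
        rfl
      f_surj := by
        intro σ
        obtain ⟨g, rfl⟩ := hs σ
        exact ⟨g, g.2, dif_pos g.2⟩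
      o := o
      i := i
      hoi := hoi }
  have hf : ∀ g (hg : g ∈ stabilizer A x), S0.f g = φ ⟨g, hg⟩ := fun g hg => dif_pos hg
  have hB : ∀ g, g ∈ S0.B ↔ g • x = x ∧ g • y = y := by
    intro g
    rw [Pre.mem_B]
    constructor
    · rintro ⟨h1, h2, h3⟩
      refine ⟨h1, ?_⟩
      have h4 := hε ⟨g, h1⟩ (ε.symm ⟨(o, i), hoi⟩)
      rw [← hf g h1, Equiv.apply_symm_apply] at h4
      have h5 : S0.f g • (⟨(o, i), hoi⟩ : OPairs n) = ⟨(o, i), hoi⟩ :=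
        Subtype.ext (Prod.ext h2 h3)
      rw [h5] at h4
      exact h4.symm
    · rintro ⟨h1, h2⟩
      have h4 := hε ⟨g, h1⟩ (ε.symm ⟨(o, i), hoi⟩)
      rw [← hf g h1, Equiv.apply_symm_apply] at h4
      have h5 : S0.f g • (⟨(o, i), hoi⟩ : OPairs n) = ⟨(o, i), hoi⟩ := by
        apply ε.symm.injective
        exact Subtype.ext (h4.trans h2)
      have h6 := congrArg Subtype.val h5
      exact ⟨h1, congrArg Prod.fst h6, congrArg Prod.snd h6⟩
  have hQ : ∀ g : A, g • x = x → (∀ w, Γ.Adj x w → g • w = w) → g ∈ S0.Q := by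
    intro g h1 h2
    rw [Pre.mem_Q]
    refine ⟨h1, ?_⟩
    have h3 : ∀ p : OPairs n, S0.f g • p = p := by
      intro p
      have h4 := hε ⟨g, h1⟩ (ε.symm p)
      rw [← hf g h1, Equiv.apply_symm_apply] at h4
      apply ε.symm.injective
      exact Subtype.ext (h4.trans (h2 _ (ε.symm p).2))
    ext a
    by_cases ha : a = o
    · have h6 := congrArg (fun p => p.1.1) (h3 ⟨(o, i), hoi⟩)
      rw [ha]
      exact congrArg Fin.val h6
    · have h6 := congrArg (fun p => p.1.1) (h3 ⟨(a, o), ha⟩)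
      exact congrArg Fin.val h6
  have heB : e ∈ nm S0.B := by
    have key : ∀ e : A, e • x = y → e • y = x → cj e S0.B ≤ S0.B := by
      intro e e1 e2 g hg
      rw [mem_cj, hB] at hg
      obtain ⟨h1, h2⟩ := hg
      rw [hB]
      rw [mul_smul, mul_smul, inv_smul_eq_iff, e1] at h1
      rw [mul_smul, mul_smul, inv_smul_eq_iff, e2] at h2
      exact ⟨h2, h1⟩
    refine mem_nm.2 (le_antisymm (key e e1 e2) ?_)
    rw [le_cj]
    exact key _ (by rw [inv_smul_eq_iff, e2]) (by rw [inv_smul_eq_iff, e1])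
  let S : Loc A (Fin n) :=
    { S0 with
      e := e
      he := heB
      hee := by
        change (e * e) • x = x
        rw [mul_smul, e1, e2]
      core := fun K hK hP he => T.core hK (T.gen hxy e1 hP he)
      gen := fun M hP he => T.gen hxy e1 hP he
      solv := T.solv hxy fun b hb => (hB b).1 hb
      hcard := by rw [Fintype.card_fin]; exact T.hn }
  have hd : Γ.dist x y = 1 := SimpleGraph.dist_eq_one_iff_adj.2 hxy
  have hM : bst A Γ x 2 ⊓ bst A Γ y 2 = ⊥ := by
    refine S.main ?_ ?_ ?_ ?_
    · intro m hm
      have h1 := mem_bst.1 (show m ∈ bst A Γ x 2 from hm.1)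
      refine hQ m (h1 x (by simp)) fun w hw => h1 w ?_
      rw [SimpleGraph.dist_eq_one_iff_adj.2 hw]; norm_num
    · intro b hb
      obtain ⟨h1, h2⟩ := (hB b).1 hb
      rw [mem_nm, cj_inf, T.cj_bst, T.cj_bst, h1, h2]
    · change e ∈ _
      rw [mem_nm, cj_inf, T.cj_bst, T.cj_bst, e1, e2, inf_comm]
    · intro g hg m hm
      have h1 := mem_bst.1 (show m ∈ bst A Γ x 2 from hm.1)
      have hgx : g • x = x := hg
      have h2 : ∀ v, Γ.Adj x v → m • (g * e) • v = (g * e) • v := by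
        intro v hv
        apply h1
        have a1 : Γ.Adj x (g • y) := by
          have := T.adj g _ _ hxy
          rwa [hgx] at this
        have a2 : Γ.Adj (g • y) ((g * e) • v) := by
          have := T.adj (g * e) _ _ hv
          rwa [mul_smul, e1] at this
        have := T.conn.dist_triangle (u := x) (v := g • y) (w := (g * e) • v)
        rw [SimpleGraph.dist_eq_one_iff_adj.2 a1, SimpleGraph.dist_eq_one_iff_adj.2 a2] at this
        exact this
      have h3 : m • (g * e) • x = (g * e) • x := by
        apply h1
        rw [mul_smul, e1]
        have a1 : Γ.Adj x (g • y) := by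
          have := T.adj g _ _ hxy
          rwa [hgx] at this
        rw [SimpleGraph.dist_eq_one_iff_adj.2 a1]; norm_num
      change m ∈ cj (g * e) S0.Q
      rw [mem_cj]
      refine hQ _ ?_ fun w hw => ?_
      · rw [mul_smul, mul_smul, h3, inv_smul_smul]
      · rw [mul_smul, mul_smul, h2 w hw, inv_smul_smul]
  rw [eq_bot_iff, ← hM]
  intro m hm
  have h1 := mem_bst.1 hm
  refine ⟨mem_bst.2 fun v hv => h1 v (by omega), mem_bst.2 fun v hv => h1 v ?_⟩
  have := T.conn.dist_triangle (u := x) (v := y) (w := v)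
  omega

end Act

/-- For `n = 4` or `n = 6`, `L ≅ Sym(n)` acting on ordered pairs of distinct
elements of `{1,…,n}`, and any locally `L` pair `(Γ,G)`, the pointwise stabiliser of the
ball of radius three around any vertex is trivial. -/
theorem stmt_2 {V : Type*} [Fintype V] (n : ℕ) (hn : n = 4 ∨ n = 6)
    (Γ : SimpleGraph V) (hconn : Γ.Connected)
    (G : Subgroup (Equiv.Perm V)) (hloc : IsLocallyOPairs n Γ G) (x : V) :
    ballStab Γ G x 3 = ⊥ := by
  obtain ⟨h1, h2, h3⟩ := hloc
  classical
  have T : Act n G V Γ := ⟨hn, hconn, fun g u v h => (h1 g g.2 u v).1 h, fun u v => h2.exists_smul_eq u v, h3⟩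
  exact T.final x
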